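/- Fix a constant m ≥ 1. There exist constants C > 0 and c ≥ 0 (depending only on m) such that the following holds. Let p be an odd prime, let g, h : 𝔽_p* → 𝔽_p* be arbitrary functions with μ(g) ≤ m, and define f(x,y) = g(x)(h(x)+y) on 𝔽_p* × 𝔽_p*. Then for every nonempty finite subset A ⊆ 𝔽_p* with |A| ≤ p^{3/5}, one has both max{|f(A,A)|, |A+A|} ≥ C (log(2|A|))^{−c} |A|^{11/9} and max{|f(A,A)|, |A−A|} ≥ C (log(2|A|))^{−c} |A|^{11/9}. -/

import Mathlib

open Finset Pointwise

/-- `mu g` is `max_{t ∈ 𝔽_p*} |{x ∈ 𝔽_p* : g x = t}|`. -/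
def mu {p : ℕ} [NeZero p] (g : ZMod p → ZMod p) : ℕ :=
  Finset.sup (Finset.univ.filter fun t : ZMod p => t ≠ 0)
    (fun t => (Finset.univ.filter fun x : ZMod p => x ≠ 0 ∧ g x = t).card)

/-!
Pass from `A` to a large subset `S` whose elements have mostly popular sums with `A`. Let `r z`
count the representations `z = a - b` with `a, b ∈ S`, and let `E = ∑ z, r z ^ (4 / 3)`. With the
weights `r z ^ (1 / 3)`, the Cauchy–Schwarz and Hölder inequalities bound `E` from below by
`|A + A|` and the fourth moment of the numbers of representations of differences, and, because of
the popular sums, from above by this fourth moment and `W = ∑ q, (∑ c ∈ A, r (q - c)) ^ 2`. A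
dyadic decomposition of `r` bounds `W` by `E` and the second moments of the numbers of
representations as sums `b + a` with `a ∈ A` and `b` in a level set of `r`. The bounds together
give the exponent `11 / 9`.

Both kinds of moments come from incidences. Let `F = f(A, A)` and let `X` consist of
representatives of the fibres of `g` on `A`. If `b` and `b + s` lie in `A`, then
`g x * s + g x * (h x + b) = g x * (h x + (b + s)) ∈ F`, so for each `x ∈ X` a popular difference
`s` is the abscissa of many points with ordinate in `F` on the lines of slope `g x` and intercept
`g x * (h x + b)`. The lines of slope `(g x)⁻¹` and intercept `b - h x` do the same for popular
sums, with abscissas in `F`. Differences reduce to sums: replacing `g`, `h`, `A` by their negatives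
preserves these incidences and turns `A - A` into `A + (-A)`.

Incidences of lines with a Cartesian product are bounded by Vinh's inequality when it is dense, and
otherwise by the number of coincidences of ordinates on the lines. After a projective change of
variables this number counts the meeting pairs of two families of lines in `K³`, red ones in planes
`z = const` and blue ones in planes `x = const`. As in the theorem of Guth and Katz, the blue lines
are covered by surfaces of low degree. An irreducible surface either contains few red lines, as
they lie on its intersection with the surface on which the curvature of the level curves vanishes,
or is ruled by red lines, and then all but few of its red lines meet every blue line on it.
-/

namespace SumDiffExpander

section MvPolynomial

open MvPolynomial

variable {R σ : Type*} [CommRing R] {n : ℕ}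

theorem totalDegree_det_le {ι : Type*} [Fintype ι] [DecidableEq ι]
    {M : Matrix ι ι (MvPolynomial σ R)} {d : ℕ} (hM : ∀ i j, (M i j).totalDegree ≤ d) :
    M.det.totalDegree ≤ Fintype.card ι * d := by
  rw [Matrix.det_apply]
  refine totalDegree_finsetSum_le fun τ _ ↦ ?_
  rw [Units.smul_def]
  calc (((Equiv.Perm.sign τ : ℤˣ) : ℤ) • ∏ i, M (τ i) i).totalDegree
      ≤ (∏ i, M (τ i) i).totalDegree := totalDegree_smul_le _ _
    _ ≤ ∑ i, (M (τ i) i).totalDegree := totalDegree_finsetProd _ _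
    _ ≤ ∑ _i : ι, d := Finset.sum_le_sum fun i _ ↦ hM _ _
    _ = Fintype.card ι * d := by simp

theorem totalDegree_coeff_finSuccEquiv_le (f : MvPolynomial (Fin (n + 1)) R) (i : ℕ) :
    ((finSuccEquiv R n f).coeff i).totalDegree ≤ f.totalDegree := by
  by_cases h : (finSuccEquiv R n f).coeff i = 0
  · simp [h]
  · exact (Nat.le_add_right _ i).trans (totalDegree_coeff_finSuccEquiv_add_le f i h)

theorem natDegree_finSuccEquiv_le_totalDegree (f : MvPolynomial (Fin (n + 1)) R) :
    (finSuccEquiv R n f).natDegree ≤ f.totalDegree :=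
  (natDegree_finSuccEquiv f).trans_le (degreeOf_le_totalDegree f 0)

theorem totalDegree_resultant_finSuccEquiv_le (u v : MvPolynomial (Fin (n + 1)) R) (k l : ℕ) :
    (Polynomial.resultant (finSuccEquiv R n u) (finSuccEquiv R n v) k l).totalDegree
      ≤ (k + l) * max u.totalDegree v.totalDegree := by
  rw [Polynomial.resultant]
  refine (totalDegree_det_le fun i j ↦ ?_).trans_eq (by rw [Fintype.card_fin])
  rw [Polynomial.sylvester, Matrix.of_apply]
  refine Fin.addCases (fun j ↦ ?_) (fun j ↦ ?_) j
  · simp only [Fin.addCases_left]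
    split_ifs
    · exact (totalDegree_coeff_finSuccEquiv_le _ _).trans (le_max_right _ _)
    · simp
  · simp only [Fin.addCases_right]
    split_ifs
    · exact (totalDegree_coeff_finSuccEquiv_le _ _).trans (le_max_left _ _)
    · simp

theorem finSuccEquiv_rename_succ (f : MvPolynomial (Fin n) R) :
    finSuccEquiv R n (rename Fin.succ f) = Polynomial.C f := by
  induction f using MvPolynomial.induction_on with
  | C a => simp [finSuccEquiv_apply]
  | add f g hf hg => simp [hf, hg]
  | mul_X f i hf => rw [map_mul, map_mul, hf, rename_X, finSuccEquiv_X_succ, Polynomial.C_mul]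

theorem eval_map_finSuccEquiv {B : Type*} [CommRing B] [Algebra R B] (y : B) (s : Fin n → B)
    (f : MvPolynomial (Fin (n + 1)) R) :
    ((finSuccEquiv R n f).map (aeval s : MvPolynomial (Fin n) R →ₐ[R] B).toRingHom).eval y
      = aeval (Fin.cons y s : Fin (n + 1) → B) f := by
  induction f using MvPolynomial.induction_on with
  | C a => simp [finSuccEquiv_apply]
  | add f g hf hg => simp only [map_add, Polynomial.map_add, Polynomial.eval_add, hf, hg]
  | mul_X f i hf =>
    simp only [map_mul, Polynomial.map_mul, Polynomial.eval_mul, hf, aeval_X]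
    refine congrArg _ (Fin.cases ?_ (fun j ↦ ?_) i)
    · simp [finSuccEquiv_X_zero]
    · simp [finSuccEquiv_X_succ]

theorem finSuccEquiv_pderiv_zero (f : MvPolynomial (Fin (n + 1)) R) :
    finSuccEquiv R n (pderiv 0 f) = Polynomial.derivative (finSuccEquiv R n f) := by
  induction f using MvPolynomial.induction_on with
  | C a => simp [finSuccEquiv_apply]
  | add f g hf hg => simp only [map_add, hf, hg]
  | mul_X f i hf =>
    have hX : finSuccEquiv R n (pderiv 0 (X i)) =
        Polynomial.derivative (finSuccEquiv R n (X i)) := by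
      refine Fin.cases ?_ (fun j ↦ ?_) i
      · simp [finSuccEquiv_X_zero]
      · simp [finSuccEquiv_X_succ, pderiv_X_of_ne (Fin.succ_ne_zero j)]
    simp only [map_mul, Derivation.leibniz, smul_eq_mul, map_add, Polynomial.derivative_mul, hf, hX]
    ring

theorem totalDegree_pderiv_le (i : σ) (f : MvPolynomial σ R) :
    (pderiv i f).totalDegree ≤ f.totalDegree - 1 := by
  conv_lhs => rw [f.as_sum, map_sum]
  refine totalDegree_finsetSum_le fun s hs ↦ ?_
  rw [pderiv_monomial]
  by_cases hi : s i = 0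
  · simp [hi]
  have hsub : Finsupp.single i 1 ≤ s := Finsupp.single_le_iff.2 (Nat.one_le_iff_ne_zero.2 hi)
  have hdeg : (s - Finsupp.single i 1).degree + 1 = s.degree := by
    simpa only [map_add, Finsupp.degree_single] using
      congrArg Finsupp.degree (tsub_add_cancel_of_le hsub)
  have hle : s.degree ≤ f.totalDegree := le_totalDegree hs
  calc (monomial (s - Finsupp.single i 1) (f.coeff s * s i)).totalDegree
      ≤ (s - Finsupp.single i 1).degree := totalDegree_monomial_le _ _
    _ ≤ f.totalDegree - 1 := by omega

theorem pderiv_comm (i j : σ) (f : MvPolynomial σ R) :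
    pderiv i (pderiv j f) = pderiv j (pderiv i f) := by
  classical
  induction f using MvPolynomial.induction_on with
  | C a => simp
  | add f g hf hg => simp only [map_add, hf, hg]
  | mul_X f k hf =>
    have hX (a b : σ) : pderiv a (pderiv b (X k : MvPolynomial σ R)) = 0 := by
      rw [pderiv_X]
      by_cases h : k = b
      · subst h; simp
      · simp [h]
    simp only [Derivation.leibniz, smul_eq_mul, map_add, hf, hX]
    ring

theorem degreeOf_zero_eq_zero_of_pderiv_eq_zero [IsDomain R] (p : ℕ) [CharP R p]
    {f : MvPolynomial (Fin (n + 1)) R} (hdeg : f.totalDegree < p) (hf : pderiv 0 f = 0) :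
    degreeOf 0 f = 0 := by
  set P := finSuccEquiv R n f
  have hP : Polynomial.derivative P = 0 := by rw [← finSuccEquiv_pderiv_zero, hf, map_zero]
  by_contra hne
  replace hne : P.natDegree ≠ 0 := (natDegree_finSuccEquiv f).trans_ne hne
  obtain ⟨k, hk⟩ := Nat.exists_eq_succ_of_ne_zero hne
  have hcoeff : P.coeff (k + 1) * ((k + 1 : ℕ) : MvPolynomial (Fin n) R) = 0 := by
    simpa [Polynomial.coeff_derivative] using congrArg (Polynomial.coeff · k) hP
  have hlead : P.coeff (k + 1) ≠ 0 := by
    have hP0 : P ≠ 0 := fun h ↦ hne (by rw [h, Polynomial.natDegree_zero])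
    rw [← Nat.succ_eq_add_one, ← hk]
    exact Polynomial.leadingCoeff_ne_zero.2 hP0
  have hdvd : p ∣ k + 1 :=
    (CharP.cast_eq_zero_iff (MvPolynomial (Fin n) R) p _).1
      ((mul_eq_zero.1 hcoeff).resolve_left hlead)
  have hle : P.natDegree ≤ f.totalDegree := natDegree_finSuccEquiv_le_totalDegree f
  have := Nat.le_of_dvd k.succ_pos hdvd
  omega

end MvPolynomial

section Elimination

open MvPolynomial

variable {K : Type*} [Field K] {n : ℕ}

theorem resultant_ne_zero_of_irreducible {R : Type*} [CommRing R] [IsDomain R] [IsGCDMonoid R]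
    {P Q : Polynomial R} (hP : Irreducible P) (hdeg : P.natDegree ≠ 0) (hPQ : ¬ P ∣ Q) :
    P.resultant Q ≠ 0 := by
  set L := FractionRing R
  have hinj : Function.Injective (algebraMap R L) := IsFractionRing.injective _ _
  have hprim : P.IsPrimitive := hP.isPrimitive hdeg
  have hcop : IsCoprime (P.map (algebraMap R L)) (Q.map (algebraMap R L)) :=
    ((hprim.irreducible_iff_irreducible_map_fraction_map).1 hP).coprime_iff_not_dvd.2
      fun h ↦ hPQ ((hprim.dvd_iff_fraction_map_dvd_fraction_map L).2 h)
  intro h0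
  refine (Polynomial.resultant_eq_zero_iff.1 ?_).2 hcop
  rw [Polynomial.natDegree_map_eq_of_injective hinj, Polynomial.natDegree_map_eq_of_injective hinj,
    Polynomial.resultant_map_map, h0, map_zero]

theorem exists_eliminant {u v : MvPolynomial (Fin (n + 1)) K} (hu : Irreducible u)
    (hdeg : degreeOf 0 u ≠ 0) (huv : ¬ u ∣ v) :
    ∃ ρ : MvPolynomial (Fin n) K, ρ ≠ 0 ∧
      ρ.totalDegree ≤ (u.totalDegree + v.totalDegree) * max u.totalDegree v.totalDegree ∧
      rename Fin.succ ρ ∈ Ideal.span {u, v} := by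
  set P := finSuccEquiv K n u
  set Q := finSuccEquiv K n v
  have hP : Irreducible P := (MulEquiv.irreducible_iff (finSuccEquiv K n)).2 hu
  have hPdeg : P.natDegree ≠ 0 := (natDegree_finSuccEquiv u).trans_ne hdeg
  obtain ⟨a, b, -, -, hab⟩ :=
    Polynomial.exists_mul_add_mul_eq_C_resultant P Q le_rfl le_rfl (Or.inl hPdeg)
  refine ⟨P.resultant Q, resultant_ne_zero_of_irreducible hP hPdeg
    fun h ↦ huv ((map_dvd_iff (finSuccEquiv K n)).1 h), ?_, Ideal.mem_span_pair.2
    ⟨(finSuccEquiv K n).symm a, (finSuccEquiv K n).symm b, (finSuccEquiv K n).injective ?_⟩⟩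
  · exact (totalDegree_resultant_finSuccEquiv_le u v _ _).trans (Nat.mul_le_mul_right _
      (Nat.add_le_add (natDegree_finSuccEquiv_le_totalDegree u)
        (natDegree_finSuccEquiv_le_totalDegree v)))
  · rw [finSuccEquiv_rename_succ, ← hab, map_add, map_mul, map_mul, AlgEquiv.apply_symm_apply,
      AlgEquiv.apply_symm_apply, mul_comm a, mul_comm b]

end Elimination

section TangentLines

open MvPolynomial

/-- A red line: the line `y = slope * x + intercept` in the plane `z = height` of `K³`.
Points of `K³` are written in the order `(y, x, z)`, which makes `y` the variable `X 0` singled out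
by `MvPolynomial.finSuccEquiv`. -/
structure RedLine (K : Type*) where
  /-- the slope `dy/dx` -/
  slope : K
  /-- the value of `y` at `x = 0` -/
  intercept : K
  /-- the constant value of `z` -/
  height : K

/-- A blue line: the line `y = slope * z + intercept` in the plane `x = abscissa` of `K³`. -/
structure BlueLine (K : Type*) where
  /-- the slope `dy/dz` -/
  slope : K
  /-- the value of `y` at `z = 0` -/
  intercept : K
  /-- the constant value of `x` -/
  abscissa : K

variable {K : Type*} [Field K]

/-- Restriction of polynomial functions to a red line, parametrized by `x`. A red line `r` lies on
the surface `u = 0` when `r.restrict u = 0`. -/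
noncomputable def RedLine.restrict (r : RedLine K) : MvPolynomial (Fin 3) K →ₐ[K] Polynomial K :=
  aeval ![Polynomial.C r.slope * Polynomial.X + Polynomial.C r.intercept, Polynomial.X,
    Polynomial.C r.height]

/-- Restriction of polynomial functions to a blue line, parametrized by `z`. A blue line `b` lies on
the surface `u = 0` when `b.restrict u = 0`. -/
noncomputable def BlueLine.restrict (b : BlueLine K) : MvPolynomial (Fin 3) K →ₐ[K] Polynomial K :=
  aeval ![Polynomial.C b.slope * Polynomial.X + Polynomial.C b.intercept,
    Polynomial.C b.abscissa, Polynomial.X]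

/-- Incidence of a red and a blue line: the only candidate for a common point is the point of both
with `x = b.abscissa` and `z = r.height`. -/
def RedLine.Meets (r : RedLine K) (b : BlueLine K) : Prop :=
  r.slope * b.abscissa + r.intercept = b.slope * r.height + b.intercept

theorem RedLine.eval_restrict (r : RedLine K) (x : K) (f : MvPolynomial (Fin 3) K) :
    (r.restrict f).eval x = eval ![r.slope * x + r.intercept, x, r.height] f := by
  rw [← Polynomial.coe_aeval_eq_eval, RedLine.restrict, comp_aeval_apply, aeval_eq_eval]
  congr 2
  funext i
  fin_cases i <;> simp

theorem BlueLine.eval_restrict (b : BlueLine K) (z : K) (f : MvPolynomial (Fin 3) K) :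
    (b.restrict f).eval z = eval ![b.slope * z + b.intercept, b.abscissa, z] f := by
  rw [← Polynomial.coe_aeval_eq_eval, BlueLine.restrict, comp_aeval_apply, aeval_eq_eval]
  congr 2
  funext i
  fin_cases i <;> simp

theorem RedLine.natDegree_restrict_le (r : RedLine K) (f : MvPolynomial (Fin 3) K) :
    (r.restrict f).natDegree ≤ f.totalDegree := by
  refine (aeval_natDegree_le (n := 1) f le_rfl _ fun i ↦ ?_).trans_eq (mul_one _)
  fin_cases i
  · exact Polynomial.natDegree_linear_le
  · simp
  · simp

theorem BlueLine.natDegree_restrict_le (b : BlueLine K) (f : MvPolynomial (Fin 3) K) :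
    (b.restrict f).natDegree ≤ f.totalDegree := by
  refine (aeval_natDegree_le (n := 1) f le_rfl _ fun i ↦ ?_).trans_eq (mul_one _)
  fin_cases i
  · exact Polynomial.natDegree_linear_le
  · simp
  · simp

theorem RedLine.derivative_restrict (r : RedLine K) (f : MvPolynomial (Fin 3) K) :
    (r.restrict f).derivative
      = r.restrict (pderiv 1 f) + Polynomial.C r.slope * r.restrict (pderiv 0 f) := by
  induction f using MvPolynomial.induction_on with
  | C a => simp [RedLine.restrict, Polynomial.algebraMap_eq]
  | add f g hf hg => simp only [map_add, hf, hg]; ring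
  | mul_X f i hf =>
    simp only [map_mul, Polynomial.derivative_mul, hf, Derivation.leibniz, smul_eq_mul, map_add]
    fin_cases i <;> simp [RedLine.restrict, pderiv_X] <;> ring

/-- The numerator of the curvature of the level curves of `u` in the planes `z = const`. -/
noncomputable def levelCurvature (u : MvPolynomial (Fin 3) K) : MvPolynomial (Fin 3) K :=
  pderiv 1 (pderiv 1 u) * pderiv 0 u ^ 2 - 2 * pderiv 0 (pderiv 1 u) * pderiv 1 u * pderiv 0 u
    + pderiv 0 (pderiv 0 u) * pderiv 1 u ^ 2

theorem totalDegree_levelCurvature_le (u : MvPolynomial (Fin 3) K) :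
    (levelCurvature u).totalDegree ≤ 3 * u.totalDegree := by
  have hfst (i) := (totalDegree_pderiv_le i u).trans (Nat.sub_le _ _)
  have hsnd (i j) := (totalDegree_pderiv_le i (pderiv j u)).trans ((Nat.sub_le _ _).trans (hfst j))
  have hsq (i) : (pderiv i u ^ 2).totalDegree ≤ 2 * u.totalDegree :=
    (totalDegree_pow _ _).trans (Nat.mul_le_mul_left 2 (hfst i))
  refine (totalDegree_add _ _).trans (max_le ((totalDegree_sub _ _).trans (max_le ?_ ?_)) ?_)
  · have := (totalDegree_mul (pderiv 1 (pderiv 1 u)) (pderiv 0 u ^ 2)).trans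
      (add_le_add (hsnd 1 1) (hsq 0))
    omega
  · have htwo : (2 * pderiv 0 (pderiv 1 u)).totalDegree ≤ u.totalDegree := by
      rw [two_mul]
      exact (totalDegree_add _ _).trans (max_le (hsnd 0 1) (hsnd 0 1))
    have := (totalDegree_mul (2 * pderiv 0 (pderiv 1 u) * pderiv 1 u) (pderiv 0 u)).trans
      (add_le_add ((totalDegree_mul _ _).trans (add_le_add htwo (hfst 1))) (hfst 0))
    omega
  · have := (totalDegree_mul (pderiv 0 (pderiv 0 u)) (pderiv 1 u ^ 2)).trans
      (add_le_add (hsnd 0 0) (hsq 1))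
    omega

theorem RedLine.exists_restrict_levelCurvature_eq (r : RedLine K) (u : MvPolynomial (Fin 3) K) :
    ∃ h, r.restrict (levelCurvature u) =
      r.restrict (pderiv 0 u) ^ 2 * (r.restrict u).derivative.derivative +
        h * (r.restrict u).derivative := by
  refine ⟨r.restrict (pderiv 0 (pderiv 0 u)) * ((r.restrict u).derivative
    - 2 * Polynomial.C r.slope * r.restrict (pderiv 0 u))
    - 2 * r.restrict (pderiv 0 (pderiv 1 u)) * r.restrict (pderiv 0 u), ?_⟩
  simp only [levelCurvature, map_add, map_sub, map_mul, map_pow, map_ofNat, r.derivative_restrict,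
    Polynomial.derivative_mul, Polynomial.derivative_C, pderiv_comm 1 0 u]
  ring

theorem eq_zero_of_linear_ode (p : ℕ) [CharP K p] {ψ a b c : Polynomial K} {x : K}
    (hdeg : ψ.natDegree < p) (hroot : ψ.IsRoot x) (hroot' : ψ.derivative.IsRoot x)
    (ha : a.eval x ≠ 0) (hode : a * ψ.derivative.derivative + b * ψ.derivative + c * ψ = 0) :
    ψ = 0 := by
  by_contra hψ
  set T : Polynomial K := Polynomial.X - Polynomial.C x
  set k := ψ.rootMultiplicity x with hk
  have hk2 : 1 < k := (Polynomial.one_lt_rootMultiplicity_iff_isRoot hψ).2 ⟨hroot, hroot'⟩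
  have hdvd : T ^ k ∣ ψ := Polynomial.pow_rootMultiplicity_dvd ψ x
  have hkp : k < p := by
    have := Polynomial.natDegree_le_of_dvd hdvd hψ
    rw [Polynomial.natDegree_pow, Polynomial.natDegree_X_sub_C, mul_one] at this
    exact this.trans_lt hdeg
  have hdvd' : T ^ (k - 1) ∣ ψ.derivative := Polynomial.pow_sub_one_dvd_derivative_of_pow_dvd hdvd
  have hcop : IsCoprime (T ^ (k - 1)) a :=
    ((Polynomial.irreducible_X_sub_C x).coprime_iff_not_dvd.2
      fun h ↦ ha (Polynomial.dvd_iff_isRoot.1 h)).pow_left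
  have hdvd'' : T ^ (k - 1) ∣ ψ.derivative.derivative := by
    refine hcop.dvd_of_dvd_mul_left ?_
    have heq : a * ψ.derivative.derivative = -(b * ψ.derivative + c * ψ) := by
      linear_combination hode
    rw [heq]
    have hdvd₁ : T ^ (k - 1) ∣ ψ := (pow_dvd_pow T (Nat.sub_le k 1)).trans hdvd
    exact ((hdvd'.mul_left b).add (hdvd₁.mul_left c)).neg_right
  have hzero : (Polynomial.derivative^[k] ψ).eval x = 0 := by
    have h := Polynomial.pow_sub_dvd_iterate_derivative_of_pow_dvd (k - 2) hdvd''
    rw [show k - 1 - (k - 2) = 1 by omega, pow_one] at h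
    have hiter : Polynomial.derivative^[k] ψ =
        Polynomial.derivative^[k - 2] ψ.derivative.derivative := by
      rw [← Function.iterate_succ_apply, ← Function.iterate_succ_apply]
      congr 2
      omega
    rw [hiter]
    exact Polynomial.dvd_iff_isRoot.1 h
  rw [hk, Polynomial.eval_iterate_derivative_rootMultiplicity, ← hk, nsmul_eq_mul] at hzero
  refine mul_ne_zero ?_ (Polynomial.eval_divByMonic_pow_rootMultiplicity_ne_zero x hψ) hzero
  have hp : p.Prime := (CharP.char_is_prime_or_zero K p).resolve_right (by omega)
  rw [Ne, CharP.cast_eq_zero_iff K p, hp.dvd_factorial]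
  exact hkp.not_ge

theorem exists_redLine_through (p : ℕ) [CharP K p] {u : MvPolynomial (Fin 3) K}
    (hdeg : u.totalDegree < p) (hcurv : u ∣ levelCurvature u) {y x z : K}
    (hzero : eval ![y, x, z] u = 0) (hy : eval ![y, x, z] (pderiv 0 u) ≠ 0) :
    ∃ r : RedLine K, r.height = z ∧ r.slope * x + r.intercept = y ∧ r.restrict u = 0 := by
  set m := -eval ![y, x, z] (pderiv 1 u) / eval ![y, x, z] (pderiv 0 u) with hm
  set r : RedLine K := ⟨m, y - m * x, z⟩ with hr
  have hpt : r.slope * x + r.intercept = y := by simp [hr]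
  obtain ⟨h, hh⟩ := r.exists_restrict_levelCurvature_eq u
  obtain ⟨w, hw⟩ := hcurv
  refine ⟨r, rfl, hpt, eq_zero_of_linear_ode p (a := r.restrict (pderiv 0 u) ^ 2) (b := h)
    (c := -r.restrict w) (x := x) ((r.natDegree_restrict_le u).trans_lt hdeg) ?_ ?_ ?_ ?_⟩
  · rw [Polynomial.IsRoot, r.eval_restrict, hpt, hzero]
  · rw [Polynomial.IsRoot, r.derivative_restrict, Polynomial.eval_add, Polynomial.eval_mul,
      Polynomial.eval_C, r.eval_restrict, r.eval_restrict, hpt]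
    change _ + m * _ = 0
    rw [hm, div_mul_cancel₀ _ hy, add_neg_cancel]
  · rw [Polynomial.eval_pow, r.eval_restrict, hpt]
    exact pow_ne_zero 2 hy
  · rw [hw, map_mul] at hh
    linear_combination -hh

end TangentLines

section RuledSurfaces

open MvPolynomial

variable {K : Type*} [Field K] {n : ℕ}

theorem finSuccEquiv_eval_C_ne_zero {f : MvPolynomial (Fin (n + 1)) K} {x : K}
    (h : ¬ (X 0 - C x : MvPolynomial (Fin (n + 1)) K) ∣ f) :
    (finSuccEquiv K n f).eval (C x) ≠ 0 := by
  refine fun h0 ↦ h ((map_dvd_iff (finSuccEquiv K n)).1 ?_)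
  have hC : finSuccEquiv K n (C x) = Polynomial.C (C x) := by simp [finSuccEquiv_apply]
  rw [map_sub, finSuccEquiv_X_zero, hC]
  exact Polynomial.dvd_iff_isRoot.2 h0

theorem eval_finSuccEquiv_eval_C (x : K) (s : Fin n → K) (f : MvPolynomial (Fin (n + 1)) K) :
    eval s ((finSuccEquiv K n f).eval (C x)) = eval (Fin.cons x s : Fin (n + 1) → K) f := by
  rw [eval_eq_eval_mv_eval', ← Polynomial.eval_map_apply, eval_C]

theorem not_isUnit_X_sub_C (x : K) : ¬ IsUnit (X 0 - C x : MvPolynomial (Fin (n + 1)) K) := by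
  intro h
  simpa using h.map (eval fun _ ↦ x)

theorem not_dvd_pderiv {σ : Type*} {u : MvPolynomial σ K} {i : σ} (h : pderiv i u ≠ 0) :
    ¬ u ∣ pderiv i u := by
  intro hdvd
  have hle := totalDegree_le_of_dvd_of_isDomain hdvd h
  have hlt := totalDegree_pderiv_le i u
  rw [totalDegree_eq_zero_iff_eq_C.1 (by omega : u.totalDegree = 0), pderiv_C] at h
  exact h rfl

theorem eval_rename_succ (y : K) (s : Fin n → K) (f : MvPolynomial (Fin n) K) :
    eval (Fin.cons y s : Fin (n + 1) → K) (rename Fin.succ f) = eval s f := by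
  rw [eval_rename]
  rfl

theorem exists_coeff_not_X_sub_C_dvd {u : MvPolynomial (Fin (n + 1 + 1)) K} (hu : Irreducible u)
    (hdeg : degreeOf 0 u ≠ 0) (x : K) :
    ∃ i, ¬ (X 0 - C x : MvPolynomial (Fin (n + 1)) K) ∣ (finSuccEquiv K (n + 1) u).coeff i := by
  have hprim : (finSuccEquiv K (n + 1) u).IsPrimitive :=
    ((MulEquiv.irreducible_iff (finSuccEquiv K (n + 1))).2 hu).isPrimitive
      ((natDegree_finSuccEquiv u).trans_ne hdeg)
  by_contra! h
  exact not_isUnit_X_sub_C x (hprim _ ((Polynomial.C_dvd_iff_dvd_coeff _ _).2 h))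

theorem eval_eq_zero_of_eliminant {u v : MvPolynomial (Fin (n + 1)) K} {ρ : MvPolynomial (Fin n) K}
    (h : rename Fin.succ ρ ∈ Ideal.span {u, v}) {y : K} {s : Fin n → K}
    (hu : eval (Fin.cons y s : Fin (n + 1) → K) u = 0)
    (hv : eval (Fin.cons y s : Fin (n + 1) → K) v = 0) : eval s ρ = 0 := by
  obtain ⟨a, b, hab⟩ := Ideal.mem_span_pair.1 h
  rw [← eval_rename_succ y, ← hab, map_add, map_mul, map_mul, hu, hv, mul_zero, mul_zero, add_zero]

theorem exists_generic_slice [Infinite K] {u v : MvPolynomial (Fin 3) K} (hu : Irreducible u)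
    (hdeg : degreeOf 0 u ≠ 0) (hy : pderiv 0 u ≠ 0) (huv : ¬ u ∣ v) (x₁ : K) :
    ∃ x₀ z₀ : K, eval ![x₀, z₀] (finSuccEquiv K 2 u).leadingCoeff ≠ 0 ∧
      (∀ y, eval ![y, x₀, z₀] u = 0 →
        eval ![y, x₀, z₀] (pderiv 0 u) ≠ 0 ∧ eval ![y, x₀, z₀] v ≠ 0) ∧
      (finSuccEquiv K 2 u).map (eval ![x₁, z₀]) ≠ 0 := by
  obtain ⟨ρ, hρ, -, hρmem⟩ := exists_eliminant hu hdeg (not_dvd_pderiv hy)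
  obtain ⟨τ, hτ, -, hτmem⟩ := exists_eliminant hu hdeg huv
  obtain ⟨i, hi⟩ := exists_coeff_not_X_sub_C_dvd hu hdeg x₁
  set l := (finSuccEquiv K 2 u).leadingCoeff
  have hl : l ≠ 0 := Polynomial.leadingCoeff_ne_zero.2
    ((EmbeddingLike.map_ne_zero_iff (f := finSuccEquiv K 2)).2 hu.ne_zero)
  set q := (finSuccEquiv K 1 ((finSuccEquiv K 2 u).coeff i)).eval (C x₁)
  have hq : rename (Fin.succ : Fin 1 → Fin 2) q ≠ 0 :=
    (map_ne_zero_iff _ (rename_injective _ (Fin.succ_injective 1))).2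
      (finSuccEquiv_eval_C_ne_zero hi)
  obtain ⟨s, hs⟩ : ∃ s : Fin 2 → K, eval s (ρ * τ * l * rename Fin.succ q) ≠ 0 := by
    by_contra! h
    exact mul_ne_zero (mul_ne_zero (mul_ne_zero hρ hτ) hl) hq
      (MvPolynomial.funext fun s ↦ (h s).trans (map_zero _).symm)
  obtain ⟨x₀, z₀, rfl⟩ : ∃ x₀ z₀, s = ![x₀, z₀] := ⟨s 0, s 1, by
    funext j; fin_cases j <;> rfl⟩
  simp only [map_mul, mul_ne_zero_iff] at hs
  obtain ⟨⟨⟨hρs, hτs⟩, hls⟩, hqs⟩ := hs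
  refine ⟨x₀, z₀, hls, fun y h0 ↦ ⟨fun h ↦ hρs (eval_eq_zero_of_eliminant hρmem h0 h),
    fun h ↦ hτs (eval_eq_zero_of_eliminant hτmem h0 h)⟩, fun h ↦ hqs ?_⟩
  have hcoeff : eval ![x₁, z₀] ((finSuccEquiv K 2 u).coeff i) = 0 := by
    rw [← Polynomial.coeff_map, h, Polynomial.coeff_zero]
  have hsucc : eval ![x₀, z₀] (rename Fin.succ q) = eval ![z₀] q := eval_rename_succ x₀ ![z₀] q
  rw [hsucc, eval_finSuccEquiv_eval_C]
  exact hcoeff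

/-- Distinct roots have distinct lifts, so by degree the lifts exhaust the roots of `P`. -/
theorem eq_C_leadingCoeff_mul_prod_of_lift {P : Polynomial (Polynomial K)} {x₀ : K}
    (hlead : P.leadingCoeff.eval x₀ ≠ 0)
    (hsplits : (P.map (Polynomial.evalRingHom x₀)).Splits)
    (hnodup : (P.map (Polynomial.evalRingHom x₀)).roots.Nodup) {lift : K → Polynomial K}
    (hlift : ∀ y ∈ (P.map (Polynomial.evalRingHom x₀)).roots,
      P.IsRoot (lift y) ∧ (lift y).eval x₀ = y) :
    P = Polynomial.C P.leadingCoeff * (((P.map (Polynomial.evalRingHom x₀)).roots.map lift).map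
      fun w ↦ Polynomial.X - Polynomial.C w).prod := by
  set R := (P.map (Polynomial.evalRingHom x₀)).roots
  have hP : P ≠ 0 := by
    rintro rfl
    simp at hlead
  have hcard : Multiset.card R = P.natDegree := by
    rw [← hsplits.natDegree_eq_card_roots]
    exact Polynomial.natDegree_map_of_leadingCoeff_ne_zero _ hlead
  have hnodup' : (R.map lift).Nodup := hnodup.map_on fun y hy y' hy' h ↦ by
    rw [← (hlift y hy).2, h, (hlift y' hy').2]
  have hle : R.map lift ≤ P.roots := (Multiset.le_iff_subset hnodup').2 fun w hw ↦ by
    obtain ⟨y, hy, rfl⟩ := Multiset.mem_map.1 hw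
    exact (Polynomial.mem_roots hP).2 (hlift y hy).1
  have hroots : R.map lift = P.roots := Multiset.eq_of_le_of_card_le hle (by
    rw [Multiset.card_map, hcard]
    exact P.card_roots')
  rw [hroots]
  exact (Polynomial.C_leadingCoeff_mul_prod_multiset_X_sub_C
    (by rw [← hroots, Multiset.card_map, hcard])).symm

theorem exists_root_eval_eq {P : Polynomial (Polynomial K)} {x₀ : K}
    (hlead : P.leadingCoeff.eval x₀ ≠ 0)
    (hsplits : (P.map (Polynomial.evalRingHom x₀)).Splits)
    (hnodup : (P.map (Polynomial.evalRingHom x₀)).roots.Nodup) {S : Set (Polynomial K)}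
    (hlift : ∀ y ∈ (P.map (Polynomial.evalRingHom x₀)).roots,
      ∃ w ∈ S, P.IsRoot w ∧ w.eval x₀ = y) {x y : K}
    (hy : y ∈ (P.map (Polynomial.evalRingHom x)).roots) : ∃ w ∈ S, w.eval x = y := by
  choose! lift hS hlift using hlift
  have hprod := eq_C_leadingCoeff_mul_prod_of_lift hlead hsplits hnodup hlift
  obtain ⟨hne, hroot⟩ := Polynomial.mem_roots'.1 hy
  rw [hprod, Polynomial.map_mul, Polynomial.map_C] at hne hroot
  have hlead' := Polynomial.C_ne_zero.1 (left_ne_zero_of_mul hne)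
  rw [Polynomial.IsRoot, Polynomial.eval_mul, Polynomial.eval_C, mul_eq_zero, or_iff_right hlead',
    Polynomial.map_multiset_prod, Polynomial.eval_multiset_prod, Multiset.prod_eq_zero_iff,
    Multiset.map_map, Multiset.map_map, Multiset.map_map] at hroot
  obtain ⟨y', hy', h⟩ := Multiset.mem_map.1 hroot
  have hsub : y - (lift y').eval x = 0 := by simpa using h
  exact ⟨lift y', hS y' hy', (sub_eq_zero.1 hsub).symm⟩

theorem eval_slice (x y z : K) (u : MvPolynomial (Fin 3) K) :
    ((finSuccEquiv K 2 u).map (eval ![x, z])).eval y = eval ![y, x, z] u :=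
  (eval_eq_eval_mv_eval' ![x, z] y u).symm

theorem nodup_roots_slice [IsAlgClosed K] {u : MvPolynomial (Fin 3) K} {x z : K}
    (h : ∀ y, eval ![y, x, z] u = 0 → eval ![y, x, z] (pderiv 0 u) ≠ 0) :
    ((finSuccEquiv K 2 u).map (eval ![x, z])).roots.Nodup := by
  refine Polynomial.nodup_roots ?_
  rw [Polynomial.Separable, Polynomial.derivative_map, ← finSuccEquiv_pderiv_zero,
    Polynomial.isCoprime_iff_aeval_ne_zero_of_isAlgClosed K K]
  intro y
  rw [Polynomial.coe_aeval_eq_eval, eval_slice, eval_slice]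
  exact or_iff_not_imp_left.2 fun hy ↦ h y (not_not.1 hy)

/-- The restriction of `u` to the plane `z = z₀` turns out to be a product of linear forms, one for
each tangent line over `x₀`, and a polynomial in `x` alone. -/
theorem exists_redLine_of_generic_slice [IsAlgClosed K] (p : ℕ) [CharP K p]
    {u : MvPolynomial (Fin 3) K} (hdeg : u.totalDegree < p) (hcurv : u ∣ levelCurvature u)
    {x₀ z₀ : K} (hlead : eval ![x₀, z₀] (finSuccEquiv K 2 u).leadingCoeff ≠ 0)
    (hsimple : ∀ y, eval ![y, x₀, z₀] u = 0 → eval ![y, x₀, z₀] (pderiv 0 u) ≠ 0) {x y : K}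
    (hslice : (finSuccEquiv K 2 u).map (eval ![x, z₀]) ≠ 0) (hzero : eval ![y, x, z₀] u = 0) :
    ∃ r : RedLine K, r.height = z₀ ∧ r.slope * x + r.intercept = y ∧ r.restrict u = 0 := by
  set φ : MvPolynomial (Fin 2) K →+* Polynomial K :=
    (aeval ![Polynomial.X, Polynomial.C z₀] : MvPolynomial (Fin 2) K →ₐ[K] _).toRingHom
  set P := (finSuccEquiv K 2 u).map φ
  have hφ (x' : K) : (Polynomial.evalRingHom x').comp φ = eval ![x', z₀] := by
    ext i
    · simp [φ]
    · fin_cases i <;> simp [φ]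
  have hPmap (x' : K) :
      P.map (Polynomial.evalRingHom x') = (finSuccEquiv K 2 u).map (eval ![x', z₀]) := by
    rw [Polynomial.map_map, hφ]
  have hPeval (w : Polynomial K) : P.eval w = aeval ![w, Polynomial.X, Polynomial.C z₀] u :=
    eval_map_finSuccEquiv w _ u
  have hlead' : P.leadingCoeff.eval x₀ ≠ 0 := by
    have hφlead : (φ (finSuccEquiv K 2 u).leadingCoeff).eval x₀ ≠ 0 := by
      rwa [← Polynomial.coe_evalRingHom, ← RingHom.comp_apply, hφ]
    rwa [Polynomial.leadingCoeff_map_of_leadingCoeff_ne_zero φ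
      fun h ↦ hφlead (by rw [h, Polynomial.eval_zero])]
  obtain ⟨w, ⟨r, hrz, hru, rfl⟩, hw⟩ := exists_root_eval_eq (x := x) (y := y) hlead'
    (IsAlgClosed.splits _) (by rw [hPmap]; exact nodup_roots_slice hsimple)
    (S := {w | ∃ r : RedLine K, r.height = z₀ ∧ r.restrict u = 0 ∧
      w = Polynomial.C r.slope * Polynomial.X + Polynomial.C r.intercept})
    (fun y' hy' ↦ by
      have h0 : eval ![y', x₀, z₀] u = 0 := by
        rw [← eval_slice, ← hPmap]
        exact Polynomial.isRoot_of_mem_roots hy'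
      obtain ⟨r, rfl, hry, hru⟩ := exists_redLine_through p hdeg hcurv h0 (hsimple y' h0)
      exact ⟨_, ⟨r, rfl, hru, rfl⟩, by rw [Polynomial.IsRoot, hPeval]; exact hru,
        by simpa using hry⟩)
    (by rw [hPmap]; exact (Polynomial.mem_roots hslice).2 ((eval_slice x y z₀ u).trans hzero))
  exact ⟨r, hrz, by simpa using hw, hru⟩

/-- On a red line lying on `u = 0` this is `y - (b.slope * z + b.intercept)` extrapolated linearly
to `x = b.abscissa`, times `∂u/∂y`; see `RedLine.restrict_polar`. -/
noncomputable def BlueLine.polar (b : BlueLine K) (u : MvPolynomial (Fin 3) K) :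
    MvPolynomial (Fin 3) K :=
  (X 1 - C b.abscissa) * pderiv 1 u + (X 0 - C b.slope * X 2 - C b.intercept) * pderiv 0 u

theorem RedLine.restrict_polar {r : RedLine K} {u : MvPolynomial (Fin 3) K} (hr : r.restrict u = 0)
    (b : BlueLine K) :
    r.restrict (b.polar u) = Polynomial.C (r.slope * b.abscissa + r.intercept
      - (b.slope * r.height + b.intercept)) * r.restrict (pderiv 0 u) := by
  have hderiv := r.derivative_restrict u
  rw [hr, Polynomial.derivative_zero] at hderiv
  have hX0 : r.restrict (X 0) = Polynomial.C r.slope * Polynomial.X + Polynomial.C r.intercept := by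
    simp [RedLine.restrict]
  have hX1 : r.restrict (X 1) = Polynomial.X := by simp [RedLine.restrict]
  have hX2 : r.restrict (X 2) = Polynomial.C r.height := by simp [RedLine.restrict]
  have hC (a : K) : r.restrict (C a) = Polynomial.C a := by simp [RedLine.restrict]
  simp only [BlueLine.polar, map_add, map_sub, map_mul, hX0, hX1, hX2, hC]
  linear_combination (Polynomial.C b.abscissa - Polynomial.X) * hderiv

theorem degreeOf_zero_ne_zero_of_pderiv_ne_zero {u : MvPolynomial (Fin (n + 1)) K}
    (h : pderiv 0 u ≠ 0) : degreeOf 0 u ≠ 0 := by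
  contrapose! h
  apply (finSuccEquiv K n).injective
  rw [← natDegree_finSuccEquiv] at h
  rw [finSuccEquiv_pderiv_zero, map_zero, Polynomial.eq_C_of_natDegree_eq_zero h,
    Polynomial.derivative_C]

theorem BlueLine.dvd_polar [IsAlgClosed K] (p : ℕ) [CharP K p] {u : MvPolynomial (Fin 3) K}
    (hu : Irreducible u) (hdeg : u.totalDegree < p) (hy : pderiv 0 u ≠ 0)
    (hcurv : u ∣ levelCurvature u) {b : BlueLine K} (hb : b.restrict u = 0) : u ∣ b.polar u := by
  have : Infinite K := IsAlgClosed.instInfinite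
  by_contra hndvd
  obtain ⟨x₀, z₀, hlead, hgen, hslice⟩ := exists_generic_slice hu
    (degreeOf_zero_ne_zero_of_pderiv_ne_zero hy) hy hndvd b.abscissa
  have hzero : eval ![b.slope * z₀ + b.intercept, b.abscissa, z₀] u = 0 := by
    rw [← b.eval_restrict, hb, Polynomial.eval_zero]
  obtain ⟨r, rfl, hmeet, hru⟩ := exists_redLine_of_generic_slice p hdeg hcurv hlead
    (fun y h ↦ (hgen y h).1) hslice hzero
  have hru₀ : eval ![r.slope * x₀ + r.intercept, x₀, r.height] u = 0 := by
    rw [← r.eval_restrict, hru, Polynomial.eval_zero]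
  refine (hgen _ hru₀).2 ?_
  rw [← r.eval_restrict, RedLine.restrict_polar hru, hmeet, sub_self, Polynomial.C_0, zero_mul,
    Polynomial.eval_zero]

theorem RedLine.meets_of_restrict_eq_zero [IsAlgClosed K] (p : ℕ) [CharP K p]
    {u : MvPolynomial (Fin 3) K} (hu : Irreducible u) (hdeg : u.totalDegree < p)
    (hcurv : u ∣ levelCurvature u) {r : RedLine K} (hr : r.restrict u = 0)
    (hry : r.restrict (pderiv 0 u) ≠ 0) {b : BlueLine K} (hb : b.restrict u = 0) : r.Meets b := by
  have hy : pderiv 0 u ≠ 0 := fun h ↦ hry (by rw [h, map_zero])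
  obtain ⟨w, hw⟩ := BlueLine.dvd_polar p hu hdeg hy hcurv hb
  have h := RedLine.restrict_polar hr b
  rw [hw, map_mul, hr, zero_mul, eq_comm, mul_eq_zero, or_iff_left hry, Polynomial.C_eq_zero,
    sub_eq_zero] at h
  exact h

end RuledSurfaces

section VanishingOnLines

open MvPolynomial

variable {K : Type*} [Field K]

theorem card_redLine_le_of_not_dvd [Infinite K] {u v : MvPolynomial (Fin 3) K} (hu : Irreducible u)
    (hdeg : degreeOf 0 u ≠ 0) (huv : ¬ u ∣ v) {R : Finset (RedLine K)}
    (hR : Set.InjOn RedLine.height (R : Set (RedLine K)))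
    (hRu : ∀ r ∈ R, r.restrict u = 0) (hRv : ∀ r ∈ R, r.restrict v = 0) :
    #R ≤ (u.totalDegree + v.totalDegree) * max u.totalDegree v.totalDegree := by
  classical
  obtain ⟨ρ, hρ, hρdeg, hspan⟩ := exists_eliminant hu hdeg huv
  obtain ⟨s, hs⟩ : ∃ s, eval s ρ ≠ 0 := by
    contrapose! hρ
    exact funext fun s ↦ by simpa using hρ s
  set τ : Polynomial K := aeval ![Polynomial.C (s 0), Polynomial.X] ρ
  have hτeval (z : K) : τ.eval z = eval ![s 0, z] ρ := by
    rw [← Polynomial.coe_aeval_eq_eval, comp_aeval_apply, aeval_eq_eval]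
    congr 2
    funext i
    fin_cases i <;> simp
  have hτ : τ ≠ 0 := by
    refine fun h ↦ hs ?_
    rw [show s = ![s 0, s 1] by funext i; fin_cases i <;> rfl, ← hτeval, h, Polynomial.eval_zero]
  have hτdeg : τ.natDegree ≤ ρ.totalDegree := by
    refine (aeval_natDegree_le (n := 1) ρ le_rfl _ fun i ↦ ?_).trans_eq (mul_one _)
    fin_cases i <;> simp
  have hroots : R.image RedLine.height ⊆ τ.roots.toFinset := by
    refine image_subset_iff.2 fun r hr ↦ ?_
    rw [Multiset.mem_toFinset, Polynomial.mem_roots hτ, Polynomial.IsRoot, hτeval]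
    have hzero {f} (hf : r.restrict f = 0) :
        eval ![r.slope * s 0 + r.intercept, s 0, r.height] f = 0 := by
      rw [← r.eval_restrict, hf, Polynomial.eval_zero]
    exact eval_eq_zero_of_eliminant hspan (hzero (hRu r hr)) (hzero (hRv r hr))
  calc #R = #(R.image RedLine.height) := (card_image_of_injOn hR).symm
    _ ≤ #τ.roots.toFinset := card_le_card hroots
    _ ≤ τ.natDegree := (Multiset.toFinset_card_le _).trans (Polynomial.card_roots' _)
    _ ≤ _ := hτdeg.trans hρdeg

/-- An irreducible surface independent of `y` and containing a blue line is the plane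
`x = b.abscissa`, which contains no red line. -/
theorem RedLine.restrict_ne_zero_of_degreeOf_zero_eq_zero [Infinite K] {u : MvPolynomial (Fin 3) K}
    (hu : Irreducible u) (hdeg : degreeOf 0 u = 0) {b : BlueLine K} (hb : b.restrict u = 0)
    (r : RedLine K) : r.restrict u ≠ 0 := by
  rw [← natDegree_finSuccEquiv] at hdeg
  obtain ⟨ρ, rfl⟩ : ∃ ρ, u = rename Fin.succ ρ := by
    refine ⟨(finSuccEquiv K 2 u).coeff 0, (finSuccEquiv K 2).injective ?_⟩
    rw [finSuccEquiv_rename_succ, ← Polynomial.eq_C_of_natDegree_eq_zero hdeg]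
  have hdvd : (X 0 - C b.abscissa : MvPolynomial (Fin 2) K) ∣ ρ := by
    by_contra hndvd
    refine finSuccEquiv_eval_C_ne_zero hndvd (MvPolynomial.funext fun s ↦ ?_)
    have hpoint := congrArg (Polynomial.eval (s 0)) hb
    rw [b.eval_restrict, Polynomial.eval_zero] at hpoint
    rw [show s = ![s 0] by funext i; fin_cases i; rfl, eval_finSuccEquiv_eval_C, map_zero, ← hpoint]
    exact (eval_rename_succ _ ![b.abscissa, s 0] ρ).symm
  obtain ⟨q, rfl⟩ := hdvd
  rw [map_mul] at hu ⊢
  rw [map_mul]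
  refine mul_ne_zero ?_ ?_
  · simpa [RedLine.restrict] using Polynomial.X_sub_C_ne_zero b.abscissa
  · refine (IsUnit.map r.restrict ((hu.isUnit_or_isUnit rfl).resolve_left fun h ↦ ?_)).ne_zero
    simpa using h.map (eval fun _ ↦ b.abscissa)

theorem finrank_restrictDegree {σ : Type*} [Fintype σ] (m : ℕ) :
    Module.finrank K (restrictDegree σ K m) = (m + 1) ^ Fintype.card σ := by
  have e : {s : σ →₀ ℕ | ∀ i, s i ≤ m} ≃ (σ → {k : ℕ // k ≤ m}) :=
    (Finsupp.equivFunOnFinite.subtypeEquiv (q := fun s ↦ ∀ i, s i ≤ m) fun _ ↦ Iff.rfl).trans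
      (Equiv.subtypePiEquivPi (p := fun _ k ↦ k ≤ m))
  have hcard : Nat.card {k : ℕ // k ≤ m} = m + 1 := by
    rw [Nat.subtype_card (Finset.Iic m) fun _ ↦ Finset.mem_Iic, Nat.card_Iic]
  calc Module.finrank K (restrictDegree σ K m) = Nat.card (σ → {k : ℕ // k ≤ m}) :=
        (Module.finrank_eq_nat_card_basis (basisRestrictSupport K _)).trans (Nat.card_congr e)
    _ = (m + 1) ^ Fintype.card σ := by rw [Nat.card_fun, hcard, Nat.card_eq_fintype_card]

theorem totalDegree_le_of_mem_restrictDegree {σ : Type*} [Fintype σ] {m : ℕ} {f : MvPolynomial σ K}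
    (hf : f ∈ restrictDegree σ K m) : f.totalDegree ≤ Fintype.card σ * m := by
  refine Finset.sup_le fun s hs ↦ ?_
  rw [Finsupp.sum_fintype _ _ fun _ ↦ rfl]
  exact (sum_le_card_nsmul univ _ m fun i _ ↦ (mem_restrictDegree σ f m).1 hf s hs i).trans_eq
    (by simp)

theorem exists_restrict_eq_zero (T : Finset (BlueLine K)) :
    ∃ f : MvPolynomial (Fin 3) K, f ≠ 0 ∧ f.totalDegree ≤ 3 * Nat.sqrt (3 * #T) ∧
      ∀ b ∈ T, b.restrict f = 0 := by
  set q := Nat.sqrt (3 * #T)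
  have hdeg {f} (hf : f ∈ restrictDegree (Fin 3) K q) : f.totalDegree ≤ 3 * q :=
    totalDegree_le_of_mem_restrictDegree hf
  let Ψ : restrictDegree (Fin 3) K q →ₗ[K] (T × Fin (3 * q + 1) → K) :=
    LinearMap.pi fun bi ↦ Polynomial.lcoeff K bi.2 ∘ₗ
      (bi.1.1.restrict.toLinearMap ∘ₗ Submodule.subtype _)
  have hdim : Module.finrank K (T × Fin (3 * q + 1) → K)
      < Module.finrank K (restrictDegree (Fin 3) K q) := by
    rw [Module.finrank_fintype_fun_eq_card, finrank_restrictDegree]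
    simp only [Fintype.card_prod, Fintype.card_coe, Fintype.card_fin]
    nlinarith [Nat.lt_succ_sqrt (3 * #T)]
  obtain ⟨⟨f, hf⟩, hker, hne⟩ :=
    (Submodule.ne_bot_iff _).1 (LinearMap.ker_ne_bot_of_finrank_lt (f := Ψ) hdim)
  refine ⟨f, fun h ↦ hne (Subtype.ext h), hdeg hf, fun b hb ↦ Polynomial.ext fun i ↦ ?_⟩
  rcases lt_or_ge i (3 * q + 1) with hi | hi
  · exact congrFun (LinearMap.mem_ker.1 hker) (⟨b, hb⟩, ⟨i, hi⟩)
  · rw [Polynomial.coeff_zero, Polynomial.coeff_eq_zero_of_natDegree_lt]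
    exact (b.natDegree_restrict_le f).trans_lt (Nat.lt_of_le_of_lt (hdeg hf) hi)

theorem one_le_totalDegree_of_irreducible {σ : Type*} {u : MvPolynomial σ K} (hu : Irreducible u) :
    1 ≤ u.totalDegree := by
  by_contra! h
  rw [Nat.lt_one_iff, totalDegree_eq_zero_iff_eq_C] at h
  have hcoeff : coeff 0 u ≠ 0 := fun h0 ↦ hu.ne_zero (by rw [h, h0, C_0])
  exact hu.not_isUnit (h ▸ (isUnit_iff_ne_zero.2 hcoeff).map C)

theorem exists_irreducible_factors {σ : Type*} {f : MvPolynomial σ K} (hf : f ≠ 0) :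
    ∃ Φ : Finset (MvPolynomial σ K), (∀ u ∈ Φ, Irreducible u) ∧
      ∑ u ∈ Φ, u.totalDegree ≤ f.totalDegree ∧
      ∀ φ : MvPolynomial σ K →ₐ[K] Polynomial K, φ f = 0 → ∃ u ∈ Φ, φ u = 0 := by
  classical
  induction f using WfDvdMonoid.induction_on_irreducible with
  | zero => exact absurd rfl hf
  | unit f h => exact ⟨∅, by simp, by simp, fun φ h0 ↦ absurd h0 (h.map φ).ne_zero⟩
  | mul f u hf₀ hu ih =>
    obtain ⟨Φ, hirr, hsum, hvan⟩ := ih hf₀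
    refine ⟨insert u Φ, forall_mem_insert _ _ _ |>.2 ⟨hu, hirr⟩, ?_, fun φ h0 ↦ ?_⟩
    · rw [totalDegree_mul_of_isDomain hu.ne_zero hf₀]
      by_cases huΦ : u ∈ Φ
      · rw [insert_eq_of_mem huΦ]
        exact hsum.trans (Nat.le_add_left _ _)
      · rw [sum_insert huΦ]
        exact Nat.add_le_add_left hsum _
    · rw [exists_mem_insert]
      rw [map_mul] at h0
      exact (mul_eq_zero.1 h0).imp_right (hvan φ)

end VanishingOnLines

section Incidences

open MvPolynomial

variable {K : Type*} [Field K]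

open Classical in
/-- The number of incidences between red lines in `R` and blue lines in `T`. -/
noncomputable def incidences (R : Finset (RedLine K)) (T : Finset (BlueLine K)) : ℕ :=
  ∑ b ∈ T, #{r ∈ R | r.Meets b}

/-- Irreducible surfaces of total degree at most `d` covering the blue lines in `T`, with a choice
of one of them through each line. -/
structure SurfaceCover (T : Finset (BlueLine K)) (d : ℕ) where
  /-- the surfaces, given by their equations -/
  surfaces : Finset (MvPolynomial (Fin 3) K)
  irreducible {u : MvPolynomial (Fin 3) K} : u ∈ surfaces → Irreducible u
  sum_totalDegree_le : ∑ u ∈ surfaces, u.totalDegree ≤ d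
  /-- the surface chosen through a blue line -/
  surface : BlueLine K → MvPolynomial (Fin 3) K
  surface_mem {b : BlueLine K} : b ∈ T → surface b ∈ surfaces
  restrict_surface {b : BlueLine K} : b ∈ T → b.restrict (surface b) = 0

theorem nonempty_surfaceCover (T : Finset (BlueLine K)) :
    Nonempty (SurfaceCover T (3 * Nat.sqrt (3 * #T))) := by
  obtain ⟨f, hf, hdeg, hvan⟩ := exists_restrict_eq_zero T
  obtain ⟨Φ, hirr, hsum, hfactor⟩ := exists_irreducible_factors hf
  have hU (b : BlueLine K) : ∃ u, b ∈ T → u ∈ Φ ∧ b.restrict u = 0 := by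
    by_cases hb : b ∈ T
    · obtain ⟨u, hu⟩ := hfactor _ (hvan b hb)
      exact ⟨u, fun _ ↦ hu⟩
    · exact ⟨0, fun h ↦ absurd h hb⟩
  choose U hU using hU
  exact ⟨⟨Φ, hirr _, hsum.trans hdeg, U, fun hb ↦ (hU _ hb).1, fun hb ↦ (hU _ hb).2⟩⟩

/-- A red line on the surface `u = 0` is exceptional if the surface is not ruled by red lines
(`¬ u ∣ levelCurvature u`), or if the tangent plane along the line contains the direction of `y`.
Through the other red lines on the surface every blue line on the surface passes. -/
def RedLine.IsExceptional (r : RedLine K) (u : MvPolynomial (Fin 3) K) : Prop :=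
  r.restrict u = 0 ∧ (¬ u ∣ levelCurvature u ∨ r.restrict (pderiv 0 u) = 0)

theorem card_isExceptional_le [Infinite K] (p : ℕ) [CharP K p] {u : MvPolynomial (Fin 3) K}
    (hu : Irreducible u) (hdeg : u.totalDegree < p) {b : BlueLine K} (hb : b.restrict u = 0)
    {E : Finset (RedLine K)} (hE : Set.InjOn RedLine.height (E : Set (RedLine K)))
    (hexc : ∀ r ∈ E, r.IsExceptional u) : #E ≤ 12 * u.totalDegree ^ 2 := by
  rcases E.eq_empty_or_nonempty with rfl | ⟨r₀, hr₀⟩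
  · simp
  have hdeg₀ : degreeOf 0 u ≠ 0 := fun h ↦
    r₀.restrict_ne_zero_of_degreeOf_zero_eq_zero hu h hb (hexc r₀ hr₀).1
  have hpartial : ¬ u ∣ pderiv 0 u := not_dvd_pderiv fun h ↦
    hdeg₀ (degreeOf_zero_eq_zero_of_pderiv_eq_zero p hdeg h)
  have hcount {v : MvPolynomial (Fin 3) K} (huv : ¬ u ∣ v) (hv : ∀ r ∈ E, r.restrict v = 0)
      (hvdeg : v.totalDegree ≤ 3 * u.totalDegree) : #E ≤ 12 * u.totalDegree ^ 2 := by
    calc #E ≤ (u.totalDegree + v.totalDegree) * max u.totalDegree v.totalDegree :=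
          card_redLine_le_of_not_dvd hu hdeg₀ huv hE (fun r hr ↦ (hexc r hr).1) hv
      _ ≤ (4 * u.totalDegree) * (3 * u.totalDegree) := Nat.mul_le_mul (by omega) (by omega)
      _ = 12 * u.totalDegree ^ 2 := by ring
  by_cases hcurv : u ∣ levelCurvature u
  · refine hcount hpartial (fun r hr ↦ (hexc r hr).2.resolve_left (not_not.2 hcurv)) ?_
    have := totalDegree_pderiv_le 0 u
    omega
  · refine hcount hcurv (fun r hr ↦ ?_) (totalDegree_levelCurvature_le u)
    obtain ⟨h, hh⟩ := r.exists_restrict_levelCurvature_eq u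
    simp [hh, (hexc r hr).1]

namespace SurfaceCover

variable {T : Finset (BlueLine K)} {d : ℕ} (C : SurfaceCover T d)

include C in
theorem totalDegree_le {u : MvPolynomial (Fin 3) K} (hu : u ∈ C.surfaces) : u.totalDegree ≤ d :=
  (single_le_sum (f := totalDegree) (fun _ _ ↦ Nat.zero_le _) hu).trans C.sum_totalDegree_le

theorem card_surfaces_le : #C.surfaces ≤ d := by
  refine le_trans ?_ C.sum_totalDegree_le
  simpa using card_nsmul_le_sum C.surfaces totalDegree 1 fun u hu ↦
    one_le_totalDegree_of_irreducible (C.irreducible hu)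

open Classical in
/-- The red lines in `R` that are exceptional on one of the chosen surfaces. -/
noncomputable def exceptional (R : Finset (RedLine K)) : Finset (RedLine K) :=
  {r ∈ R | ∃ b ∈ T, r.IsExceptional (C.surface b)}

theorem exceptional_subset (R : Finset (RedLine K)) : C.exceptional R ⊆ R := by
  classical
  exact filter_subset _ _

theorem card_exceptional_le [Infinite K] (p : ℕ) [CharP K p] (hd : d < p) {R : Finset (RedLine K)}
    (hR : Set.InjOn RedLine.height (R : Set (RedLine K))) : #(C.exceptional R) ≤ 12 * d ^ 2 := by
  classical
  have hcover : C.exceptional R ⊆ (T.image C.surface).biUnion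
      fun u ↦ {r ∈ R | r.IsExceptional u} := by
    intro r hr
    obtain ⟨hrR, b, hb, hexc⟩ := mem_filter.1 hr
    exact mem_biUnion.2 ⟨_, mem_image_of_mem _ hb, mem_filter.2 ⟨hrR, hexc⟩⟩
  have himage : T.image C.surface ⊆ C.surfaces := image_subset_iff.2 fun b hb ↦ C.surface_mem hb
  have hone : ∀ u ∈ T.image C.surface,
      #{r ∈ R | r.IsExceptional u} ≤ 12 * d * u.totalDegree := by
    simp only [forall_mem_image]
    intro b hb
    have hle := C.totalDegree_le (C.surface_mem hb)
    refine (card_isExceptional_le p (C.irreducible (C.surface_mem hb)) (hle.trans_lt hd)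
      (C.restrict_surface hb) (hR.mono (coe_subset.2 (filter_subset _ _)))
      fun r hr ↦ (mem_filter.1 hr).2).trans ?_
    nlinarith
  calc #(C.exceptional R) ≤ ∑ u ∈ T.image C.surface, 12 * d * u.totalDegree :=
        (card_le_card hcover).trans (card_biUnion_le.trans (sum_le_sum hone))
    _ ≤ ∑ u ∈ C.surfaces, 12 * d * u.totalDegree := sum_le_sum_of_subset himage
    _ ≤ 12 * d * d := by
        rw [← mul_sum]
        exact Nat.mul_le_mul_left _ C.sum_totalDegree_le
    _ = 12 * d ^ 2 := by ring

open Classical in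
theorem card_meets_restrict_ne_zero_le (hT : Set.InjOn BlueLine.abscissa (T : Set (BlueLine K)))
    (r : RedLine K) : #{b ∈ T | r.Meets b ∧ r.restrict (C.surface b) ≠ 0} ≤ d := by
  set B := {b ∈ T | r.Meets b ∧ r.restrict (C.surface b) ≠ 0}
  have hmaps : Set.MapsTo C.surface B C.surfaces := fun b hb ↦ C.surface_mem (mem_filter.1 hb).1
  rw [card_eq_sum_card_fiberwise hmaps]
  refine (sum_le_sum fun u _ ↦ ?_).trans C.sum_totalDegree_le
  rcases eq_or_ne (r.restrict u) 0 with hu | hu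
  · rw [filter_false_of_mem, card_empty]
    · exact Nat.zero_le _
    · rintro b hb rfl
      exact (mem_filter.1 hb).2.2 hu
  have hroots : image BlueLine.abscissa {b ∈ B | C.surface b = u} ⊆
      (r.restrict u).roots.toFinset := by
    refine image_subset_iff.2 fun b hb ↦ ?_
    obtain ⟨hbB, rfl⟩ := mem_filter.1 hb
    obtain ⟨hbT, hmeets, -⟩ := mem_filter.1 hbB
    rw [Multiset.mem_toFinset, Polynomial.mem_roots hu, Polynomial.IsRoot, r.eval_restrict,
      hmeets, ← b.eval_restrict, C.restrict_surface hbT, Polynomial.eval_zero]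
  have hinj : Set.InjOn BlueLine.abscissa ({b ∈ B | C.surface b = u} : Finset (BlueLine K)) :=
    hT.mono (coe_subset.2 ((filter_subset _ _).trans (filter_subset _ _)))
  calc #{b ∈ B | C.surface b = u} ≤ #(r.restrict u).roots.toFinset :=
        (card_image_of_injOn hinj).symm.trans_le (card_le_card hroots)
    _ ≤ (r.restrict u).natDegree := (Multiset.toFinset_card_le _).trans (Polynomial.card_roots' _)
    _ ≤ u.totalDegree := r.natDegree_restrict_le u

open Classical in
theorem card_isolated_le : #{b ∈ T | ∀ b' ∈ T, C.surface b' = C.surface b → b' = b} ≤ d := by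
  refine (card_le_card_of_injOn C.surface (fun b hb ↦ C.surface_mem (mem_filter.1 hb).1)
    fun b hb b' hb' h ↦ ?_).trans C.card_surfaces_le
  exact (mem_filter.1 hb').2 b (mem_filter.1 hb).1 h

theorem meets_of_surface_eq [IsAlgClosed K] (p : ℕ) [CharP K p] (hd : d < p)
    {R : Finset (RedLine K)} {r : RedLine K} (hr : r ∈ R) (hexc : r ∉ C.exceptional R)
    {b b' : BlueLine K} (hb : b ∈ T) (hb' : b' ∈ T) (hbb' : C.surface b' = C.surface b)
    (hrb : r.restrict (C.surface b) = 0) : r.Meets b' := by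
  classical
  have hgen : ¬ r.IsExceptional (C.surface b) := fun h ↦ hexc (mem_filter.2 ⟨hr, b, hb, h⟩)
  simp only [RedLine.IsExceptional, hrb, true_and, not_or, not_not] at hgen
  refine RedLine.meets_of_restrict_eq_zero p (C.irreducible (C.surface_mem hb))
    ((C.totalDegree_le (C.surface_mem hb)).trans_lt hd) hgen.1 hrb hgen.2 ?_
  rw [← hbb']
  exact C.restrict_surface hb'

open Classical in
theorem card_restrict_eq_zero_le [IsAlgClosed K] (p : ℕ) [CharP K p] (hd : d < p)
    {R : Finset (RedLine K)} {k : ℕ}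
    (hk : ∀ b ∈ T, ∀ b' ∈ T, b ≠ b' → #{r ∈ R | r.Meets b ∧ r.Meets b'} ≤ k) {b : BlueLine K}
    (hb : b ∈ T) (hnotisolated : ¬ ∀ b' ∈ T, C.surface b' = C.surface b → b' = b) :
    #{r ∈ R | r ∉ C.exceptional R ∧ r.restrict (C.surface b) = 0} ≤ k := by
  push Not at hnotisolated
  obtain ⟨b', hb', hsurface, hne⟩ := hnotisolated
  refine (card_le_card fun r hr ↦ ?_).trans (hk b hb b' hb' hne.symm)
  obtain ⟨hrR, hexc, hrb⟩ := mem_filter.1 hr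
  exact mem_filter.2 ⟨hrR, C.meets_of_surface_eq p hd hrR hexc hb hb rfl hrb,
    C.meets_of_surface_eq p hd hrR hexc hb hb' hsurface hrb⟩

open Classical in
theorem card_meets_le [IsAlgClosed K] (p : ℕ) [CharP K p] (hd : d < p) {R : Finset (RedLine K)}
    {k : ℕ} (hk : ∀ b ∈ T, ∀ b' ∈ T, b ≠ b' → #{r ∈ R | r.Meets b ∧ r.Meets b'} ≤ k)
    {b : BlueLine K} (hb : b ∈ T) :
    #{r ∈ R | r.Meets b} ≤ #{r ∈ C.exceptional R | r.Meets b}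
      + #{r ∈ R | r.Meets b ∧ r.restrict (C.surface b) ≠ 0}
      + if ∀ b' ∈ T, C.surface b' = C.surface b → b' = b then #R else k := by
  have hregular : #{r ∈ R | r ∉ C.exceptional R ∧ r.restrict (C.surface b) = 0} ≤
      if ∀ b' ∈ T, C.surface b' = C.surface b → b' = b then #R else k := by
    split_ifs with hisolated
    · exact card_filter_le _ _
    · exact C.card_restrict_eq_zero_le p hd hk hb hisolated
  refine le_trans (card_le_card fun r hr ↦ ?_)
    ((card_union_le _ _).trans (add_le_add (card_union_le _ _) hregular))
  simp only [mem_union, mem_filter] at hr ⊢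
  tauto

open Classical in
theorem incidences_le [IsAlgClosed K] (p : ℕ) [CharP K p] (hd : d < p)
    (hT : Set.InjOn BlueLine.abscissa (T : Set (BlueLine K))) {R : Finset (RedLine K)} {k : ℕ}
    (hk : ∀ b ∈ T, ∀ b' ∈ T, b ≠ b' → #{r ∈ R | r.Meets b ∧ r.Meets b'} ≤ k) :
    incidences R T ≤ incidences (C.exceptional R) T + #R * (2 * d) + #T * k := by
  have hproper : ∑ b ∈ T, #{r ∈ R | r.Meets b ∧ r.restrict (C.surface b) ≠ 0} ≤ #R * d :=
    (sum_card_bipartiteAbove_eq_sum_card_bipartiteBelow _).symm.trans_le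
      (sum_le_card_nsmul _ _ _ fun r _ ↦ C.card_meets_restrict_ne_zero_le hT r)
  have hcontained : ∑ b ∈ T, (if ∀ b' ∈ T, C.surface b' = C.surface b → b' = b then #R else k)
      ≤ #R * d + #T * k := by
    rw [sum_ite, sum_const, sum_const, smul_eq_mul, smul_eq_mul, mul_comm #R]
    exact add_le_add (Nat.mul_le_mul_right _ C.card_isolated_le)
      (Nat.mul_le_mul_right _ (card_filter_le _ _))
  calc incidences R T ≤ _ := sum_le_sum fun b hb ↦ C.card_meets_le p hd hk hb
    _ = incidences (C.exceptional R) T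
        + ∑ b ∈ T, #{r ∈ R | r.Meets b ∧ r.restrict (C.surface b) ≠ 0}
        + ∑ b ∈ T, (if ∀ b' ∈ T, C.surface b' = C.surface b → b' = b then #R else k) := by
      rw [sum_add_distrib, sum_add_distrib, incidences]
    _ ≤ incidences (C.exceptional R) T + #R * d + (#R * d + #T * k) :=
      add_le_add (Nat.add_le_add_left hproper _) hcontained
    _ = _ := by ring

end SurfaceCover

open Classical in
theorem exists_card_le_incidences_le [IsAlgClosed K] (p : ℕ) [CharP K p] {R : Finset (RedLine K)}
    {T : Finset (BlueLine K)} (hR : Set.InjOn RedLine.height (R : Set (RedLine K)))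
    (hT : Set.InjOn BlueLine.abscissa (T : Set (BlueLine K))) (hp : 27 * #T < p ^ 2) {k : ℕ}
    (hk : ∀ b ∈ T, ∀ b' ∈ T, b ≠ b' → #{r ∈ R | r.Meets b ∧ r.Meets b'} ≤ k) :
    ∃ R' ⊆ R, #R' ≤ 324 * #T ∧
      incidences R T ≤ incidences R' T + #R * (2 * (3 * Nat.sqrt (3 * #T))) + #T * k := by
  have : Infinite K := IsAlgClosed.instInfinite
  obtain ⟨C⟩ := nonempty_surfaceCover T
  set d := 3 * Nat.sqrt (3 * #T) with hd
  have hd2 : d ^ 2 ≤ 27 * #T := by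
    have := Nat.sqrt_le (3 * #T)
    rw [hd]
    nlinarith
  have hdp : d < p := lt_of_pow_lt_pow_left₀ 2 (Nat.zero_le p) (hd2.trans_lt hp)
  exact ⟨C.exceptional R, C.exceptional_subset R,
    (C.card_exceptional_le p hdp hR).trans (by omega), C.incidences_le p hdp hT hk⟩

theorem exists_subset_card_eq_mul_sum_le {ι : Type*} (f : ι → ℕ) {t : ℕ} {T : Finset ι}
    (ht : t ≤ #T) : ∃ T' ⊆ T, #T' = t ∧ t * ∑ b ∈ T, f b ≤ #T * ∑ b ∈ T', f b := by
  classical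
  obtain ⟨m, hm⟩ := Nat.exists_eq_add_of_le ht
  induction m generalizing T with
  | zero => exact ⟨T, subset_rfl, hm, by rw [hm, add_zero]⟩
  | succ m ih =>
    obtain ⟨b, hb, hmin⟩ := exists_min_image T f (card_pos.1 (by omega))
    have hcard : #(T.erase b) + 1 = #T := card_erase_add_one hb
    obtain ⟨T', hT', ht', hle⟩ := ih (T := T.erase b) (by omega) (by omega)
    refine ⟨T', hT'.trans (erase_subset _ _), ht', ?_⟩
    have hmean : #T * f b ≤ ∑ a ∈ T, f a := by simpa using card_nsmul_le_sum T f (f b) hmin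
    rw [← add_sum_erase T f hb, ← hcard] at hmean ⊢
    rcases Nat.eq_zero_or_pos #(T.erase b) with hempty | hpos
    · rw [show t = 0 by omega, zero_mul]
      exact Nat.zero_le _
    · refine Nat.le_of_mul_le_mul_left ?_ hpos
      nlinarith [Nat.mul_le_mul_left t hmean]

/-- One step of the induction on `#T`, where `T` (of size `σ²`) has been reduced to `τ² ≈ σ² / 400²`
richest lines. -/
theorem incidence_step_arith {r n t k l l' σ τ i i₁ i₂ r' q : ℝ} (hr : 0 ≤ r) (hk : 0 ≤ k)
    (hτ : 0 < τ) (hσ : 0 ≤ σ) (hτt : τ ^ 2 = t) (hσn : σ ^ 2 = n) (hτσ : 400 * τ ≤ σ)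
    (hστ : σ ≤ 600 * τ) (hq : q ≤ 2 * τ) (hl : l' + 1 ≤ l) (hi : t * i ≤ n * i₁)
    (hi₁ : i₁ ≤ i₂ + r * (2 * (3 * q)) + t * k) (hr' : r' ≤ 324 * t)
    (hi₂ : i₂ ≤ 8000 * (r' + t) * τ + k * t * (1 + l')) :
    i ≤ 8000 * (r + n) * σ + k * n * (1 + l) := by
  subst hτt hσn
  have hfew : 8000 * (r' + τ ^ 2) * τ ≤ 8000 * τ ^ 2 * σ := by
    calc 8000 * (r' + τ ^ 2) * τ ≤ 8000 * (400 * τ ^ 2) * τ := by gcongr; nlinarith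
      _ = 8000 * τ ^ 2 * (400 * τ) := by ring
      _ ≤ 8000 * τ ^ 2 * σ := by gcongr
  have hlog : k * τ ^ 2 * (1 + l') ≤ k * τ ^ 2 * l := by gcongr; linarith
  have hmany : σ ^ 2 * (r * (2 * (3 * q))) ≤ τ ^ 2 * (8000 * r * σ) := by
    calc σ ^ 2 * (r * (2 * (3 * q))) ≤ σ ^ 2 * (r * (2 * (3 * (2 * τ)))) := by gcongr
      _ = σ * (12 * r * σ * τ) := by ring
      _ ≤ 600 * τ * (12 * r * σ * τ) := by gcongr
      _ ≤ τ ^ 2 * (8000 * r * σ) := by nlinarith [show 0 ≤ r * σ * τ ^ 2 by positivity]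
  refine le_of_mul_le_mul_left ?_ (pow_pos hτ 2)
  calc τ ^ 2 * i ≤ σ ^ 2 * (8000 * τ ^ 2 * σ + k * τ ^ 2 * l + r * (2 * (3 * q)) + τ ^ 2 * k) :=
        hi.trans (by gcongr; linarith)
    _ ≤ τ ^ 2 * (8000 * (r + σ ^ 2) * σ + k * σ ^ 2 * (1 + l)) := by linarith

theorem sqrt_div_sq_bounds {n : ℕ} (hn : 400 ^ 2 ≤ n) :
    400 * √((n / 400 ^ 2 : ℕ) : ℝ) ≤ √(n : ℝ) ∧ √(n : ℝ) ≤ 600 * √((n / 400 ^ 2 : ℕ) : ℝ) := by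
  have hlo : 400 ^ 2 * (n / 400 ^ 2) ≤ n := Nat.mul_div_le _ _
  have hhi : n ≤ 600 ^ 2 * (n / 400 ^ 2) := by omega
  have hsqrt (c t : ℕ) : √((c ^ 2 * t : ℕ) : ℝ) = c * √(t : ℝ) := by
    rw [Nat.cast_mul, Nat.cast_pow, Real.sqrt_mul (by positivity), Real.sqrt_sq (by positivity)]
  exact ⟨(hsqrt 400 _).symm.trans_le (Real.sqrt_le_sqrt (by exact_mod_cast hlo)),
    (Real.sqrt_le_sqrt (by exact_mod_cast hhi)).trans_eq (hsqrt 600 _)⟩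

theorem natSqrt_three_mul_le (t : ℕ) : (Nat.sqrt (3 * t) : ℝ) ≤ 2 * √(t : ℝ) := by
  calc (Nat.sqrt (3 * t) : ℝ) ≤ √((3 * t : ℕ) : ℝ) := Real.nat_sqrt_le_real_sqrt
    _ ≤ √(2 ^ 2 * (t : ℝ)) := Real.sqrt_le_sqrt (by push_cast; linarith [t.cast_nonneg (α := ℝ)])
    _ = 2 * √(t : ℝ) := by rw [Real.sqrt_mul (by norm_num), Real.sqrt_sq (by norm_num)]

theorem incidences_le_card_mul_card (R : Finset (RedLine K)) (T : Finset (BlueLine K)) :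
    incidences R T ≤ #R * #T := by
  classical
  rw [mul_comm]
  exact sum_le_card_nsmul _ _ _ fun b _ ↦ card_filter_le _ _

open Classical in
theorem incidences_le [IsAlgClosed K] (p : ℕ) [CharP K p] {R : Finset (RedLine K)}
    {T : Finset (BlueLine K)} (hR : Set.InjOn RedLine.height (R : Set (RedLine K)))
    (hT : Set.InjOn BlueLine.abscissa (T : Set (BlueLine K))) (hp : 27 * #T < p ^ 2) {k : ℕ}
    (hk : ∀ b ∈ T, ∀ b' ∈ T, b ≠ b' → #{r ∈ R | r.Meets b ∧ r.Meets b'} ≤ k) :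
    (incidences R T : ℝ) ≤ 8000 * (#R + #T) * √(#T : ℝ) + k * #T * (1 + Nat.log 2 #T) := by
  induction hn : #T using Nat.strong_induction_on generalizing R T with
  | _ n ih =>
  subst hn
  have hsqrt := Real.sq_sqrt (Nat.cast_nonneg (α := ℝ) #T)
  rcases lt_or_ge #T (400 ^ 2) with hsmall | hlarge
  · have hT400 : √(#T : ℝ) ≤ 400 := Real.sqrt_le_iff.2 ⟨by norm_num, by exact_mod_cast hsmall.le⟩
    calc (incidences R T : ℝ) ≤ #R * #T := by exact_mod_cast incidences_le_card_mul_card R T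
      _ = #R * √(#T : ℝ) * √(#T : ℝ) := by rw [mul_assoc, ← sq, hsqrt]
      _ ≤ #R * 8000 * √(#T : ℝ) := by gcongr; linarith
      _ ≤ 8000 * (#R + #T) * √(#T : ℝ) + k * #T * (1 + Nat.log 2 #T) := by
        have : 0 ≤ 8000 * (#T : ℝ) * √(#T : ℝ) + k * #T * (1 + Nat.log 2 #T) := by positivity
        linarith
  obtain ⟨hlo, hhi⟩ := sqrt_div_sq_bounds hlarge
  have hlog : Nat.log 2 (#T / 400 ^ 2) + 1 ≤ Nat.log 2 #T := by
    rw [← Nat.log_mul_base one_lt_two (by omega)]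
    exact Nat.log_mono_right (by omega)
  obtain ⟨T', hT'T, hT', hrich⟩ := exists_subset_card_eq_mul_sum_le
    (fun b ↦ #{r ∈ R | r.Meets b}) (Nat.div_le_self #T (400 ^ 2))
  have hk' : ∀ b ∈ T', ∀ b' ∈ T', b ≠ b' → #{r ∈ R | r.Meets b ∧ r.Meets b'} ≤ k :=
    fun b hb b' hb' ↦ hk b (hT'T hb) b' (hT'T hb')
  obtain ⟨R', hR'R, hR', hstep⟩ := exists_card_le_incidences_le p hR
    (hT.mono (coe_subset.2 hT'T)) (by omega) hk'
  have hrec := ih #T' (by omega) (hR.mono (coe_subset.2 hR'R)) (hT.mono (coe_subset.2 hT'T))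
    (by omega) (fun b hb b' hb' hne ↦
      (card_le_card (filter_subset_filter _ hR'R)).trans (hk' b hb b' hb' hne)) rfl
  rw [← hT'] at hlo hhi hlog hrich
  change #T' * incidences R T ≤ #T * incidences R T' at hrich
  have hpos : 0 < √(#T' : ℝ) := Real.sqrt_pos.2 (by exact_mod_cast (by omega : 0 < #T'))
  exact incidence_step_arith (i₁ := incidences R T') (Nat.cast_nonneg _) (Nat.cast_nonneg _) hpos
    (Real.sqrt_nonneg _) (Real.sq_sqrt (Nat.cast_nonneg _)) hsqrt hlo hhi (natSqrt_three_mul_le _)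
    (by exact_mod_cast hlog) (by exact_mod_cast hrich) (by exact_mod_cast hstep)
    (by exact_mod_cast hR') hrec

end Incidences

section LineEnergy

variable {F K : Type*} [Field F] [Field K]

/-- The ordinate of the point with abscissa `u.2` on the line `y = u.1.1 * x + u.1.2`. A line of the
plane is encoded as the pair of its slope and its intercept. -/
def ordinate (u : (F × F) × F) : F :=
  u.1.1 * u.2 + u.1.2

/-- The number of pairs of elements of `L ×ˢ S`, i.e. of a line of `L` and an abscissa in `S`, which
have the same ordinate. -/
def lineEnergy [DecidableEq F] (L : Finset (F × F)) (S : Finset F) : ℕ :=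
  #{q ∈ (L ×ˢ S) ×ˢ (L ×ˢ S) | ordinate q.1 = ordinate q.2}

/-- The coordinates of a line and an abscissa after the projective change of variables with
parameters `ω` and `τ`: slope, intercept, and the coordinate which records the line along with the
abscissa. -/
def genericCoords (φ : F →+* K) (ω τ : K) (u : (F × F) × F) : K × K × K :=
  (φ u.1.1 / (1 + ω * φ u.1.1), φ u.1.2 / (1 + ω * φ u.1.1),
    (φ u.2 + τ * φ u.1.1 + ω * φ u.1.2) / (1 + ω * φ u.1.1))

/-- The red line with the slope, intercept and height given by `genericCoords`. -/
def genericRedLine (φ : F →+* K) (ω τ : K) (u : (F × F) × F) : RedLine K :=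
  ⟨(genericCoords φ ω τ u).1, (genericCoords φ ω τ u).2.1, (genericCoords φ ω τ u).2.2⟩

/-- The blue line with the slope, intercept and abscissa given by `genericCoords`. -/
def genericBlueLine (φ : F →+* K) (ω τ : K) (u : (F × F) × F) : BlueLine K :=
  ⟨(genericCoords φ ω τ u).1, (genericCoords φ ω τ u).2.1, (genericCoords φ ω τ u).2.2⟩

theorem genericRedLine_meets_genericBlueLine (φ : F →+* K) {ω : K} (τ : K)
    (hω : ∀ g : F, 1 + ω * φ g ≠ 0) (u v : (F × F) × F) :
    (genericRedLine φ ω τ u).Meets (genericBlueLine φ ω τ v) ↔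
      ordinate (u.1, v.2) = ordinate (v.1, u.2) := by
  obtain ⟨⟨g, c⟩, a⟩ := u
  obtain ⟨⟨g', c'⟩, a'⟩ := v
  rw [← φ.injective.eq_iff]
  simp only [RedLine.Meets, genericRedLine, genericBlueLine, genericCoords, ordinate, map_add,
    map_mul]
  have hg := hω g
  have hg' := hω g'
  clear hω
  generalize hd : 1 + ω * φ g = d at *
  generalize hd' : 1 + ω * φ g' = d' at *
  field_simp
  rw [← hd, ← hd']
  constructor <;> intro h <;> linear_combination h

theorem exists_forall_quadratic_ne_zero [Finite F] [Infinite K] (φ : F →+* K) :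
    ∃ ω : K, ∀ α β γ : F, φ α + φ β * ω + φ γ * ω ^ 2 = 0 → α = 0 ∧ β = 0 ∧ γ = 0 := by
  classical
  have := Fintype.ofFinite F
  let P (q : F × F × F) : Polynomial K :=
    .C (φ q.1) + .C (φ q.2.1) * .X + .C (φ q.2.2) * .X ^ 2
  obtain ⟨ω, hω⟩ := Infinite.exists_notMem_finset (univ.biUnion fun q ↦ (P q).roots.toFinset)
  refine ⟨ω, fun α β γ h ↦ ?_⟩
  have hP : P (α, β, γ) = 0 := by
    by_contra hP
    refine hω (mem_biUnion.2 ⟨(α, β, γ), mem_univ _, ?_⟩)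
    rw [Multiset.mem_toFinset, Polynomial.mem_roots hP]
    simpa [P] using h
  have hcoeff (n : ℕ) : (P (α, β, γ)).coeff n = 0 := by rw [hP, Polynomial.coeff_zero]
  exact ⟨by simpa [P] using hcoeff 0,
    by simpa [P, Polynomial.coeff_X, Polynomial.coeff_C] using hcoeff 1,
    by simpa [P, Polynomial.coeff_X, Polynomial.coeff_C] using hcoeff 2⟩

theorem exists_forall_add_mul_ne_zero {ι : Type*} [Finite F] [Finite ι] [Infinite K] (φ : F →+* K)
    (w : ι → K) : ∃ τ : K, ∀ i, ∀ δ : F, w i + φ δ * τ = 0 → δ = 0 := by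
  obtain ⟨τ, hτ⟩ := (Set.finite_range fun q : ι × F ↦ -w q.1 / φ q.2).exists_notMem
  refine ⟨τ, fun i δ h ↦ ?_⟩
  by_contra hδ
  refine hτ ⟨(i, δ), ?_⟩
  rw [div_eq_iff ((map_ne_zero φ).2 hδ)]
  linear_combination -h

/-- The change of variables is needed because distinct elements of `L ×ˢ S` may share the abscissa,
while the incidence bound asks for red lines of distinct heights and blue lines of distinct
abscissas. -/
theorem exists_genericCoords_injective [Finite F] [Infinite K] (φ : F →+* K) :
    ∃ ω τ : K, (∀ g : F, 1 + ω * φ g ≠ 0) ∧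
      Function.Injective fun u ↦ (genericCoords φ ω τ u).2.2 := by
  obtain ⟨ω, hω⟩ := exists_forall_quadratic_ne_zero φ
  obtain ⟨τ, hτ⟩ := exists_forall_add_mul_ne_zero φ
    fun q : F × F × F ↦ φ q.1 + φ q.2.1 * ω + φ q.2.2 * ω ^ 2
  have hne (g : F) : 1 + ω * φ g ≠ 0 := fun hg ↦
    one_ne_zero (hω 1 g 0 (by rw [map_one, map_zero]; linear_combination hg)).1
  refine ⟨ω, τ, hne, ?_⟩
  rintro ⟨⟨g, c⟩, a⟩ ⟨⟨g', c'⟩, a'⟩ h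
  have hcross := (div_eq_div_iff (hne _) (hne _)).1 h
  obtain rfl : g = g' := by
    refine sub_eq_zero.1 (hτ (a - a', c - c' + g' * a - g * a', c * g' - c' * g) (g - g') ?_)
    simp only [map_add, map_sub, map_mul]
    linear_combination hcross
  obtain ⟨ha, hc, -⟩ := hω (a - a') (c - c' + g * a - g * a') (c * g - c' * g) (by
    simp only [map_add, map_sub, map_mul]
    linear_combination hcross)
  obtain rfl := sub_eq_zero.1 ha
  obtain rfl : c = c' := by linear_combination hc
  rfl

theorem card_common_lines_le [DecidableEq F] {L : Finset (F × F)} {S : Finset F} {κ : ℕ}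
    (hκ : ∀ a ∈ S, ∀ y, #{l ∈ L | ordinate (l, a) = y} ≤ κ) {v v' : (F × F) × F}
    (hv : v.2 ∈ S) (hne : v ≠ v') :
    #{u ∈ L ×ˢ S | ordinate (u.1, v.2) = ordinate (v.1, u.2) ∧
      ordinate (u.1, v'.2) = ordinate (v'.1, u.2)} ≤ #S + κ := by
  obtain ⟨⟨g, c⟩, a⟩ := v
  obtain ⟨⟨g', c'⟩, a'⟩ := v'
  obtain rfl | ha := eq_or_ne a a'
  · suffices hx : ∃ x, ∀ u : (F × F) × F, u.1.1 * a + u.1.2 = g * u.2 + c →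
        u.1.1 * a + u.1.2 = g' * u.2 + c' → u.2 = x by
      obtain ⟨x, hx⟩ := hx
      refine (card_le_card_of_injOn Prod.fst ?_ ?_).trans
        ((hκ a hv (g * x + c)).trans (Nat.le_add_left κ #S))
      · intro u hu
        simp only [coe_filter, Set.mem_ofPred_eq, mem_product] at hu ⊢
        exact ⟨hu.1.1, by rw [← hx u hu.2.1 hu.2.2]; exact hu.2.1⟩
      · intro u hu u' hu' h
        simp only [coe_filter, Set.mem_ofPred_eq] at hu hu'
        exact Prod.ext h ((hx u hu.2.1 hu.2.2).trans (hx u' hu'.2.1 hu'.2.2).symm)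
    refine ⟨(c' - c) / (g - g'), fun u h h' ↦ ?_⟩
    have hg : g - g' ≠ 0 := fun hg ↦ hne (by
      obtain rfl := sub_eq_zero.1 hg
      obtain rfl : c = c' := by linear_combination h' - h
      rfl)
    rw [eq_div_iff hg]
    linear_combination h' - h
  · refine (card_le_card_of_injOn Prod.snd (fun u hu ↦ ?_) ?_).trans (Nat.le_add_right #S κ)
    · exact (mem_product.1 (mem_filter.1 hu).1).2
    · rintro ⟨⟨s, t⟩, x⟩ hu ⟨⟨s', t'⟩, x'⟩ hu' (rfl : x = x')
      obtain ⟨-, h, h'⟩ := mem_filter.1 hu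
      obtain ⟨-, k, k'⟩ := mem_filter.1 hu'
      simp only [ordinate] at h h' k k'
      obtain rfl : s = s' := by
        refine sub_eq_zero.1 ((mul_eq_zero.1 ?_).resolve_right (sub_ne_zero.2 ha))
        linear_combination h - h' - k + k'
      obtain rfl : t = t' := by linear_combination h - k
      rfl

open Classical in
theorem lineEnergy_eq_incidences [DecidableEq F] (φ : F →+* K) {ω τ : K}
    (hω : ∀ g : F, 1 + ω * φ g ≠ 0)
    (hinj : Function.Injective fun u ↦ (genericCoords φ ω τ u).2.2)
    (L : Finset (F × F)) (S : Finset F) :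
    lineEnergy L S = incidences ((L ×ˢ S).image (genericRedLine φ ω τ))
      ((L ×ˢ S).image (genericBlueLine φ ω τ)) := by
  have hred : Function.Injective (genericRedLine φ ω τ) := fun u v h ↦
    hinj (congrArg RedLine.height h)
  have hblue : Function.Injective (genericBlueLine φ ω τ) := fun u v h ↦
    hinj (congrArg BlueLine.abscissa h)
  simp only [incidences, filter_image, sum_image hblue.injOn, card_image_of_injective _ hred,
    genericRedLine_meets_genericBlueLine φ τ hω]
  rw [← card_sigma]
  -- A pair of points and the pair with exchanged abscissas correspond to each other.
  refine card_nbij' (fun q ↦ ⟨(q.2.1, q.1.2), (q.1.1, q.2.2)⟩)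
    (fun q ↦ ((q.2.1, q.1.2), (q.1.1, q.2.2))) ?_ ?_ (fun _ _ ↦ rfl) (fun _ _ ↦ rfl) <;>
  · intro q hq
    simp only [coe_filter, coe_sigma, Set.mem_sigma_iff, Set.mem_ofPred_eq, mem_product,
      mem_coe] at hq ⊢
    tauto

theorem lineEnergy_le [Finite F] [DecidableEq F] (p : ℕ) [CharP F p] {L : Finset (F × F)}
    {S : Finset F} {κ : ℕ} (hκ : ∀ a ∈ S, ∀ y, #{l ∈ L | ordinate (l, a) = y} ≤ κ)
    (hp : 27 * (#L * #S) < p ^ 2) :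
    (lineEnergy L S : ℝ) ≤ 16000 * (#L * #S) * √(#L * #S) +
      (#S + κ) * (#L * #S) * (1 + Nat.log 2 (#L * #S)) := by
  classical
  let φ := algebraMap F (AlgebraicClosure F)
  have : CharP (AlgebraicClosure F) p := charP_of_injective_algebraMap φ.injective p
  obtain ⟨ω, τ, hω, hinj⟩ := exists_genericCoords_injective φ
  have hred : Function.Injective (genericRedLine φ ω τ) := fun u v h ↦
    hinj (congrArg RedLine.height h)
  have hblue : Function.Injective (genericBlueLine φ ω τ) := fun u v h ↦
    hinj (congrArg BlueLine.abscissa h)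
  have hbound := incidences_le p (R := (L ×ˢ S).image (genericRedLine φ ω τ))
    (T := (L ×ˢ S).image (genericBlueLine φ ω τ)) (k := #S + κ) ?_ ?_ ?_ ?_
  · rw [card_image_of_injective _ hred, card_image_of_injective _ hblue, card_product,
      ← lineEnergy_eq_incidences φ hω hinj] at hbound
    push_cast at hbound
    convert hbound using 2
    ring
  · rw [coe_image]
    rintro _ ⟨u, -, rfl⟩ _ ⟨v, -, rfl⟩ h
    exact congrArg _ (hinj h)
  · rw [coe_image]
    rintro _ ⟨u, -, rfl⟩ _ ⟨v, -, rfl⟩ h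
    exact congrArg _ (hinj h)
  · rwa [card_image_of_injective _ hblue, card_product]
  · simp only [mem_image, forall_exists_index, and_imp, forall_apply_eq_imp_iff₂]
    intro v hv v' _ hne
    rw [filter_image, card_image_of_injective _ hred]
    simp only [genericRedLine_meets_genericBlueLine φ τ hω]
    convert card_common_lines_le hκ (mem_product.1 hv).2 (fun h ↦ hne (congrArg _ h))

end LineEnergy

section PointLine

theorem sum_sq_card_fiber_le {α β : Type*} [DecidableEq β] (f : α → β) (U : Finset α)
    (T : Finset β) :
    ∑ t ∈ T, #{u ∈ U | f u = t} ^ 2 ≤ #{q ∈ U ×ˢ U | f q.1 = f q.2} := by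
  classical
  have hfiber (t : β) : #{u ∈ U | f u = t} ^ 2 =
      #{q ∈ {q ∈ U ×ˢ U | f q.1 = f q.2} | f q.1 = t} := by
    rw [sq, ← card_product, ← filter_product, filter_filter]
    exact congrArg card (filter_congr fun q _ ↦
      ⟨fun ⟨h, h'⟩ ↦ ⟨h.trans h'.symm, h⟩, fun ⟨h, h'⟩ ↦ ⟨h', h ▸ h'⟩⟩)
  simp only [hfiber, sum_card_fiberwise_eq_card_filter]
  exact card_filter_le _ _

theorem sq_card_filter_mem_le {α β : Type*} [DecidableEq β] (f : α → β) (U : Finset α)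
    (T : Finset β) :
    #{u ∈ U | f u ∈ T} ^ 2 ≤ #T * #{q ∈ U ×ˢ U | f q.1 = f q.2} := by
  rw [← sum_card_fiberwise_eq_card_filter]
  exact sq_sum_le_card_mul_sum_sq.trans (Nat.mul_le_mul_left _ (sum_sq_card_fiber_le f U T))

variable {F : Type*} [Field F] [DecidableEq F]

/-- The number of incidences between the lines of `L` and the points of `P`. -/
def pointLineIncidences (L P : Finset (F × F)) : ℕ :=
  ∑ l ∈ L, #{x ∈ P | ordinate (l, x.1) = x.2}

theorem pointLineIncidences_product (L : Finset (F × F)) (S T : Finset F) :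
    pointLineIncidences L (S ×ˢ T) = ∑ l ∈ L, #{s ∈ S | ordinate (l, s) ∈ T} := by
  simp only [pointLineIncidences, card_filter, sum_product, sum_ite_eq]

theorem sq_pointLineIncidences_product_le (L : Finset (F × F)) (S T : Finset F) :
    pointLineIncidences L (S ×ˢ T) ^ 2 ≤ #T * lineEnergy L S := by
  have hcard : pointLineIncidences L (S ×ˢ T) = #{u ∈ L ×ˢ S | ordinate u ∈ T} := by
    simp only [pointLineIncidences_product, card_filter, sum_product]
  rw [hcard]
  exact sq_card_filter_mem_le ordinate (L ×ˢ S) T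

section Fintype

variable [Fintype F]

theorem card_lines_through (x : F × F) :
    #{l : F × F | ordinate (l, x.1) = x.2} = Fintype.card F := by
  rw [← card_univ]
  refine card_nbij' Prod.fst (fun g ↦ (g, x.2 - g * x.1)) (fun _ _ ↦ mem_coe.2 (mem_univ _)) ?_ ?_
    (fun _ _ ↦ rfl)
  · intro g _
    exact mem_filter.2 ⟨mem_univ _, add_sub_cancel _ _⟩
  · intro l hl
    have hl : l.1 * x.1 + l.2 = x.2 := (mem_filter.1 hl).2
    exact Prod.ext rfl (by linear_combination -hl)

theorem card_lines_through_pair_le_one {x y : F × F} (hne : x ≠ y) :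
    #{l : F × F | ordinate (l, x.1) = x.2 ∧ ordinate (l, y.1) = y.2} ≤ 1 := by
  rw [card_le_one]
  rintro ⟨g, c⟩ hl ⟨g', c'⟩ hl'
  obtain ⟨hx, hy⟩ := (mem_filter.1 hl).2
  obtain ⟨hx', hy'⟩ := (mem_filter.1 hl').2
  simp only [ordinate] at hx hy hx' hy'
  have hxy : x.1 - y.1 ≠ 0 := fun h ↦
    hne (Prod.ext (sub_eq_zero.1 h) (by linear_combination hy - hx + g * h))
  obtain rfl : g = g' := by
    refine sub_eq_zero.1 ((mul_eq_zero.1 ?_).resolve_right hxy)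
    linear_combination hx - hy - hx' + hy'
  obtain rfl : c = c' := by linear_combination hx - hx'
  rfl

theorem sum_card_points_on_line (P : Finset (F × F)) :
    ∑ l : F × F, #{x ∈ P | ordinate (l, x.1) = x.2} = Fintype.card F * #P := by
  simp only [card_filter]
  rw [sum_comm]
  simp only [← card_filter, card_lines_through, sum_const, smul_eq_mul, mul_comm]

theorem sum_sq_card_points_on_line_le (P : Finset (F × F)) :
    ∑ l : F × F, #{x ∈ P | ordinate (l, x.1) = x.2} ^ 2 ≤ Fintype.card F * #P + #P ^ 2 := by
  have hsq (l : F × F) : #{x ∈ P | ordinate (l, x.1) = x.2} ^ 2 =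
      #{q ∈ P ×ˢ P | ordinate (l, q.1.1) = q.1.2 ∧ ordinate (l, q.2.1) = q.2.2} := by
    rw [sq, ← card_product, ← filter_product]
  have hpair (x : F × F) (hx : x ∈ P) :
      ∑ y ∈ P, #{l : F × F | ordinate (l, x.1) = x.2 ∧ ordinate (l, y.1) = y.2} ≤
        Fintype.card F + #P := by
    rw [← add_sum_erase _ _ hx]
    refine add_le_add (by simp only [and_self, card_lines_through, le_refl]) ?_
    refine (sum_le_card_nsmul _ _ 1 fun y hy ↦
      card_lines_through_pair_le_one (ne_of_mem_erase hy).symm).trans ?_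
    rw [smul_eq_mul, mul_one]
    exact card_le_card (erase_subset _ _)
  rw [sum_congr rfl fun l _ ↦ hsq l]
  simp only [card_filter]
  rw [sum_comm, sum_product]
  simp only [← card_filter]
  refine (sum_le_card_nsmul _ _ _ hpair).trans_eq ?_
  rw [smul_eq_mul]
  ring

/-- Vinh's incidence bound. -/
theorem sq_pointLineIncidences_sub_le (L P : Finset (F × F)) :
    ((pointLineIncidences L P : ℝ) - #L * #P / Fintype.card F) ^ 2 ≤
      Fintype.card F * #L * #P := by
  set q : ℝ := (Fintype.card F : ℝ) with hq
  have hq0 : 0 < q := Nat.cast_pos.2 Fintype.card_pos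
  let i (l : F × F) : ℝ := #{x ∈ P | ordinate (l, x.1) = x.2}
  have hfirst : ∑ l, i l = q * #P := by
    simp only [i, hq]
    exact_mod_cast sum_card_points_on_line P
  have hsecond : ∑ l, i l ^ 2 ≤ q * #P + (#P : ℝ) ^ 2 := by
    simp only [i, hq]
    exact_mod_cast sum_sq_card_points_on_line_le P
  have hvariance : ∑ l, (i l - #P / q) ^ 2 ≤ q * #P := by
    have hexpand : ∑ l, (i l - #P / q) ^ 2 =
        ∑ l, i l ^ 2 - 2 * (#P / q) * ∑ l, i l + q ^ 2 * (#P / q) ^ 2 := by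
      simp only [sub_sq, sum_add_distrib, sum_sub_distrib, ← sum_mul, ← mul_sum, sum_const,
        card_univ, Fintype.card_prod, nsmul_eq_mul, Nat.cast_mul, hq]
      ring
    have hcancel : 2 * (#P / q) * (q * #P) = 2 * (#P : ℝ) ^ 2 := by field_simp
    have hcancel' : q ^ 2 * (#P / q) ^ 2 = (#P : ℝ) ^ 2 := by field_simp
    rw [hexpand, hfirst, hcancel, hcancel']
    linarith
  have hdeviation : (pointLineIncidences L P : ℝ) - #L * #P / q = ∑ l ∈ L, (i l - #P / q) := by
    rw [sum_sub_distrib, sum_const, nsmul_eq_mul, mul_div_assoc, pointLineIncidences, Nat.cast_sum]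
  rw [hdeviation]
  calc (∑ l ∈ L, (i l - #P / q)) ^ 2 ≤ #L * ∑ l ∈ L, (i l - #P / q) ^ 2 :=
        sq_sum_le_card_mul_sum_sq
    _ ≤ #L * ∑ l, (i l - #P / q) ^ 2 := by
        gcongr
        exact subset_univ L
    _ ≤ #L * (q * #P) := by gcongr
    _ = q * #L * #P := by ring

end Fintype

variable {p : ℕ} [Fact p.Prime]

theorem pow_four_pointLineIncidences_le_of_lt {L : Finset (ZMod p × ZMod p)} {S : Finset (ZMod p)}
    (T : Finset (ZMod p)) {κ : ℕ} (hκ : ∀ a ∈ S, ∀ y, #{l ∈ L | ordinate (l, a) = y} ≤ κ)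
    {C : ℝ} (hC : (#S + κ : ℝ) ≤ C * √(#L * #S)) (hp : 27 * (#L * #S) < p ^ 2) :
    (pointLineIncidences L (S ×ˢ T) : ℝ) ^ 4 ≤
      (16000 + C) ^ 2 * (1 + Nat.log 2 (#L * #S)) ^ 2 * #T ^ 2 * (#L * #S) ^ 3 := by
  set N : ℝ := #L * #S with hN
  set ℓ : ℝ := 1 + Nat.log 2 (#L * #S) with hℓ
  have hℓ1 : 1 ≤ ℓ := le_add_of_nonneg_right (Nat.cast_nonneg _)
  have henergy : (lineEnergy L S : ℝ) ≤ (16000 + C) * ℓ * (N * √N) := by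
    calc (lineEnergy L S : ℝ) ≤ 16000 * N * √N * 1 + (#S + κ) * N * ℓ := by
          rw [mul_one]
          exact lineEnergy_le p hκ hp
      _ ≤ 16000 * N * √N * ℓ + (C * √N) * N * ℓ := by gcongr
      _ = (16000 + C) * ℓ * (N * √N) := by ring
  have hsq : (pointLineIncidences L (S ×ˢ T) : ℝ) ^ 2 ≤ #T * lineEnergy L S := by
    exact_mod_cast sq_pointLineIncidences_product_le L S T
  calc (pointLineIncidences L (S ×ˢ T) : ℝ) ^ 4
      = ((pointLineIncidences L (S ×ˢ T) : ℝ) ^ 2) ^ 2 := by ring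
    _ ≤ (#T * ((16000 + C) * ℓ * (N * √N))) ^ 2 := by
        gcongr
        exact hsq.trans (by gcongr)
    _ = (16000 + C) ^ 2 * ℓ ^ 2 * #T ^ 2 * (N ^ 2 * √N ^ 2) := by ring
    _ = (16000 + C) ^ 2 * ℓ ^ 2 * #T ^ 2 * N ^ 3 := by
        rw [Real.sq_sqrt (by positivity)]
        ring

theorem pointLineIncidences_le_or_pow_four_le_of_le {L : Finset (ZMod p × ZMod p)}
    {S T : Finset (ZMod p)} (hp : p ^ 2 ≤ 27 * (#L * #S)) :
    (pointLineIncidences L (S ×ˢ T) : ℝ) ≤ 2 * (#L * #S * #T / p) ∨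
      (pointLineIncidences L (S ×ˢ T) : ℝ) ^ 4 ≤ 432 * #T ^ 2 * (#L * #S) ^ 3 := by
  refine or_iff_not_imp_left.2 fun h ↦ ?_
  have hvinh := sq_pointLineIncidences_sub_le L (S ×ˢ T)
  rw [ZMod.card, card_product, Nat.cast_mul, ← mul_assoc] at hvinh
  set I : ℝ := (pointLineIncidences L (S ×ˢ T) : ℝ)
  have hhalf : I / 2 ≤ I - #L * #S * #T / p := by linarith
  have hp' : (p : ℝ) ^ 2 ≤ 27 * (#L * #S) := by exact_mod_cast hp
  have hsq : I ^ 2 ≤ 4 * (p * #L * (#S * #T)) := by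
    have : (I / 2) ^ 2 ≤ p * #L * (#S * #T) :=
      (pow_le_pow_left₀ (by positivity) hhalf 2).trans (hvinh.trans_eq (by ring))
    linarith
  calc I ^ 4 = (I ^ 2) ^ 2 := by ring
    _ ≤ (4 * (p * #L * (#S * #T)) : ℝ) ^ 2 := by gcongr
    _ = 16 * (p : ℝ) ^ 2 * (#L * #S * #T) ^ 2 := by ring
    _ ≤ 16 * (27 * (#L * #S)) * (#L * #S * #T) ^ 2 := by gcongr
    _ = 432 * #T ^ 2 * (#L * #S) ^ 3 := by ring

theorem pointLineIncidences_le_or_pow_four_le {L : Finset (ZMod p × ZMod p)} {S : Finset (ZMod p)}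
    (T : Finset (ZMod p)) {κ : ℕ} (hκ : ∀ a ∈ S, ∀ y, #{l ∈ L | ordinate (l, a) = y} ≤ κ)
    {C : ℝ} (hC₀ : 0 ≤ C) (hC : (#S + κ : ℝ) ≤ C * √(#L * #S)) :
    (pointLineIncidences L (S ×ˢ T) : ℝ) ≤ 2 * (#L * #S * #T / p) ∨
      (pointLineIncidences L (S ×ˢ T) : ℝ) ^ 4 ≤
        (16000 + C) ^ 2 * (1 + Nat.log 2 (#L * #S)) ^ 2 * #T ^ 2 * (#L * #S) ^ 3 := by
  rcases lt_or_ge (27 * (#L * #S)) (p ^ 2) with hp | hp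
  · exact .inr (pow_four_pointLineIncidences_le_of_lt T hκ hC hp)
  refine (pointLineIncidences_le_or_pow_four_le_of_le hp).imp_right fun h ↦ h.trans ?_
  have hℓ : (1 : ℝ) ≤ (1 + Nat.log 2 (#L * #S)) ^ 2 :=
    one_le_pow₀ (le_add_of_nonneg_right (Nat.cast_nonneg _))
  gcongr
  nlinarith

theorem le_or_pow_four_le_of_le_sum_card {ι β : Type*} {X : Finset ι} {B : Finset β}
    {S T : Finset (ZMod p)} {u : ι → ZMod p} {v : ι → β → ZMod p} (hu : Set.InjOn u X)
    (hv : ∀ x ∈ X, Set.InjOn (v x) B) {C : ℝ} (hC₀ : 0 ≤ C)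
    (hC : (#S + #X : ℝ) ≤ C * √(#X * #B * #S)) {n : ℕ}
    (hn : n ≤ ∑ x ∈ X, ∑ b ∈ B, #{s ∈ S | u x * s + v x b ∈ T}) :
    (n : ℝ) ≤ 2 * (#X * #B * #S * #T / p) ∨
      (n : ℝ) ^ 4 ≤ (16000 + C) ^ 2 * (1 + Nat.log 2 (#X * #B * #S)) ^ 2 * #T ^ 2 *
        (#X * #B * #S) ^ 3 := by
  classical
  let line (q : ι × β) : ZMod p × ZMod p := (u q.1, v q.1 q.2)
  have hline : Set.InjOn line (X ×ˢ B : Finset (ι × β)) := by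
    rintro ⟨x, b⟩ hq ⟨x', b'⟩ hq' h
    obtain ⟨hx, hb⟩ := mem_product.1 hq
    obtain ⟨hx', hb'⟩ := mem_product.1 hq'
    obtain rfl : x = x' := hu hx hx' (congrArg Prod.fst h)
    obtain rfl : b = b' := hv x hx hb hb' (congrArg Prod.snd h)
    rfl
  set L := (X ×ˢ B).image line with hL
  have hcard : #L = #X * #B := by rw [hL, card_image_of_injOn hline, card_product]
  have hκ (a) (_ : a ∈ S) (y) : #{l ∈ L | ordinate (l, a) = y} ≤ #X := by
    refine card_le_card_of_surjOn (fun x ↦ (u x, y - u x * a)) ?_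
    intro l hl
    obtain ⟨hlL, rfl⟩ := mem_filter.1 hl
    obtain ⟨⟨x, b⟩, hq, rfl⟩ := mem_image.1 hlL
    exact ⟨x, (mem_product.1 hq).1, Prod.ext rfl (add_sub_cancel_left _ _)⟩
  have hn' : n ≤ pointLineIncidences L (S ×ˢ T) := by
    rwa [pointLineIncidences_product, hL, sum_image hline, sum_product]
  have hbound := pointLineIncidences_le_or_pow_four_le T hκ hC₀
    (by rwa [hcard, Nat.cast_mul])
  rw [hcard, Nat.cast_mul] at hbound
  exact hbound.imp (Nat.cast_le.2 hn').trans
    (pow_le_pow_left₀ (Nat.cast_nonneg _) (Nat.cast_le.2 hn') 4).trans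

end PointLine

section Dyadic

theorem pow_le_sum_dyadic {k : ℕ} (hk : k ≠ 0) {n M : ℕ} (hn : n ≤ M) :
    (n : ℝ) ^ k ≤
      ∑ j ∈ range (1 + Nat.log 2 M), if 2 ^ j ≤ n then ((2 : ℝ) ^ (j + 1)) ^ k else 0 := by
  have nonneg : ∀ j ∈ range (1 + Nat.log 2 M),
      (0 : ℝ) ≤ if 2 ^ j ≤ n then ((2 : ℝ) ^ (j + 1)) ^ k else 0 := fun j _ ↦ by positivity
  obtain rfl | hn₀ := eq_or_ne n 0
  · simpa only [Nat.cast_zero, zero_pow hk] using sum_nonneg nonneg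
  · have hmem : Nat.log 2 n ∈ range (1 + Nat.log 2 M) :=
      mem_range.2 (by have := Nat.log_mono_right (b := 2) hn; lia)
    refine le_trans ?_ (single_le_sum nonneg hmem)
    rw [if_pos (Nat.pow_log_le_self 2 hn₀)]
    gcongr
    exact_mod_cast (Nat.lt_pow_succ_log_self one_lt_two n).le

theorem sum_pow_le_of_card_filter_mul_pow_le {ι : Type*} {s : Finset ι} {r : ι → ℕ} {M k : ℕ}
    (hk : k ≠ 0) (hM : ∀ z ∈ s, r z ≤ M) {Y : ℝ}
    (hY : ∀ τ : ℕ, 1 ≤ τ → (#{z ∈ s | τ ≤ r z} : ℝ) * (τ : ℝ) ^ k ≤ Y) :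
    ∑ z ∈ s, (r z : ℝ) ^ k ≤ 2 ^ k * Y * (1 + Nat.log 2 M) :=
  calc ∑ z ∈ s, (r z : ℝ) ^ k
      ≤ ∑ z ∈ s, ∑ j ∈ range (1 + Nat.log 2 M),
          if 2 ^ j ≤ r z then ((2 : ℝ) ^ (j + 1)) ^ k else 0 :=
        sum_le_sum fun z hz ↦ pow_le_sum_dyadic hk (hM z hz)
    _ = ∑ j ∈ range (1 + Nat.log 2 M), #{z ∈ s | 2 ^ j ≤ r z} * ((2 : ℝ) ^ (j + 1)) ^ k := by
        rw [sum_comm]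
        simp_rw [← sum_filter, sum_const, nsmul_eq_mul]
    _ ≤ ∑ _j ∈ range (1 + Nat.log 2 M), 2 ^ k * Y := by
        refine sum_le_sum fun j _ ↦ ?_
        have h := hY (2 ^ j) Nat.one_le_two_pow
        push_cast at h
        rw [pow_succ', mul_pow, mul_left_comm]
        gcongr
    _ = 2 ^ k * Y * (1 + Nat.log 2 M) := by
        rw [sum_const, card_range, nsmul_eq_mul]
        push_cast
        ring

end Dyadic

section Representations

variable {G : Type*} [AddCommGroup G] [DecidableEq G]

/-- `A ∩ (A - z)`, the set of those `b` for which `(b + z) - b` represents `z` as a difference of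
two elements of `A`. -/
def overlap (A : Finset G) (z : G) : Finset G := {b ∈ A | b + z ∈ A}

/-- The number of representations of `z` as a difference of two elements of `A`. It equals
`A.addConvolution (-A) z`; indexing the representations by their subtrahends makes the overlaps
`overlap A z`, which have difference counts of their own, available. -/
def diffCount (A : Finset G) (z : G) : ℕ := #(overlap A z)

variable {A B C : Finset G}

theorem diffCount_le_card (A : Finset G) (z : G) : diffCount A z ≤ #A := card_filter_le _ _

theorem diffCount_mono {S : Finset G} (hSA : S ⊆ A) (z : G) : diffCount S z ≤ diffCount A z :=
  card_le_card fun b hb ↦ by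
    rw [overlap, mem_filter] at hb ⊢
    exact hb.imp (@hSA _) (@hSA _)

theorem diffCount_zero (A : Finset G) : diffCount A 0 = #A := by simp [diffCount, overlap]

theorem diffCount_neg_left (A : Finset G) (z : G) : diffCount (-A) z = diffCount A z := by
  refine card_nbij' (fun b ↦ -(b + z)) (fun b ↦ -(b + z)) ?_ ?_ ?_ ?_ <;>
    simp +contextual [Set.MapsTo, Set.LeftInvOn, overlap]

theorem diffCount_overlap_comm (A : Finset G) (z t : G) :
    diffCount (overlap A z) t = diffCount (overlap A t) z := by
  simp only [diffCount, overlap, filter_filter, mem_filter, add_right_comm _ t z]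
  congr 1
  ext b
  simp only [mem_filter]
  tauto

theorem addConvolution_eq_card_filter (A B : Finset G) (x : G) :
    A.addConvolution B x = #{b ∈ B | x - b ∈ A} := by
  refine card_nbij' Prod.snd (fun b ↦ (x - b, b)) ?_ ?_ ?_ ?_
  · rintro ⟨a, b⟩ hab
    obtain ⟨hmem, rfl⟩ := mem_filter.1 hab
    simpa [and_comm] using hmem
  all_goals simp +contextual [Set.MapsTo, Set.LeftInvOn, ← eq_sub_iff_add_eq]

theorem sum_addConvolution (A B Q : Finset G) :
    ∑ q ∈ Q, A.addConvolution B q = ∑ a ∈ A, #{b ∈ B | a + b ∈ Q} := by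
  simp_rw [addConvolution, card_filter, sum_product]
  rw [sum_comm]
  refine sum_congr rfl fun a _ ↦ ?_
  rw [sum_comm]
  simp

theorem addConvolution_overlap_sub (A C : Finset G) (x y : G) :
    (overlap A (x - y)).addConvolution C y = #{c ∈ C | x - c ∈ A ∧ y - c ∈ A} := by
  rw [addConvolution_eq_card_filter]
  congr 1
  ext c
  simp only [overlap, mem_filter, sub_add_sub_cancel', and_comm]

theorem sum_filter_sub_mem {M : Type*} [AddCommMonoid M] (P A : Finset G) (c : G) (φ : G → M) :
    ∑ x ∈ P with x - c ∈ A, φ x = ∑ a ∈ A with a + c ∈ P, φ (a + c) :=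
  sum_nbij' (· - c) (· + c) (by simp +contextual) (by simp +contextual) (by simp) (by simp)
    (by simp)

theorem sum_diffCount_sub_eq_sum_addConvolution (A C : Finset G) (q : G) :
    ∑ c ∈ C, diffCount A (q - c) = ∑ a ∈ A, A.addConvolution C (q + a) := by
  simp_rw [diffCount, overlap, addConvolution_eq_card_filter, card_filter]
  rw [sum_comm]
  simp_rw [← add_sub_assoc, add_comm q]

variable [Fintype G]

theorem sum_diffCount_mul (A : Finset G) (φ : G → ℝ) :
    ∑ z, diffCount A z * φ z = ∑ a ∈ A, ∑ b ∈ A, φ (a - b) := by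
  simp_rw [diffCount, overlap, ← nsmul_eq_mul, ← sum_const, sum_filter]
  rw [sum_comm, sum_comm (s := A) (t := A)]
  refine sum_congr rfl fun b _ ↦ ?_
  rw [← sum_filter]
  exact sum_nbij' (b + ·) (· - b) (by simp) (by simp) (by simp) (by simp) (by simp)

theorem sum_diffCount (A : Finset G) : ∑ z, (diffCount A z : ℝ) = #A ^ 2 := by
  simpa [sq] using sum_diffCount_mul A 1

omit [Fintype G] in
theorem card_mul_le_sq_card_of_le_diffCount [Finite G] {S : Finset G} {τ : ℕ}
    (hS : ∀ z ∈ S, τ ≤ diffCount A z) : (#S : ℝ) * τ ≤ #A ^ 2 := by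
  have := Fintype.ofFinite G
  rw [← sum_diffCount]
  refine le_trans ?_ (sum_le_univ_sum_of_nonneg (s := S) fun _ ↦ Nat.cast_nonneg _)
  exact_mod_cast card_nsmul_le_sum S (diffCount A) τ hS

/-- The differences of elements of `A` which have at least `τ` representations; these are the level
sets in the dyadic decompositions of `diffCount A`. -/
def popularDifferences (A : Finset G) (τ : ℕ) : Finset G := {z | τ ≤ diffCount A z}

theorem sum_sq_addConvolution (A B : Finset G) :
    ∑ y, (A.addConvolution B y : ℝ) ^ 2 = ∑ t, diffCount B t * (diffCount A t : ℝ) := by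
  rw [sum_diffCount_mul]
  simp_rw [addConvolution_eq_card_filter, card_filter, Nat.cast_sum, sq, sum_mul_sum]
  rw [sum_comm]
  refine sum_congr rfl fun b _ ↦ ?_
  rw [sum_comm]
  refine sum_congr rfl fun b' _ ↦ ?_
  simp_rw [← Nat.cast_mul, ite_zero_mul_ite_zero, mul_one, ← Nat.cast_sum, ← card_filter, diffCount]
  congr 1
  refine card_nbij' (· - b) (· + b) ?_ ?_ ?_ ?_ <;>
    simp +contextual [Set.MapsTo, Set.LeftInvOn, overlap, add_sub_assoc]

theorem sq_card_mul_card_le_card_add_mul_sum_diffCount (A C : Finset G) :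
    ((#A * #C : ℕ) : ℝ) ^ 2 ≤ #(A + C) * ∑ t, diffCount C t * (diffCount A t : ℝ) := by
  have h := le_card_add_mul_addEnergy A C
  rw [addEnergy_eq_sum_sq, ← mul_pow] at h
  rw [← sum_sq_addConvolution]
  exact_mod_cast h

end Representations

section Popular

theorem sum_pow_three_mul_pow_four_le {ι : Type*} (s : Finset ι) (v w : ι → ℝ) :
    (∑ z ∈ s, v z ^ 3 * w z) ^ 4 ≤ (∑ z ∈ s, v z ^ 4) ^ 3 * ∑ z ∈ s, w z ^ 4 := by
  have houter : (∑ z ∈ s, v z ^ 3 * w z) ^ 2 ≤ (∑ z ∈ s, v z ^ 4) * ∑ z ∈ s, v z ^ 2 * w z ^ 2 :=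
    sum_sq_le_sum_mul_sum_of_sq_le_mul _ (fun _ _ ↦ by positivity) (fun _ _ ↦ by positivity)
      fun _ _ ↦ le_of_eq (by ring)
  have hinner : (∑ z ∈ s, v z ^ 2 * w z ^ 2) ^ 2 ≤ (∑ z ∈ s, v z ^ 4) * ∑ z ∈ s, w z ^ 4 :=
    sum_sq_le_sum_mul_sum_of_sq_le_mul _ (fun _ _ ↦ by positivity) (fun _ _ ↦ by positivity)
      fun _ _ ↦ le_of_eq (by ring)
  calc (∑ z ∈ s, v z ^ 3 * w z) ^ 4 = ((∑ z ∈ s, v z ^ 3 * w z) ^ 2) ^ 2 := by ring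
    _ ≤ ((∑ z ∈ s, v z ^ 4) * ∑ z ∈ s, v z ^ 2 * w z ^ 2) ^ 2 := by gcongr
    _ = (∑ z ∈ s, v z ^ 4) ^ 2 * (∑ z ∈ s, v z ^ 2 * w z ^ 2) ^ 2 := by ring
    _ ≤ (∑ z ∈ s, v z ^ 4) ^ 2 * ((∑ z ∈ s, v z ^ 4) * ∑ z ∈ s, w z ^ 4) := by gcongr
    _ = (∑ z ∈ s, v z ^ 4) ^ 3 * ∑ z ∈ s, w z ^ 4 := by ring

theorem sum_mul_card_filter_and {α β : Type*} (P : Finset α) (C : Finset β) (φ : α → α → ℝ)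
    (rel : α → β → Prop) [∀ x, DecidablePred (rel x)] :
    ∑ x ∈ P, ∑ y ∈ P, φ x y * #{c ∈ C | rel x c ∧ rel y c} =
      ∑ c ∈ C, ∑ x ∈ P with rel x c, ∑ y ∈ P with rel y c, φ x y := by
  have hcard (x y : α) : φ x y * #{c ∈ C | rel x c ∧ rel y c} =
      ∑ c ∈ C, if rel x c then if rel y c then φ x y else 0 else 0 := by
    simp_rw [mul_comm (φ x y), ← nsmul_eq_mul, ← sum_const, sum_filter, ite_and]
  simp_rw [hcard, sum_filter]
  rw [sum_comm (s := C)]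
  refine sum_congr rfl fun x _ ↦ ?_
  rw [sum_comm]
  simp_rw [sum_ite_irrel, sum_const_zero]

variable {G : Type*} [AddCommGroup G] [DecidableEq G]

theorem addConvolution_erase_le (S C : Finset G) (b x : G) :
    (S.erase b).addConvolution C x ≤ S.addConvolution C x :=
  card_le_card (filter_subset_filter _ (product_subset_product_left (erase_subset b S)))

theorem addConvolution_erase_lt {S C : Finset G} {b c : G} (hb : b ∈ S) (hc : c ∈ C) :
    (S.erase b).addConvolution C (b + c) < S.addConvolution C (b + c) := by
  refine card_lt_card <| (ssubset_iff_of_subset <| filter_subset_filter _ <|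
    product_subset_product_left (erase_subset b S)).2 ⟨(b, c), ?_, ?_⟩ <;> simp [hb, hc]

theorem card_filter_addConvolution_lt_le_sum_sub_min {A S C : Finset G} (hS : S ⊆ A) {b : G}
    (hb : b ∈ S) (Δ : ℝ) :
    (#{c ∈ C | (S.addConvolution C (b + c) : ℝ) < Δ} : ℝ) ≤
      ∑ x ∈ A + C, (min (S.addConvolution C x : ℝ) Δ -
        min ((S.erase b).addConvolution C x : ℝ) Δ) := by
  set bad : Finset G := {c ∈ C | (S.addConvolution C (b + c) : ℝ) < Δ}
  have hmono (x : G) : ((S.erase b).addConvolution C x : ℝ) ≤ S.addConvolution C x := by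
    exact_mod_cast addConvolution_erase_le S C b x
  calc (#bad : ℝ) = ∑ x ∈ bad.image (b + ·), 1 := by
        rw [sum_const, card_image_of_injective _ (add_right_injective b), nsmul_one]
    _ ≤ ∑ x ∈ bad.image (b + ·), (min (S.addConvolution C x : ℝ) Δ -
          min ((S.erase b).addConvolution C x : ℝ) Δ) := by
        refine sum_le_sum fun x hx ↦ ?_
        obtain ⟨c, hc, rfl⟩ := mem_image.1 hx
        obtain ⟨hcC, hcΔ⟩ := mem_filter.1 hc
        have hlt : ((S.erase b).addConvolution C (b + c) : ℝ) + 1 ≤ S.addConvolution C (b + c) := by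
          exact_mod_cast addConvolution_erase_lt hb hcC
        rw [min_eq_left hcΔ.le, min_eq_left (by linarith)]
        linarith
    _ ≤ _ := by
        refine sum_le_sum_of_subset_of_nonneg ?_ fun x _ _ ↦
          sub_nonneg.2 (min_le_min_right Δ (hmono x))
        rw [image_subset_iff]
        exact fun c hc ↦ add_mem_add (hS hb) (mem_filter.1 hc).1

-- Minimise the potential `∑ min(r, Δ) - #C / 4 * #S`: removing an element `b` violating the
-- conclusion would decrease it.
theorem exists_subset_forall_card_filter_addConvolution_lt_le (A : Finset G) {C : Finset G}
    (hC : C.Nonempty) {Δ : ℝ} (hΔ₀ : 0 ≤ Δ) (hΔ : Δ * (8 * #(A + C)) ≤ #A * #C) :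
    ∃ S ⊆ A, (#A : ℝ) ≤ 2 * #S ∧
      ∀ b ∈ S, (#{c ∈ C | (S.addConvolution C (b + c) : ℝ) < Δ} : ℝ) ≤ #C / 4 := by
  let potential : Finset G → ℝ := fun S ↦
    ∑ x ∈ A + C, min (S.addConvolution C x : ℝ) Δ - (#C : ℝ) / 4 * #S
  obtain ⟨S, hSA, hmin⟩ := exists_min_image A.powerset potential ⟨A, mem_powerset_self A⟩
  replace hSA : S ⊆ A := mem_powerset.1 hSA
  refine ⟨S, hSA, ?_, fun b hb ↦ ?_⟩
  · have hle : potential S ≤ potential A := hmin A (mem_powerset_self A)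
    have hA : ∑ x ∈ A + C, min (A.addConvolution C x : ℝ) Δ ≤ #(A + C) * Δ := by
      rw [← nsmul_eq_mul]
      exact sum_le_card_nsmul _ _ _ fun x _ ↦ min_le_right _ _
    have hS : 0 ≤ ∑ x ∈ A + C, min (S.addConvolution C x : ℝ) Δ :=
      sum_nonneg fun x _ ↦ le_min (Nat.cast_nonneg _) hΔ₀
    have hC₀ : (0 : ℝ) < #C := by exact_mod_cast hC.card_pos
    simp only [potential] at hle
    refine le_of_mul_le_mul_left ?_ hC₀
    linarith
  · have hle : potential S ≤ potential (S.erase b) :=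
      hmin (S.erase b) (mem_powerset.2 ((erase_subset b S).trans hSA))
    have hcard : (#(S.erase b) : ℝ) = #S - 1 := by
      rw [card_erase_of_mem hb, Nat.cast_pred (card_pos.2 ⟨b, hb⟩)]
    have hbad := card_filter_addConvolution_lt_le_sum_sub_min (C := C) hSA hb Δ
    rw [sum_sub_distrib] at hbad
    simp only [potential, hcard] at hle
    linarith

variable [Fintype G] {A C P : Finset G} {Δ : ℝ}

theorem sq_mul_sum_diffCount_sub_le (hΔ : 0 ≤ Δ) (hP : ∀ x ∈ P, Δ ≤ A.addConvolution C x) :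
    Δ ^ 2 * ∑ x ∈ P, ∑ y ∈ P, (diffCount A (x - y) : ℝ) ≤
      ∑ q, (∑ c ∈ C, (diffCount A (q - c) : ℝ)) ^ 2 := by
  have hsum : ∑ x ∈ P, ∑ y ∈ P, (diffCount A (x - y) : ℝ) =
      ∑ q, (P.addConvolution (-A) q : ℝ) ^ 2 := by
    rw [sum_sq_addConvolution, ← sum_diffCount_mul P fun z ↦ (diffCount A z : ℝ)]
    simp_rw [diffCount_neg_left, mul_comm]
  have hcount (q : G) : P.addConvolution (-A) q = #{a ∈ A | q + a ∈ P} := by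
    rw [addConvolution_eq_card_filter]
    exact card_nbij' Neg.neg Neg.neg (by simp +contextual [Set.MapsTo, sub_eq_add_neg])
      (by simp [Set.MapsTo]) (by simp [Set.LeftInvOn]) (by simp [Set.LeftInvOn])
  rw [hsum, mul_sum]
  refine sum_le_sum fun q _ ↦ ?_
  rw [← mul_pow]
  refine pow_le_pow_left₀ (by positivity) ?_ 2
  calc Δ * P.addConvolution (-A) q = ∑ a ∈ A with q + a ∈ P, Δ := by
        rw [hcount, sum_const, nsmul_eq_mul, mul_comm]
    _ ≤ ∑ a ∈ A with q + a ∈ P, (A.addConvolution C (q + a) : ℝ) :=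
        sum_le_sum fun a ha ↦ hP _ (mem_filter.1 ha).2
    _ ≤ ∑ a ∈ A, (A.addConvolution C (q + a) : ℝ) :=
        sum_le_sum_of_subset_of_nonneg (filter_subset _ _) fun _ _ _ ↦ Nat.cast_nonneg _
    _ = ∑ c ∈ C, (diffCount A (q - c) : ℝ) := by
        exact_mod_cast (sum_diffCount_sub_eq_sum_addConvolution A C q).symm

omit [Fintype G] in
theorem sum_mul_addConvolution_overlap (A C P : Finset G) (u : G → ℝ) :
    ∑ x ∈ P, ∑ y ∈ P, u (x - y) * (overlap A (x - y)).addConvolution C y =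
      ∑ a ∈ A, ∑ b ∈ A, u (a - b) * #{c ∈ C | a + c ∈ P ∧ b + c ∈ P} := by
  simp_rw [addConvolution_overlap_sub]
  rw [sum_mul_card_filter_and P C (fun x y ↦ u (x - y)) fun x c ↦ x - c ∈ A,
    sum_mul_card_filter_and A C (fun a b ↦ u (a - b)) fun a c ↦ a + c ∈ P]
  refine sum_congr rfl fun c _ ↦ ?_
  rw [sum_filter_sub_mem]
  refine sum_congr rfl fun a _ ↦ ?_
  rw [sum_filter_sub_mem]
  simp_rw [add_sub_add_right_eq_sub]

omit [Fintype G] in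
theorem card_div_two_le_card_filter_mem_and_mem {a b : G}
    (ha : (#{c ∈ C | a + c ∉ P} : ℝ) ≤ #C / 4) (hb : (#{c ∈ C | b + c ∉ P} : ℝ) ≤ #C / 4) :
    (#C : ℝ) / 2 ≤ #{c ∈ C | a + c ∈ P ∧ b + c ∈ P} := by
  have hcover : C ⊆ {c ∈ C | a + c ∈ P ∧ b + c ∈ P} ∪
      ({c ∈ C | a + c ∉ P} ∪ {c ∈ C | b + c ∉ P}) := fun c hc ↦ by
    simp only [mem_union, mem_filter, hc]
    tauto
  have hcard : (#C : ℝ) ≤ #{c ∈ C | a + c ∈ P ∧ b + c ∈ P} +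
      (#{c ∈ C | a + c ∉ P} + #{c ∈ C | b + c ∉ P}) := by
    exact_mod_cast (card_le_card hcover).trans <| (card_union_le _ _).trans <|
      Nat.add_le_add_left (card_union_le _ _) _
  linarith

variable {u : G → ℝ}

theorem card_div_two_mul_sum_pow_four_le (hu₀ : ∀ z, 0 ≤ u z) (hu : ∀ z, u z ^ 3 = diffCount A z)
    (hP : ∀ a ∈ A, (#{c ∈ C | a + c ∉ P} : ℝ) ≤ #C / 4) :
    #C / 2 * ∑ z, u z ^ 4 ≤
      ∑ x ∈ P, ∑ y ∈ P, u (x - y) * (overlap A (x - y)).addConvolution C y :=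
  calc #C / 2 * ∑ z, u z ^ 4 = ∑ a ∈ A, ∑ b ∈ A, u (a - b) * (#C / 2) := by
        simp_rw [← sum_mul, ← sum_diffCount_mul, ← hu, ← pow_succ, mul_comm]
    _ ≤ ∑ a ∈ A, ∑ b ∈ A, u (a - b) * #{c ∈ C | a + c ∈ P ∧ b + c ∈ P} :=
        sum_le_sum fun a ha ↦ sum_le_sum fun b hb ↦ mul_le_mul_of_nonneg_left
          (card_div_two_le_card_filter_mem_and_mem (hP a ha) (hP b hb)) (hu₀ _)
    _ = _ := (sum_mul_addConvolution_overlap A C P u).symm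

omit [Fintype G] in
theorem sq_sum_mul_addConvolution_overlap_le (A C P : Finset G) (hu₀ : ∀ z, 0 ≤ u z)
    (hu : ∀ z, u z ^ 3 = diffCount A z) :
    (∑ x ∈ P, ∑ y ∈ P, u (x - y) * (overlap A (x - y)).addConvolution C y) ^ 2 ≤
      (∑ x ∈ P, ∑ y ∈ P, (diffCount A (x - y) : ℝ)) *
        ∑ x ∈ P, ∑ y ∈ P, (u (x - y))⁻¹ * ((overlap A (x - y)).addConvolution C y : ℝ) ^ 2 := by
  simp_rw [← sum_product' P P]
  refine sum_sq_le_sum_mul_sum_of_sq_le_mul _ (fun _ _ ↦ Nat.cast_nonneg _)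
    (fun _ _ ↦ mul_nonneg (inv_nonneg.2 (hu₀ _)) (sq_nonneg _)) fun xy _ ↦ le_of_eq ?_
  obtain h₀ | h₀ := eq_or_ne (u (xy.1 - xy.2)) 0
  · simp [h₀]
  · rw [← hu]
    field_simp

theorem sum_mul_sq_addConvolution_overlap_le (A C P : Finset G) {w : G → ℝ} (hw : ∀ z, 0 ≤ w z) :
    ∑ x ∈ P, ∑ y ∈ P, w (x - y) * ((overlap A (x - y)).addConvolution C y : ℝ) ^ 2 ≤
      ∑ z, ∑ t, w z * diffCount C t * diffCount (overlap A z) t :=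
  calc ∑ x ∈ P, ∑ y ∈ P, w (x - y) * ((overlap A (x - y)).addConvolution C y : ℝ) ^ 2
      ≤ ∑ x, ∑ y, w (x - y) * ((overlap A (x - y)).addConvolution C y : ℝ) ^ 2 := by
        have nonneg (x y : G) :
            0 ≤ w (x - y) * ((overlap A (x - y)).addConvolution C y : ℝ) ^ 2 :=
          mul_nonneg (hw _) (sq_nonneg _)
        refine (sum_le_sum fun x _ ↦ sum_le_univ_sum_of_nonneg (nonneg x)).trans ?_
        exact sum_le_univ_sum_of_nonneg fun x ↦ sum_nonneg fun y _ ↦ nonneg x y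
    _ = ∑ y, ∑ z, w z * ((overlap A z).addConvolution C y : ℝ) ^ 2 := by
        rw [sum_comm]
        exact sum_congr rfl fun y _ ↦ (Equiv.subRight y).sum_comp
          fun z ↦ w z * ((overlap A z).addConvolution C y : ℝ) ^ 2
    _ = ∑ z, ∑ t, w z * diffCount C t * diffCount (overlap A z) t := by
        rw [sum_comm]
        simp_rw [← mul_sum, sum_sq_addConvolution, mul_assoc, ← mul_sum]

theorem sum_sum_mul_diffCount_overlap (A : Finset G) (φ : G → ℝ) :
    ∑ z, ∑ t, φ z * (diffCount (overlap A z) t : ℝ) = ∑ z, φ z * (diffCount A z : ℝ) ^ 2 := by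
  simp_rw [← mul_sum, sum_diffCount, diffCount]

theorem sq_sum_inv_mul_diffCount_overlap_le (hu : ∀ z, u z ^ 3 = diffCount A z)
    (hAC : ∀ z, diffCount A z ≤ diffCount C z) :
    (∑ z, ∑ t, (u z)⁻¹ * diffCount C t * diffCount (overlap A z) t) ^ 2 ≤
      (∑ z, u z ^ 4) * ∑ t, (diffCount C t : ℝ) ^ 4 :=
  calc (∑ z, ∑ t, (u z)⁻¹ * diffCount C t * diffCount (overlap A z) t) ^ 2
      ≤ (∑ z, ∑ t, (u z)⁻¹ ^ 2 * (diffCount (overlap A z) t : ℝ)) *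
          ∑ z, ∑ t, (diffCount C t : ℝ) ^ 2 * (diffCount (overlap A z) t : ℝ) := by
        simp_rw [← sum_product' univ univ]
        exact sum_sq_le_sum_mul_sum_of_sq_le_mul _ (fun _ _ ↦ by positivity)
          (fun _ _ ↦ by positivity) fun _ _ ↦ le_of_eq (by ring)
    _ = (∑ z, (u z)⁻¹ ^ 2 * (diffCount A z : ℝ) ^ 2) *
          ∑ t, (diffCount C t : ℝ) ^ 2 * (diffCount A t : ℝ) ^ 2 := by
        rw [sum_comm (f := fun z t ↦ (diffCount C t : ℝ) ^ 2 * (diffCount (overlap A z) t : ℝ))]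
        simp_rw [diffCount_overlap_comm A _, sum_sum_mul_diffCount_overlap]
    _ ≤ (∑ z, u z ^ 4) * ∑ t, (diffCount C t : ℝ) ^ 4 := by
        gcongr with z _ t _
        · rw [← hu]
          obtain h₀ | h₀ := eq_or_ne (u z) 0
          · simp [h₀]
          · exact le_of_eq (by field_simp)
        · rw [show 4 = 2 + 2 from rfl, pow_add]
          gcongr
          exact_mod_cast hAC t

theorem pow_mul_sum_pow_four_le (hA : A.Nonempty) (hΔ : 0 ≤ Δ) (hu₀ : ∀ z, 0 ≤ u z)
    (hu : ∀ z, u z ^ 3 = diffCount A z) (hAC : ∀ z, diffCount A z ≤ diffCount C z)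
    (hP : ∀ x ∈ P, Δ ≤ A.addConvolution C x)
    (hPC : ∀ a ∈ A, (#{c ∈ C | a + c ∉ P} : ℝ) ≤ #C / 4) :
    Δ ^ 4 * #C ^ 4 * (∑ z, u z ^ 4) ^ 3 ≤
      16 * (∑ q, (∑ c ∈ C, (diffCount A (q - c) : ℝ)) ^ 2) ^ 2 *
        ∑ z, (diffCount C z : ℝ) ^ 4 := by
  set E := ∑ z, u z ^ 4
  set N := ∑ x ∈ P, ∑ y ∈ P, (diffCount A (x - y) : ℝ)
  set W := ∑ q, (∑ c ∈ C, (diffCount A (q - c) : ℝ)) ^ 2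
  set Q := ∑ z, (diffCount C z : ℝ) ^ 4
  set V := ∑ z, ∑ t, (u z)⁻¹ * diffCount C t * diffCount (overlap A z) t
  have hE : 0 < E := by
    have hz : 0 < u 0 ^ 3 := by
      rw [hu, diffCount_zero]
      exact_mod_cast hA.card_pos
    refine sum_pos' (fun z _ ↦ pow_nonneg (hu₀ z) 4) ⟨0, mem_univ 0, pow_pos ?_ 4⟩
    exact (hu₀ 0).lt_of_ne fun h₀ ↦ by simp [← h₀] at hz
  have hT : (#C / 2 * E) ^ 2 ≤ N * V :=
    calc (#C / 2 * E) ^ 2 ≤ _ :=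
          pow_le_pow_left₀ (by positivity) (card_div_two_mul_sum_pow_four_le hu₀ hu hPC) 2
      _ ≤ N * _ := sq_sum_mul_addConvolution_overlap_le A C P hu₀ hu
      _ ≤ N * V := by
          gcongr
          exact sum_mul_sq_addConvolution_overlap_le A C P fun z ↦ inv_nonneg.2 (hu₀ z)
  have hN : Δ ^ 2 * N ≤ W := sq_mul_sum_diffCount_sub_le hΔ hP
  have hV : V ^ 2 ≤ E * Q := sq_sum_inv_mul_diffCount_overlap_le hu hAC
  refine le_of_mul_le_mul_right ?_ hE
  calc Δ ^ 4 * #C ^ 4 * E ^ 3 * E = 16 * (Δ ^ 2 * (#C / 2 * E) ^ 2) ^ 2 := by ring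
    _ ≤ 16 * (Δ ^ 2 * (N * V)) ^ 2 := by gcongr
    _ = 16 * (Δ ^ 2 * N) ^ 2 * V ^ 2 := by ring
    _ ≤ 16 * W ^ 2 * (E * Q) := by gcongr
    _ = 16 * W ^ 2 * Q * E := by ring

theorem card_mul_card_pow_eight_le (hu : ∀ z, u z ^ 3 = diffCount A z) :
    ((#A : ℝ) * #C) ^ 8 ≤
      #(A + C) ^ 4 * (∑ z, u z ^ 4) ^ 3 * ∑ z, (diffCount C z : ℝ) ^ 4 := by
  have h := sq_card_mul_card_le_card_add_mul_sum_diffCount A C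
  simp_rw [mul_comm ((diffCount C _ : ℕ) : ℝ), ← hu] at h
  calc ((#A : ℝ) * #C) ^ 8 = (((#A * #C : ℕ) : ℝ) ^ 2) ^ 4 := by push_cast; ring
    _ ≤ (#(A + C) * ∑ z, u z ^ 3 * (diffCount C z : ℝ)) ^ 4 := by gcongr
    _ = #(A + C) ^ 4 * (∑ z, u z ^ 3 * (diffCount C z : ℝ)) ^ 4 := mul_pow _ _ _
    _ ≤ #(A + C) ^ 4 * ((∑ z, u z ^ 4) ^ 3 * ∑ z, (diffCount C z : ℝ) ^ 4) := by
        gcongr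
        exact sum_pow_three_mul_pow_four_le univ u _
    _ = _ := (mul_assoc _ _ _).symm

end Popular

section Configuration

/-- The number of dyadic scales below `n ^ 5`, which bounds every logarithmic loss of the argument
for a set of `n` elements. -/
noncomputable def logFactor (n : ℕ) : ℝ := 1 + Nat.log 2 (n ^ 5)

/-- The dependence of the incidence bounds on the multiplicity `m`. -/
noncomputable def multiplicityFactor (m : ℕ) : ℝ := (16001 + m) ^ 2 * m

theorem one_le_logFactor (n : ℕ) : 1 ≤ logFactor n :=
  le_add_of_nonneg_right (Nat.cast_nonneg _)

theorem one_add_log_le_logFactor {k n : ℕ} (hk : k ≤ n ^ 5) :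
    (1 : ℝ) + Nat.log 2 k ≤ logFactor n := by
  unfold logFactor
  gcongr

/-- A set `A` of the size allowed by `p`, a set `X` of representatives of a proportion at least
`1 / m` of `A` on which `g` is injective and nonvanishing, and a set `F` of comparable size holding
the values `g x * (h x + y)`. The set `X` need not be contained in `A`, so that configurations are
closed under `A ↦ -A`. -/
structure Configuration {p : ℕ} (g h : ZMod p → ZMod p) (A X F : Finset (ZMod p)) (m : ℕ) :
    Prop where
  nonempty : A.Nonempty
  card_X_le : #X ≤ #A
  card_le_mul_card_X : #A ≤ m * #X
  injOn : Set.InjOn g X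
  ne_zero : ∀ x ∈ X, g x ≠ 0
  mem : ∀ x ∈ X, ∀ y ∈ A, g x * (h x + y) ∈ F
  card_le_card_F : #A ≤ #F
  card_F_le : #F ≤ #A ^ 2
  card_pow_le : #A ^ 5 ≤ p ^ 3

namespace Configuration

variable {p : ℕ} {g h : ZMod p → ZMod p} {A X F : Finset (ZMod p)} {m : ℕ}

theorem neg (H : Configuration g h A X F m) : Configuration (-g) (-h) (-A) X F m where
  nonempty := H.nonempty.neg
  card_X_le := by rw [card_neg]; exact H.card_X_le
  card_le_mul_card_X := by rw [card_neg]; exact H.card_le_mul_card_X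
  injOn := neg_injective.comp_injOn H.injOn
  ne_zero x hx := neg_ne_zero.2 (H.ne_zero x hx)
  mem x hx y hy := by
    convert H.mem x hx (-y) (mem_neg'.1 hy) using 1
    simp only [Pi.neg_apply]
    ring
  card_le_card_F := by rw [card_neg]; exact H.card_le_card_F
  card_F_le := by rw [card_neg]; exact H.card_F_le
  card_pow_le := by rw [card_neg]; exact H.card_pow_le

theorem card_X_pos (H : Configuration g h A X F m) : 0 < #X :=
  Nat.pos_of_mul_pos_left (H.nonempty.card_pos.trans_le H.card_le_mul_card_X)

theorem one_le_m (H : Configuration g h A X F m) : 1 ≤ m :=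
  Nat.pos_of_mul_pos_right (H.nonempty.card_pos.trans_le H.card_le_mul_card_X)

theorem one_le_card (H : Configuration g h A X F m) : (1 : ℝ) ≤ #A := by
  exact_mod_cast H.nonempty.card_pos

theorem card_le_mul_card_X_real (H : Configuration g h A X F m) : (#A : ℝ) ≤ m * #X := by
  exact_mod_cast H.card_le_mul_card_X

theorem le_multiplicityFactor (H : Configuration g h A X F m) :
    16 ≤ multiplicityFactor m := by
  have hm : (1 : ℝ) ≤ m := by exact_mod_cast H.one_le_m
  calc (16 : ℝ) ≤ (16001 + 1) ^ 2 * 1 := by norm_num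
    _ ≤ multiplicityFactor m := by unfold multiplicityFactor; gcongr

variable [Fact p.Prime]

theorem le_or_card_mul_pow_four_le (H : Configuration g h A X F m) {B S T : Finset (ZMod p)}
    {u : ZMod p → ZMod p} {v : ZMod p → ZMod p → ZMod p} (hu : Set.InjOn u X)
    (hv : ∀ x ∈ X, Set.InjOn (v x) B) (hC : (#S + #X : ℝ) ≤ (m + 1) * √(#X * #B * #S))
    (hlog : #X * #B * #S ≤ #A ^ 5) {n : ℕ}
    (hn : ∀ x ∈ X, n ≤ ∑ b ∈ B, #{s ∈ S | u x * s + v x b ∈ T}) :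
    (n : ℝ) ≤ 2 * (#B * #S * #T / p) ∨
      #A * (n : ℝ) ^ 4 ≤
        multiplicityFactor m * logFactor #A ^ 2 * #T ^ 2 * (#B * #S) ^ 3 := by
  have hX : (0 : ℝ) < #X := by exact_mod_cast H.card_X_pos
  have hsum : #X * n ≤ ∑ x ∈ X, ∑ b ∈ B, #{s ∈ S | u x * s + v x b ∈ T} :=
    card_nsmul_le_sum _ _ _ hn
  have key := le_or_pow_four_le_of_le_sum_card hu hv (by positivity) hC hsum
  rw [Nat.cast_mul] at key
  refine key.imp (fun hlin ↦ ?_) fun hpow ↦ ?_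
  · refine le_of_mul_le_mul_left (hlin.trans_eq ?_) hX
    ring
  · have hX₃ : #X * (n : ℝ) ^ 4 ≤
        (16001 + m) ^ 2 * logFactor #A ^ 2 * #T ^ 2 * (#B * #S) ^ 3 := by
      refine le_of_mul_le_mul_left ?_ (pow_pos hX 3)
      calc (#X : ℝ) ^ 3 * (#X * (n : ℝ) ^ 4) = (#X * n) ^ 4 := by ring
        _ ≤ (16000 + (m + 1)) ^ 2 * logFactor #A ^ 2 * #T ^ 2 * (#X * #B * #S) ^ 3 := by
            refine hpow.trans ?_
            gcongr
            exact one_add_log_le_logFactor hlog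
        _ = #X ^ 3 * ((16001 + m) ^ 2 * logFactor #A ^ 2 * #T ^ 2 * (#B * #S) ^ 3) := by ring
    calc #A * (n : ℝ) ^ 4 ≤ m * #X * (n : ℝ) ^ 4 := by
          gcongr
          exact H.card_le_mul_card_X_real
      _ = m * (#X * (n : ℝ) ^ 4) := mul_assoc _ _ _
      _ ≤ m * ((16001 + m) ^ 2 * logFactor #A ^ 2 * #T ^ 2 * (#B * #S) ^ 3) := by gcongr
      _ = _ := by unfold multiplicityFactor; ring

section PopularDifferences

variable {S : Finset (ZMod p)} {τ : ℕ}

theorem card_mul_le_sum_card_filter (H : Configuration g h A X F m)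
    (hS : ∀ z ∈ S, τ ≤ diffCount A z) {x : ZMod p} (hx : x ∈ X) :
    #S * τ ≤ ∑ b ∈ A, #{s ∈ S | g x * s + g x * (h x + b) ∈ F} :=
  calc #S * τ ≤ ∑ s ∈ S, diffCount A s := card_nsmul_le_sum _ _ _ hS
    _ = ∑ b ∈ A, #{s ∈ S | b + s ∈ A} := by
        simp_rw [diffCount, overlap, card_filter]
        exact sum_comm
    _ ≤ _ := by
        gcongr with b _ s
        intro hb
        convert H.mem x hx _ hb using 1
        ring

omit [Fact p.Prime] in
theorem card_add_card_le_mul_sqrt (H : Configuration g h A X F m) (hS : S.Nonempty)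
    (hSA : #S ≤ #A ^ 2) : (#S + #X : ℝ) ≤ (m + 1) * √(#X * #A * #S) := by
  have hS₁ : (1 : ℝ) ≤ #S := by exact_mod_cast hS.card_pos
  have hXA : (#X : ℝ) ≤ #A := by exact_mod_cast H.card_X_le
  have hm : (1 : ℝ) ≤ m := by exact_mod_cast H.one_le_m
  have hleft : (#S : ℝ) ≤ m * √(#X * #A * #S) := by
    rw [← Real.sqrt_sq (Nat.cast_nonneg m), ← Real.sqrt_mul (by positivity)]
    apply Real.le_sqrt_of_sq_le
    calc (#S : ℝ) ^ 2 = #S * #S := sq _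
      _ ≤ #A ^ 2 * #S := by
          gcongr
          exact_mod_cast hSA
      _ = 1 * (#A * (#A * #S)) := by ring
      _ ≤ m * (m * #X * (#A * #S)) := by
          gcongr
          exact H.card_le_mul_card_X_real
      _ = m ^ 2 * (#X * #A * #S) := by ring
  have hright : (#X : ℝ) ≤ √(#X * #A * #S) := by
    apply Real.le_sqrt_of_sq_le
    calc (#X : ℝ) ^ 2 = #X * #X * 1 := by ring
      _ ≤ #X * #A * #S := by gcongr
  linarith

omit [Fact p.Prime] in
theorem mul_pow_four_le_of_le_div (H : Configuration g h A X F m) {s t : ℝ} (ht : 0 ≤ t)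
    (hst : s * t ≤ #A ^ 2) (hlin : t ≤ 2 * (#A * #F / p)) :
    s * t ^ 4 ≤ multiplicityFactor m * logFactor #A ^ 2 * #F ^ 2 * #A ^ 2 := by
  have hone : (#A ^ 3 * #F / p ^ 3 : ℝ) ≤ 1 := by
    refine div_le_one_of_le₀ ?_ (by positivity)
    calc (#A ^ 3 * #F : ℝ) ≤ #A ^ 3 * #A ^ 2 := by
          gcongr
          exact_mod_cast H.card_F_le
      _ = #A ^ 5 := by ring
      _ ≤ p ^ 3 := by exact_mod_cast H.card_pow_le
  calc s * t ^ 4 = s * t * t ^ 3 := by ring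
    _ ≤ (#A : ℝ) ^ 2 * (2 * (#A * #F / p)) ^ 3 := by gcongr
    _ = 8 * 1 ^ 2 * #F ^ 2 * #A ^ 2 * (#A ^ 3 * #F / p ^ 3) := by ring
    _ ≤ 16 * logFactor #A ^ 2 * #F ^ 2 * #A ^ 2 * 1 := by
        gcongr
        · norm_num
        · exact one_le_logFactor _
    _ ≤ multiplicityFactor m * logFactor #A ^ 2 * #F ^ 2 * #A ^ 2 := by
        rw [mul_one]
        gcongr
        exact H.le_multiplicityFactor

theorem card_mul_pow_four_le (H : Configuration g h A X F m) (hτ : 1 ≤ τ)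
    (hS : ∀ z ∈ S, τ ≤ diffCount A z) :
    (#S : ℝ) * τ ^ 4 ≤ multiplicityFactor m * logFactor #A ^ 2 * #F ^ 2 * #A ^ 2 := by
  have hA : (1 : ℝ) ≤ #A := H.one_le_card
  obtain rfl | hS₀ := S.eq_empty_or_nonempty
  · have := H.le_multiplicityFactor
    rw [card_empty, Nat.cast_zero, zero_mul]
    positivity
  have hS₁ : (0 : ℝ) < #S := by exact_mod_cast hS₀.card_pos
  have hSτ : (#S : ℝ) * τ ≤ #A ^ 2 := card_mul_le_sq_card_of_le_diffCount hS
  have hSA : #S ≤ #A ^ 2 := by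
    have : #S * τ ≤ #A ^ 2 := by exact_mod_cast hSτ
    nlinarith
  have hlog : #X * #A * #S ≤ #A ^ 5 :=
    calc #X * #A * #S ≤ #A * #A * #A ^ 2 :=
          Nat.mul_le_mul (Nat.mul_le_mul_right _ H.card_X_le) hSA
      _ = #A ^ 4 := by ring
      _ ≤ #A ^ 5 := Nat.pow_le_pow_right H.nonempty.card_pos (by norm_num)
  have hinj : ∀ x ∈ X, Set.InjOn (fun b ↦ g x * (h x + b)) (A : Set (ZMod p)) := fun x hx ↦
    ((mul_right_injective₀ (H.ne_zero x hx)).comp (add_right_injective _)).injOn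
  obtain hlin | hpow := H.le_or_card_mul_pow_four_le H.injOn hinj
    (H.card_add_card_le_mul_sqrt hS₀ hSA) hlog fun x hx ↦ H.card_mul_le_sum_card_filter hS hx
  · push_cast at hlin
    refine H.mul_pow_four_le_of_le_div (Nat.cast_nonneg τ) hSτ ?_
    refine le_of_mul_le_mul_left (hlin.trans_eq ?_) hS₁
    ring
  · push_cast at hpow
    refine le_of_mul_le_mul_left ?_ (by positivity : (0 : ℝ) < #A * #S ^ 3)
    calc (#A * #S ^ 3 * (#S * τ ^ 4) : ℝ) = #A * (#S * τ) ^ 4 := by ring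
      _ ≤ _ := hpow
      _ = _ := by ring

theorem sum_diffCount_pow_four_le (H : Configuration g h A X F m) :
    ∑ z, (diffCount A z : ℝ) ^ 4 ≤
      16 * multiplicityFactor m * logFactor #A ^ 3 * #F ^ 2 * #A ^ 2 := by
  have hm := H.le_multiplicityFactor
  refine (sum_pow_le_of_card_filter_mul_pow_le four_ne_zero (fun z _ ↦ diffCount_le_card A z)
    fun τ hτ ↦ H.card_mul_pow_four_le hτ fun z hz ↦ (mem_filter.1 hz).2).trans ?_
  calc _ ≤ 2 ^ 4 * (multiplicityFactor m * logFactor #A ^ 2 * #F ^ 2 * #A ^ 2) *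
          logFactor #A := by
        gcongr
        exact one_add_log_le_logFactor (Nat.le_self_pow (by norm_num) _)
    _ = _ := by ring

end PopularDifferences

section PopularSums

variable {B Q : Finset (ZMod p)} {ρ : ℕ}

theorem card_mul_le_sum_card_filter_inv (H : Configuration g h A X F m)
    (hQ : ∀ q ∈ Q, ρ ≤ B.addConvolution A q) {x : ZMod p} (hx : x ∈ X) :
    #Q * ρ ≤ ∑ b ∈ B, #{s ∈ F | (g x)⁻¹ * s + (b - h x) ∈ Q} :=
  calc #Q * ρ ≤ ∑ q ∈ Q, B.addConvolution A q := card_nsmul_le_sum _ _ _ hQ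
    _ = ∑ b ∈ B, #{c ∈ A | b + c ∈ Q} := sum_addConvolution B A Q
    _ ≤ _ := by
        refine sum_le_sum fun b _ ↦ card_le_card_of_injOn (fun c ↦ g x * (h x + c)) (fun c hc ↦ ?_)
          ((mul_right_injective₀ (H.ne_zero x hx)).comp (add_right_injective _)).injOn
        obtain ⟨hcA, hcQ⟩ := mem_filter.1 hc
        refine mem_filter.2 ⟨H.mem x hx c hcA, ?_⟩
        rw [inv_mul_cancel_left₀ (H.ne_zero x hx)]
        convert hcQ using 1
        ring

theorem card_mul_le_card_mul_card (hQ : ∀ q ∈ Q, ρ ≤ B.addConvolution A q) :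
    #Q * ρ ≤ #A * #B :=
  calc #Q * ρ ≤ ∑ q ∈ Q, B.addConvolution A q := card_nsmul_le_sum _ _ _ hQ
    _ = ∑ b ∈ B, #{c ∈ A | b + c ∈ Q} := sum_addConvolution B A Q
    _ ≤ #B * #A := sum_le_card_nsmul _ _ _ fun _ _ ↦ card_filter_le _ _
    _ = #A * #B := mul_comm _ _

omit [Fact p.Prime] in
theorem mul_sq_le_of_card_mul_card_le (H : Configuration g h A X F m)
    (hF : (#X * #B : ℝ) ≤ #F) {y : ℝ} (hy₀ : 0 ≤ y) (hy : y ≤ #A * #B ^ 2) :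
    #A * y ^ 2 ≤ multiplicityFactor m * logFactor #A ^ 2 * #B ^ 3 * #F ^ 3 := by
  have hAF : (#A : ℝ) ≤ #F := by exact_mod_cast H.card_le_card_F
  calc #A * y ^ 2 ≤ #A * (#A * #B ^ 2) ^ 2 := by gcongr
    _ = (#A : ℝ) ^ 2 * #B ^ 3 * (#A * #B) := by ring
    _ ≤ #F ^ 2 * #B ^ 3 * (m * #X * #B) := by
        gcongr
        exact H.card_le_mul_card_X_real
    _ = (m : ℝ) * #F ^ 2 * #B ^ 3 * (#X * #B) := by ring
    _ ≤ m * #F ^ 2 * #B ^ 3 * #F := by gcongr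
    _ = (1 : ℝ) ^ 2 * m * 1 ^ 2 * #B ^ 3 * #F ^ 3 := by ring
    _ ≤ (16001 + m) ^ 2 * m * logFactor #A ^ 2 * #B ^ 3 * #F ^ 3 := by
        gcongr
        · linarith [m.cast_nonneg (α := ℝ)]
        · exact one_le_logFactor _

omit [Fact p.Prime] in
theorem card_F_add_card_X_le_mul_sqrt (H : Configuration g h A X F m)
    (hF : (#F : ℝ) ≤ #X * #B) : (#F + #X : ℝ) ≤ (m + 1) * √(#X * #B * #F) := by
  have hm : (1 : ℝ) ≤ m := by exact_mod_cast H.one_le_m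
  have hXF : (#X : ℝ) ≤ #F := by exact_mod_cast H.card_X_le.trans H.card_le_card_F
  have hle : (#F : ℝ) ≤ √(#X * #B * #F) := Real.le_sqrt_of_sq_le (by rw [sq]; gcongr)
  nlinarith

theorem card_mul_sq_le_or_le (H : Configuration g h A X F m) (hB : #B ≤ #A ^ 2)
    (hQ : ∀ q ∈ Q, ρ ≤ B.addConvolution A q) :
    #A * ((#Q : ℝ) * ρ ^ 2) ^ 2 ≤ multiplicityFactor m * logFactor #A ^ 2 * #B ^ 3 * #F ^ 3 ∨
      (#Q : ℝ) * ρ ^ 2 ≤ 2 * #A * #F * #B ^ 2 / p := by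
  obtain rfl | hQ₀ := Q.eq_empty_or_nonempty
  · right
    rw [card_empty, Nat.cast_zero, zero_mul]
    positivity
  have hQ₁ : (0 : ℝ) < #Q := by exact_mod_cast hQ₀.card_pos
  have hQρ : (#Q * ρ : ℝ) ≤ #A * #B := by exact_mod_cast card_mul_le_card_mul_card hQ
  have hρB : (ρ : ℝ) ≤ #B := by
    obtain ⟨q, hq⟩ := hQ₀
    exact_mod_cast (hQ q hq).trans addConvolution_le_card_left
  obtain hF | hF := le_total (#X * #B : ℝ) #F
  · left
    refine H.mul_sq_le_of_card_mul_card_le hF (by positivity) ?_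
    calc (#Q * ρ ^ 2 : ℝ) = #Q * ρ * ρ := by ring
      _ ≤ #A * #B * #B := by gcongr
      _ = #A * #B ^ 2 := by ring
  have hlog : #X * #B * #F ≤ #A ^ 5 :=
    calc #X * #B * #F ≤ #A * #A ^ 2 * #A ^ 2 :=
          Nat.mul_le_mul (Nat.mul_le_mul H.card_X_le hB) H.card_F_le
      _ = #A ^ 5 := by ring
  obtain hlin | hpow := H.le_or_card_mul_pow_four_le (u := fun x ↦ (g x)⁻¹)
    (v := fun x b ↦ b - h x) (inv_injective.comp_injOn H.injOn)
    (fun x _ ↦ sub_left_injective.injOn) (H.card_F_add_card_X_le_mul_sqrt hF) hlog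
    fun x hx ↦ H.card_mul_le_sum_card_filter_inv hQ hx
  · right
    have hρ : (ρ : ℝ) ≤ 2 * (#B * #F / p) := by
      push_cast at hlin
      refine le_of_mul_le_mul_left (hlin.trans_eq ?_) hQ₁
      ring
    calc (#Q * ρ ^ 2 : ℝ) = #Q * ρ * ρ := by ring
      _ ≤ #A * #B * (2 * (#B * #F / p)) := by gcongr
      _ = _ := by ring
  · left
    push_cast at hpow
    refine le_of_mul_le_mul_left ?_ (pow_pos hQ₁ 2)
    calc (#Q ^ 2 * (#A * (#Q * ρ ^ 2) ^ 2) : ℝ) = #A * (#Q * ρ) ^ 4 := by ring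
      _ ≤ _ := hpow
      _ = _ := by ring

theorem sum_sq_addConvolution_le (H : Configuration g h A X F m) (hB : #B ≤ #A ^ 2) :
    ∑ q, (B.addConvolution A q : ℝ) ^ 2 ≤
      4 * logFactor #A *
        (√(multiplicityFactor m * logFactor #A ^ 2 * #B ^ 3 * #F ^ 3 / #A) +
          2 * #A * #F * #B ^ 2 / p) := by
  have hA : (0 : ℝ) < #A := zero_lt_one.trans_le H.one_le_card
  have hlevel (ρ : ℕ) : (#{q | ρ ≤ B.addConvolution A q} : ℝ) * ρ ^ 2 ≤
      √(multiplicityFactor m * logFactor #A ^ 2 * #B ^ 3 * #F ^ 3 / #A) +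
        2 * #A * #F * #B ^ 2 / p := by
    obtain hsq | hlin := H.card_mul_sq_le_or_le hB
      (Q := {q | ρ ≤ B.addConvolution A q}) fun q hq ↦ (mem_filter.1 hq).2
    · refine le_add_of_le_of_nonneg (Real.le_sqrt_of_sq_le ?_) (by positivity)
      rwa [le_div_iff₀' hA]
    · exact le_add_of_nonneg_of_le (Real.sqrt_nonneg _) hlin
  refine (sum_pow_le_of_card_filter_mul_pow_le two_ne_zero
    (fun q _ ↦ addConvolution_le_card_right) fun ρ _ ↦ hlevel ρ).trans ?_
  rw [mul_right_comm]
  gcongr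
  · norm_num
  · exact one_add_log_le_logFactor (Nat.le_self_pow (by norm_num) _)

end PopularSums

section WeightedSums

variable {A' : Finset (ZMod p)}

theorem sum_diffCount_sub_le_sum_dyadic (hA' : #A' ≤ #A) (q : ZMod p) :
    ∑ c ∈ A, (diffCount A' (q - c) : ℝ) ≤
      ∑ j ∈ range (1 + Nat.log 2 #A),
        2 ^ (j + 1) * ((popularDifferences A' (2 ^ j)).addConvolution A q : ℝ) :=
  calc ∑ c ∈ A, (diffCount A' (q - c) : ℝ)
      ≤ ∑ c ∈ A, ∑ j ∈ range (1 + Nat.log 2 #A),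
          if 2 ^ j ≤ diffCount A' (q - c) then (2 : ℝ) ^ (j + 1) else 0 := by
        gcongr with c
        simpa only [pow_one] using
          pow_le_sum_dyadic one_ne_zero ((diffCount_le_card A' (q - c)).trans hA')
    _ = _ := by
        rw [sum_comm]
        simp_rw [addConvolution_eq_card_filter, popularDifferences, mem_filter_univ,
          ← sum_filter, sum_const, nsmul_eq_mul, mul_comm]

theorem two_pow_mul_card_popularDifferences_le (hA' : #A' ≤ #A) (j : ℕ) :
    (2 : ℝ) ^ j * #(popularDifferences A' (2 ^ j)) ≤ #A ^ 2 :=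
  calc (2 : ℝ) ^ j * #(popularDifferences A' (2 ^ j))
      = #(popularDifferences A' (2 ^ j)) * (2 ^ j : ℕ) := by push_cast; ring
    _ ≤ #A' ^ 2 := card_mul_le_sq_card_of_le_diffCount fun z hz ↦ (mem_filter.1 hz).2
    _ ≤ #A ^ 2 := by gcongr

theorem sq_mul_sum_sq_addConvolution_popularDifferences_le (H : Configuration g h A X F m)
    (hA' : #A' ≤ #A) {E : ℝ} {j : ℕ}
    (hE : 16 ^ j * (#(popularDifferences A' (2 ^ j)) : ℝ) ^ 3 ≤ E) :
    (2 ^ (j + 1)) ^ 2 * ∑ q, ((popularDifferences A' (2 ^ j)).addConvolution A q : ℝ) ^ 2 ≤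
      16 * logFactor #A *
        (√(multiplicityFactor m * logFactor #A ^ 2 * #F ^ 3 * E / #A) +
          2 * #A ^ 5 * #F / p) := by
  set B := popularDifferences A' (2 ^ j)
  have hl : 1 ≤ logFactor #A := one_le_logFactor _
  have hK : 0 ≤ multiplicityFactor m := by linarith [H.le_multiplicityFactor]
  have hBA : (2 : ℝ) ^ j * #B ≤ #A ^ 2 := two_pow_mul_card_popularDifferences_le hA' j
  have hB : #B ≤ #A ^ 2 := by
    exact_mod_cast (le_mul_of_one_le_left (Nat.cast_nonneg _) (one_le_pow₀ one_le_two)).trans hBA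
  have hsqrt : (4 : ℝ) ^ j * √(multiplicityFactor m * logFactor #A ^ 2 * #B ^ 3 * #F ^ 3 / #A) ≤
      √(multiplicityFactor m * logFactor #A ^ 2 * #F ^ 3 * E / #A) := by
    rw [← Real.sqrt_sq (by positivity : (0 : ℝ) ≤ 4 ^ j), ← Real.sqrt_mul (by positivity),
      ← pow_mul, mul_comm j, pow_mul]
    apply Real.sqrt_le_sqrt
    calc ((4 : ℝ) ^ 2) ^ j * (multiplicityFactor m * logFactor #A ^ 2 * #B ^ 3 * #F ^ 3 / #A)
        = multiplicityFactor m * logFactor #A ^ 2 * #F ^ 3 * (16 ^ j * #B ^ 3) / #A := by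
          norm_num1
          ring
      _ ≤ _ := by gcongr
  have hlin : (4 : ℝ) ^ j * (2 * #A * #F * #B ^ 2 / p) ≤ 2 * #A ^ 5 * #F / p :=
    calc (4 : ℝ) ^ j * (2 * #A * #F * #B ^ 2 / p) = (2 : ℝ) * #A * #F * (2 ^ j * #B) ^ 2 / p := by
          rw [mul_pow, ← pow_mul, mul_comm j, pow_mul]
          norm_num1
          ring
      _ ≤ (2 : ℝ) * #A * #F * (#A ^ 2) ^ 2 / p := by gcongr
      _ = _ := by ring
  calc _ ≤ (2 ^ (j + 1)) ^ 2 * (4 * logFactor #A *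
          (√(multiplicityFactor m * logFactor #A ^ 2 * #B ^ 3 * #F ^ 3 / #A) +
            2 * #A * #F * #B ^ 2 / p)) := by
        gcongr
        exact H.sum_sq_addConvolution_le hB
    _ = 16 * logFactor #A *
          (4 ^ j * √(multiplicityFactor m * logFactor #A ^ 2 * #B ^ 3 * #F ^ 3 / #A) +
            4 ^ j * (2 * #A * #F * #B ^ 2 / p)) := by
        rw [pow_succ (2 : ℝ) j, mul_pow, ← pow_mul, mul_comm j, pow_mul]
        norm_num1
        ring
    _ ≤ _ := by gcongr

theorem sum_sq_sum_diffCount_sub_le (H : Configuration g h A X F m) (hA' : #A' ≤ #A) {E : ℝ}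
    (hE : ∀ j : ℕ, 16 ^ j * (#(popularDifferences A' (2 ^ j)) : ℝ) ^ 3 ≤ E) :
    ∑ q, (∑ c ∈ A, (diffCount A' (q - c) : ℝ)) ^ 2 ≤
      16 * logFactor #A ^ 3 *
        (√(multiplicityFactor m * logFactor #A ^ 2 * #F ^ 3 * E / #A) +
          2 * #A ^ 5 * #F / p) := by
  set bound : ℝ := √(multiplicityFactor m * logFactor #A ^ 2 * #F ^ 3 * E / #A) +
    2 * #A ^ 5 * #F / p
  set J := 1 + Nat.log 2 #A
  have hl : 1 ≤ logFactor #A := one_le_logFactor _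
  have hJ : (J : ℝ) ≤ logFactor #A := by
    rw [Nat.cast_add, Nat.cast_one]
    exact one_add_log_le_logFactor (Nat.le_self_pow (by norm_num) _)
  calc ∑ q, (∑ c ∈ A, (diffCount A' (q - c) : ℝ)) ^ 2
      ≤ ∑ q, (∑ j ∈ range J,
          2 ^ (j + 1) * ((popularDifferences A' (2 ^ j)).addConvolution A q : ℝ)) ^ 2 := by
        gcongr with q
        exact sum_diffCount_sub_le_sum_dyadic hA' q
    _ ≤ ∑ q, (J : ℝ) * ∑ j ∈ range J,
          (2 ^ (j + 1) * ((popularDifferences A' (2 ^ j)).addConvolution A q : ℝ)) ^ 2 := by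
        gcongr
        simpa only [card_range] using sq_sum_le_card_mul_sum_sq (s := range J)
    _ = (J : ℝ) * ∑ j ∈ range J, (2 ^ (j + 1)) ^ 2 *
          ∑ q, ((popularDifferences A' (2 ^ j)).addConvolution A q : ℝ) ^ 2 := by
        rw [← mul_sum, sum_comm]
        simp_rw [mul_pow, mul_sum]
    _ ≤ (J : ℝ) * ∑ _j ∈ range J, 16 * logFactor #A * bound := by
        gcongr ?_ * ∑ _ ∈ _, ?_ with j
        exact H.sq_mul_sum_sq_addConvolution_popularDifferences_le hA' (hE j)
    _ = (J : ℝ) * J * (16 * logFactor #A * bound) := by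
        rw [sum_const, card_range, nsmul_eq_mul, ← mul_assoc]
    _ ≤ logFactor #A * logFactor #A * (16 * logFactor #A * bound) := by gcongr
    _ = _ := by ring

end WeightedSums

end Configuration

end Configuration

section Conclusion

section Exponents

variable {a d F M K l E W p : ℝ}

theorem pow_eleven_le_of_sq_mul_pow_le (ha : 1 ≤ a) (hK : 1 ≤ K) (hl : 1 ≤ l) (hM : 0 ≤ M)
    (hp : a ^ 5 ≤ p ^ 3) (h : p ^ 2 * a ^ 14 ≤ 2 ^ 44 * K ^ 2 * l ^ 12 * M ^ 14) :
    a ^ 11 ≤ 2 ^ 30 * K ^ 2 * l ^ 11 * M ^ 9 := by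
  refine le_of_pow_le_pow_left₀ (n := 14) (by norm_num) (by positivity) ?_
  calc (a ^ 11) ^ 14 = a ^ 154 := by ring
    _ ≤ a ^ 156 := by gcongr; norm_num
    _ = ((a ^ 5) ^ 2 * a ^ 42) ^ 3 := by ring
    _ ≤ ((p ^ 3) ^ 2 * a ^ 42) ^ 3 := by gcongr
    _ = (p ^ 2 * a ^ 14) ^ 9 := by ring
    _ ≤ (2 ^ 44 * K ^ 2 * l ^ 12 * M ^ 14) ^ 9 := by gcongr
    _ = (2 ^ 198 * K ^ 9 * l ^ 54 * M ^ 63) ^ 2 := by ring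
    _ ≤ (2 ^ 210 * K ^ 14 * l ^ 77 * M ^ 63) ^ 2 := by gcongr <;> norm_num
    _ = _ := by ring

theorem pow_eleven_le_of_le_sqrt (ha : 0 < a) (hK : 0 ≤ K) (hl : 0 ≤ l) (hF : 0 ≤ F) (hE : 0 < E)
    (hW₀ : 0 ≤ W) (hEW : a ^ 10 * E ≤ 2 ^ 20 * K * l ^ 3 * F ^ 2 * d ^ 4 * W ^ 2)
    (hW : W ≤ 32 * l ^ 3 * √(K * l ^ 2 * F ^ 3 * E / a)) :
    a ^ 11 ≤ 2 ^ 30 * K ^ 2 * l ^ 11 * F ^ 5 * d ^ 4 := by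
  refine le_of_mul_le_mul_right ?_ hE
  calc a ^ 11 * E = a * (a ^ 10 * E) := by ring
    _ ≤ a * (2 ^ 20 * K * l ^ 3 * F ^ 2 * d ^ 4 *
          (32 * l ^ 3 * √(K * l ^ 2 * F ^ 3 * E / a)) ^ 2) := by
        refine mul_le_mul_of_nonneg_left (hEW.trans ?_) ha.le
        gcongr
    _ = _ := by
        rw [mul_pow _ √_, Real.sq_sqrt (by positivity)]
        field_simp
        ring

theorem sq_mul_pow_le_of_le_div (ha : 0 < a) (hp : 0 < p) (hK : 0 ≤ K) (hl : 0 ≤ l)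
    (hW₀ : 0 ≤ W) (hEW : a ^ 10 * E ≤ 2 ^ 20 * K * l ^ 3 * F ^ 2 * d ^ 4 * W ^ 2)
    (hE : a ^ 14 ≤ 2 ^ 12 * K * l ^ 3 * F ^ 2 * d ^ 4 * E)
    (hW : W ≤ 32 * l ^ 3 * (2 * a ^ 5 * F / p)) :
    p ^ 2 * a ^ 14 ≤ 2 ^ 44 * K ^ 2 * l ^ 12 * F ^ 6 * d ^ 8 := by
  have hpE : p ^ 2 * E ≤ 2 ^ 32 * K * l ^ 9 * F ^ 4 * d ^ 4 := by
    refine le_of_mul_le_mul_left ?_ (pow_pos ha 10)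
    calc a ^ 10 * (p ^ 2 * E) = p ^ 2 * (a ^ 10 * E) := by ring
      _ ≤ p ^ 2 * (2 ^ 20 * K * l ^ 3 * F ^ 2 * d ^ 4 *
            (32 * l ^ 3 * (2 * a ^ 5 * F / p)) ^ 2) := by
          refine mul_le_mul_of_nonneg_left (hEW.trans ?_) (by positivity)
          gcongr
      _ = _ := by
          field_simp
          ring
  calc p ^ 2 * a ^ 14 ≤ p ^ 2 * (2 ^ 12 * K * l ^ 3 * F ^ 2 * d ^ 4 * E) := by gcongr
    _ = 2 ^ 12 * K * l ^ 3 * F ^ 2 * d ^ 4 * (p ^ 2 * E) := by ring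
    _ ≤ 2 ^ 12 * K * l ^ 3 * F ^ 2 * d ^ 4 * (2 ^ 32 * K * l ^ 9 * F ^ 4 * d ^ 4) := by gcongr
    _ = _ := by ring

theorem pow_eleven_le (ha : 1 ≤ a) (hK : 1 ≤ K) (hl : 1 ≤ l) (hF : 0 ≤ F) (hFM : F ≤ M)
    (hd : 0 ≤ d) (hdM : d ≤ M) (hp₀ : 0 < p) (hp : a ^ 5 ≤ p ^ 3) (hE₀ : 0 < E) (hW₀ : 0 ≤ W)
    (hE : a ^ 14 ≤ 2 ^ 12 * K * l ^ 3 * F ^ 2 * d ^ 4 * E)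
    (hEW : a ^ 10 * E ≤ 2 ^ 20 * K * l ^ 3 * F ^ 2 * d ^ 4 * W ^ 2)
    (hW : W ≤ 16 * l ^ 3 * (√(K * l ^ 2 * F ^ 3 * E / a) + 2 * a ^ 5 * F / p)) :
    a ^ 11 ≤ 2 ^ 30 * K ^ 2 * l ^ 11 * M ^ 9 := by
  have hM : 0 ≤ M := hF.trans hFM
  have hl₃ : 0 < l ^ 3 := by positivity
  rcases le_total (2 * a ^ 5 * F / p) (√(K * l ^ 2 * F ^ 3 * E / a)) with hsqrt | hdiv
  · calc a ^ 11 ≤ 2 ^ 30 * K ^ 2 * l ^ 11 * F ^ 5 * d ^ 4 :=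
          pow_eleven_le_of_le_sqrt (by positivity) (by positivity) (by positivity) hF hE₀ hW₀ hEW
            (by nlinarith)
      _ ≤ 2 ^ 30 * K ^ 2 * l ^ 11 * M ^ 5 * M ^ 4 := by gcongr
      _ = _ := by ring
  · refine pow_eleven_le_of_sq_mul_pow_le ha hK hl hM hp ?_
    calc p ^ 2 * a ^ 14 ≤ 2 ^ 44 * K ^ 2 * l ^ 12 * F ^ 6 * d ^ 8 :=
          sq_mul_pow_le_of_le_div (by positivity) hp₀ (by positivity) (by positivity) hW₀ hEW hE
            (by nlinarith)
      _ ≤ 2 ^ 44 * K ^ 2 * l ^ 12 * M ^ 6 * M ^ 8 := by gcongr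
      _ = _ := by ring

end Exponents

theorem rpow_mul_rpow_mul_rpow_le {a L M K : ℝ} (ha : 0 ≤ a) (hL : 0 < L) (hM : 0 ≤ M)
    (hK : 0 < K) (h : a ^ 11 ≤ K * L ^ 11 * M ^ 9) :
    K ^ (-(1 : ℝ) / 9) * L ^ (-((11 : ℝ) / 9)) * a ^ ((11 : ℝ) / 9) ≤ M := by
  have rpow_pow_nine {x : ℝ} (hx : 0 ≤ x) (y : ℝ) : (x ^ (y / 9)) ^ 9 = x ^ y := by
    rw [← Real.rpow_mul_natCast hx]
    norm_num
  refine le_of_pow_le_pow_left₀ (n := 9) (by norm_num) hM ?_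
  rw [mul_pow, mul_pow, ← neg_div, rpow_pow_nine hK.le, rpow_pow_nine hL.le, rpow_pow_nine ha,
    Real.rpow_neg hK.le, Real.rpow_neg hL.le, Real.rpow_one]
  norm_cast
  calc K⁻¹ * (L ^ 11)⁻¹ * a ^ 11 ≤ K⁻¹ * (L ^ 11)⁻¹ * (K * L ^ 11 * M ^ 9) := by gcongr
    _ = M ^ 9 := by field_simp

theorem logFactor_le {n : ℕ} (hn : 1 ≤ n) : logFactor n ≤ 10 * Real.log (2 * n) := by
  have hn₁ : (1 : ℝ) ≤ n := by exact_mod_cast hn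
  have hlogb : (Nat.log 2 (n ^ 5) : ℝ) ≤ 5 * (Real.log n / Real.log 2) :=
    calc (Nat.log 2 (n ^ 5) : ℝ) ≤ Real.logb 2 ((n ^ 5 : ℕ) : ℝ) := by
          exact_mod_cast Real.natLog_le_logb (n ^ 5) 2
      _ = _ := by
          rw [Real.logb, Nat.cast_pow, Real.log_pow]
          push_cast
          ring
  have hlog₂ : (1 : ℝ) / 2 < Real.log 2 := by linarith [Real.log_two_gt_d9]
  have hlogn : 0 ≤ Real.log n := Real.log_nonneg hn₁
  have hdiv : Real.log n / Real.log 2 ≤ 2 * Real.log n := by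
    rw [div_le_iff₀ (by linarith)]
    nlinarith
  rw [Real.log_mul (by norm_num) (by linarith), logFactor]
  linarith

theorem exists_subset_injOn_card_le_mul {α β : Type*} [DecidableEq β] {A : Finset α} {g : α → β}
    {m : ℕ} (hm : ∀ x ∈ A, #{y ∈ A | g y = g x} ≤ m) :
    ∃ X ⊆ A, Set.InjOn g X ∧ #A ≤ m * #X := by
  classical
  obtain ⟨X, hXA, hX⟩ := Set.exists_subset_bijOn (A : Set α) g
  lift X to Finset α using A.finite_toSet.subset hXA
  have himage : X.image g = A.image g := by
    exact_mod_cast hX.image_eq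
  refine ⟨X, coe_subset.1 hXA, hX.injOn, ?_⟩
  rw [← card_image_of_injOn hX.injOn, himage]
  exact card_le_mul_card_image A m (forall_mem_image.2 hm)

section Configuration

variable {p : ℕ} [Fact p.Prime] {g h : ZMod p → ZMod p} {A C S X F : Finset (ZMod p)} {m : ℕ}
  {u : ZMod p → ℝ}

theorem exists_configuration (hA : A.Nonempty) (hg : ∀ x ∈ A, g x ≠ 0)
    (hm : ∀ x ∈ A, #{y ∈ A | g y = g x} ≤ m) (hp : (#A : ℝ) ≤ (p : ℝ) ^ ((3 : ℝ) / 5)) :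
    ∃ X, Configuration g h A X (image₂ (fun x y ↦ g x * (h x + y)) A A) m := by
  obtain ⟨X, hXA, hX, hcard⟩ := exists_subset_injOn_card_le_mul hm
  refine ⟨X, hA, card_le_card hXA, hcard, hX, fun x hx ↦ hg x (hXA hx),
    fun x hx y hy ↦ mem_image₂_of_mem (hXA hx) hy, ?_, ?_, ?_⟩
  · obtain ⟨x, hx⟩ := hA
    exact card_le_card_of_injOn (fun y ↦ g x * (h x + y)) (fun y hy ↦ mem_image₂_of_mem hx hy)
      fun y _ z _ hyz ↦ add_left_cancel (mul_left_cancel₀ (hg x hx) hyz)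
  · rw [sq]
    exact card_image₂_le _ _ _
  · have hreal : (#A : ℝ) ^ 5 ≤ (p : ℝ) ^ 3 :=
      calc (#A : ℝ) ^ 5 ≤ ((p : ℝ) ^ ((3 : ℝ) / 5)) ^ 5 := by gcongr
        _ = (p : ℝ) ^ 3 := by
          rw [← Real.rpow_mul_natCast (Nat.cast_nonneg _)]
          norm_num
    exact_mod_cast hreal

theorem sixteen_pow_mul_card_popularDifferences_pow_le (hu₀ : ∀ z, 0 ≤ u z)
    (hu : ∀ z, u z ^ 3 = diffCount A z) (j : ℕ) :
    16 ^ j * (#(popularDifferences A (2 ^ j)) : ℝ) ^ 3 ≤ (∑ z, u z ^ 4) ^ 3 := by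
  set B := popularDifferences A (2 ^ j)
  obtain ⟨v, hv₀, hv⟩ : ∃ v : ℝ, 0 ≤ v ∧ v ^ 3 = 2 ^ j :=
    ⟨((2 : ℝ) ^ j) ^ (3⁻¹ : ℝ), by positivity,
      Real.rpow_inv_natCast_pow (by positivity) three_ne_zero⟩
  have hvu : ∀ z ∈ B, v ≤ u z := fun z hz ↦ by
    refine le_of_pow_le_pow_left₀ three_ne_zero (hu₀ z) ?_
    rw [hv, hu]
    exact_mod_cast (mem_filter.1 hz).2
  calc 16 ^ j * (#B : ℝ) ^ 3 = (#B * v ^ 4) ^ 3 := by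
        rw [mul_pow, ← pow_mul, mul_comm 4, pow_mul, hv, ← pow_mul, mul_comm j, pow_mul]
        norm_num1
        ring
    _ = (∑ z ∈ B, v ^ 4) ^ 3 := by rw [sum_const, nsmul_eq_mul]
    _ ≤ (∑ z ∈ B, u z ^ 4) ^ 3 := by
        gcongr with z hz
        exact hvu z hz
    _ ≤ (∑ z, u z ^ 4) ^ 3 := by
        gcongr ?_ ^ 3
        exact sum_le_univ_sum_of_nonneg fun z ↦ pow_nonneg (hu₀ z) 4

theorem Configuration.card_pow_fourteen_le (H : Configuration g h C X F m)
    (hCS : (#C : ℝ) ≤ 2 * #S) (hu : ∀ z, u z ^ 3 = diffCount S z) {d : ℝ}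
    (hd : #(S + C) ≤ d) :
    (#C : ℝ) ^ 14 ≤ 2 ^ 12 * multiplicityFactor m * logFactor #C ^ 3 * #F ^ 2 * d ^ 4 *
      (∑ z, u z ^ 4) ^ 3 := by
  have hC := H.one_le_card
  refine le_of_mul_le_mul_left ?_ (by positivity : (0 : ℝ) < #C ^ 2)
  calc (#C : ℝ) ^ 2 * #C ^ 14 = ((#C : ℝ) * #C) ^ 8 := by ring
    _ ≤ (2 * (#S : ℝ) * #C) ^ 8 := by gcongr
    _ = 2 ^ 8 * ((#S : ℝ) * #C) ^ 8 := by ring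
    _ ≤ 2 ^ 8 * (#(S + C) ^ 4 * (∑ z, u z ^ 4) ^ 3 * ∑ z, (diffCount C z : ℝ) ^ 4) := by
        gcongr
        exact card_mul_card_pow_eight_le hu
    _ ≤ 2 ^ 8 * (d ^ 4 * (∑ z, u z ^ 4) ^ 3 *
          (16 * multiplicityFactor m * logFactor #C ^ 3 * #F ^ 2 * #C ^ 2)) := by
        gcongr
        exact H.sum_diffCount_pow_four_le
    _ = _ := by ring

theorem Configuration.card_pow_ten_mul_le (H : Configuration g h C X F m) (hS : S.Nonempty)
    (hu₀ : ∀ z, 0 ≤ u z) (hu : ∀ z, u z ^ 3 = diffCount S z)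
    (hSC : ∀ z, diffCount S z ≤ diffCount C z) {d : ℝ} (hd : 0 < d)
    (hpop : ∀ a ∈ S, (#{c ∈ C | (S.addConvolution C (a + c) : ℝ) < #C ^ 2 / (8 * d)} : ℝ) ≤
      #C / 4) :
    (#C : ℝ) ^ 10 * (∑ z, u z ^ 4) ^ 3 ≤
      2 ^ 20 * multiplicityFactor m * logFactor #C ^ 3 * #F ^ 2 * d ^ 4 *
        (∑ q, (∑ c ∈ C, (diffCount S (q - c) : ℝ)) ^ 2) ^ 2 := by
  have hC := H.one_le_card
  set E := (∑ z, u z ^ 4) ^ 3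
  set W := ∑ q, (∑ c ∈ C, (diffCount S (q - c) : ℝ)) ^ 2
  have key : (#C ^ 2 / (8 * d)) ^ 4 * #C ^ 4 * E ≤ 16 * W ^ 2 * ∑ z, (diffCount C z : ℝ) ^ 4 :=
    pow_mul_sum_pow_four_le (P := {x | #C ^ 2 / (8 * d) ≤ S.addConvolution C x}) hS
      (by positivity) hu₀ hu hSC (fun x hx ↦ (mem_filter.1 hx).2)
      (by simpa only [mem_filter_univ, not_le] using hpop)
  refine le_of_mul_le_mul_left ?_ (by positivity : (0 : ℝ) < #C ^ 2)
  calc (#C : ℝ) ^ 2 * (#C ^ 10 * E)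
      = 2 ^ 12 * d ^ 4 * ((#C ^ 2 / (8 * d)) ^ 4 * #C ^ 4 * E) := by
        field_simp
        ring
    _ ≤ 2 ^ 12 * d ^ 4 * (16 * W ^ 2 *
          (16 * multiplicityFactor m * logFactor #C ^ 3 * #F ^ 2 * #C ^ 2)) := by
        refine mul_le_mul_of_nonneg_left (key.trans ?_) (by positivity)
        gcongr
        exact H.sum_diffCount_pow_four_le
    _ = _ := by ring

theorem Configuration.card_pow_eleven_le_of_popular (H : Configuration g h C X F m)
    (hCS : (#C : ℝ) ≤ 2 * #S) (hSC : ∀ z, diffCount S z ≤ diffCount C z) {d : ℝ}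
    (hd : #(S + C) ≤ d)
    (hpop : ∀ a ∈ S, (#{c ∈ C | (S.addConvolution C (a + c) : ℝ) < #C ^ 2 / (8 * d)} : ℝ) ≤
      #C / 4) :
    (#C : ℝ) ^ 11 ≤ 2 ^ 30 * multiplicityFactor m ^ 2 * logFactor #C ^ 11 * max (#F : ℝ) d ^ 9 := by
  have hC := H.one_le_card
  have hS : S.Nonempty := by
    rw [← card_pos, ← Nat.cast_pos (α := ℝ)]
    linarith
  have hd₀ : 0 < d := hd.trans_lt' (by exact_mod_cast (hS.add H.nonempty).card_pos)
  have hp₀ : (0 : ℝ) < p := by exact_mod_cast (Fact.out : p.Prime).pos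
  have hScard : #S ≤ #C := by simpa only [diffCount_zero] using hSC 0
  obtain ⟨u, hu₀, hu⟩ : ∃ u : ZMod p → ℝ, (∀ z, 0 ≤ u z) ∧ ∀ z, u z ^ 3 = diffCount S z :=
    ⟨fun z ↦ (diffCount S z : ℝ) ^ (3⁻¹ : ℝ), fun z ↦ by positivity,
      fun z ↦ Real.rpow_inv_natCast_pow (Nat.cast_nonneg _) three_ne_zero⟩
  have hE := H.card_pow_fourteen_le hCS hu hd
  have hE_pos : 0 < (∑ z, u z ^ 4) ^ 3 := by
    refine (by positivity : 0 ≤ (∑ z, u z ^ 4) ^ 3).lt_of_ne' fun h₀ ↦ ?_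
    rw [h₀, mul_zero] at hE
    exact (by positivity : (0 : ℝ) < #C ^ 14).not_ge hE
  exact pow_eleven_le hC (by linarith [H.le_multiplicityFactor]) (one_le_logFactor _)
    (Nat.cast_nonneg _) (le_max_left _ _) hd₀.le (le_max_right _ _) hp₀
    (by exact_mod_cast H.card_pow_le) hE_pos (by positivity) hE
    (H.card_pow_ten_mul_le hS hu₀ hu hSC hd₀ hpop)
    (H.sum_sq_sum_diffCount_sub_le hScard
      (sixteen_pow_mul_card_popularDifferences_pow_le hu₀ hu))

theorem Configuration.card_pow_eleven_le (H : Configuration g h C X F m)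
    (hAC : ∀ z, diffCount A z = diffCount C z) :
    (#C : ℝ) ^ 11 ≤ 2 ^ 30 * multiplicityFactor m ^ 2 * logFactor #C ^ 11 *
      max (#F : ℝ) #(A + C) ^ 9 := by
  have hcard : #A = #C := by simpa only [diffCount_zero] using hAC 0
  have hA : A.Nonempty := card_pos.1 (hcard ▸ H.nonempty.card_pos)
  have hAC₀ : (0 : ℝ) < #(A + C) := by exact_mod_cast (hA.add H.nonempty).card_pos
  obtain ⟨S, hSA, hAS, hS⟩ := exists_subset_forall_card_filter_addConvolution_lt_le A H.nonempty
    (Δ := #C ^ 2 / (8 * #(A + C))) (by positivity)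
    (by rw [hcard, div_mul_cancel₀ _ (by positivity), sq])
  exact H.card_pow_eleven_le_of_popular (hcard ▸ hAS)
    (fun z ↦ (diffCount_mono hSA z).trans_eq (hAC z))
    (by exact_mod_cast card_le_card (add_subset_add_right hSA)) hS

theorem Configuration.rpow_le (H : Configuration g h C X F m)
    (hAC : ∀ z, diffCount A z = diffCount C z) :
    (2 ^ 30 * multiplicityFactor m ^ 2 * 10 ^ 11) ^ (-(1 : ℝ) / 9) *
      Real.log (2 * #C) ^ (-((11 : ℝ) / 9)) * (#C : ℝ) ^ ((11 : ℝ) / 9) ≤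
      max (#F : ℝ) #(A + C) := by
  have hC := H.one_le_card
  have hK := H.le_multiplicityFactor
  have hl : 0 ≤ logFactor #C := zero_le_one.trans (one_le_logFactor _)
  refine rpow_mul_rpow_mul_rpow_le (by positivity) (Real.log_pos (by linarith)) (by positivity)
    (by positivity) ((H.card_pow_eleven_le hAC).trans ?_)
  rw [mul_assoc _ ((10 : ℝ) ^ 11), ← mul_pow]
  gcongr
  exact logFactor_le H.nonempty.card_pos

theorem card_filter_le_mu {n : ℕ} [NeZero n] {g : ZMod n → ZMod n} {A : Finset (ZMod n)}
    (hA : ∀ x ∈ A, x ≠ 0) {t : ZMod n} (ht : t ≠ 0) : #{x ∈ A | g x = t} ≤ mu g :=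
  calc #{x ∈ A | g x = t} ≤ #{x | x ≠ 0 ∧ g x = t} :=
        card_le_card fun x hx ↦ (mem_filter_univ _).2 ((mem_filter.1 hx).imp_left (hA x))
    _ ≤ mu g := le_sup (f := fun t ↦ #{x | x ≠ 0 ∧ g x = t}) ((mem_filter_univ _).2 ht)

end Configuration

end Conclusion

end SumDiffExpander

theorem sum_diff_expander_eleven_ninths_general (m : ℕ) (hm : 1 ≤ m) :
    ∃ C > (0 : ℝ), ∃ c ≥ (0 : ℝ), ∀ (p : ℕ) [Fact p.Prime] (g h : ZMod p → ZMod p)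
      (A : Finset (ZMod p)), A.Nonempty → (∀ x ∈ A, g x ≠ 0) → (∀ x ∈ A, #{y ∈ A | g y = g x} ≤ m) →
      (#A : ℝ) ≤ (p : ℝ) ^ ((3 : ℝ) / 5) →
      (C * Real.log (2 * #A) ^ (-c) * (#A : ℝ) ^ ((11 : ℝ) / 9) ≤
          max (#(image₂ (fun x y ↦ g x * (h x + y)) A A) : ℝ) #(A + A)) ∧
      (C * Real.log (2 * #A) ^ (-c) * (#A : ℝ) ^ ((11 : ℝ) / 9) ≤
          max (#(image₂ (fun x y ↦ g x * (h x + y)) A A) : ℝ) #(A - A)) := by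
  have hK : 0 < 2 ^ 30 * SumDiffExpander.multiplicityFactor m ^ 2 * 10 ^ 11 := by
    have : (0 : ℝ) < m := by exact_mod_cast hm
    unfold SumDiffExpander.multiplicityFactor
    positivity
  refine ⟨(2 ^ 30 * SumDiffExpander.multiplicityFactor m ^ 2 * 10 ^ 11) ^ (-(1 : ℝ) / 9),
    Real.rpow_pos_of_pos hK _, 11 / 9, by norm_num, fun p _ g h A hA hg hAm hp ↦ ?_⟩
  obtain ⟨X, H⟩ := SumDiffExpander.exists_configuration (h := h) hA hg hAm hp
  refine ⟨H.rpow_le (fun _ ↦ rfl), ?_⟩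
  rw [sub_eq_add_neg, ← card_neg A]
  exact H.neg.rpow_le fun z ↦ (SumDiffExpander.diffCount_neg_left A z).symm

theorem sum_diff_expander_eleven_ninths :
    ∀ m : ℕ, 1 ≤ m → ∃ C > (0:ℝ), ∃ c ≥ (0:ℝ),
      ∀ (p : ℕ) [Fact p.Prime], p ≠ 2 →
      ∀ g h : ZMod p → ZMod p,
      (∀ x : ZMod p, x ≠ 0 → g x ≠ 0) → (∀ x : ZMod p, x ≠ 0 → h x ≠ 0) →
      mu g ≤ m →
      ∀ A : Finset (ZMod p), A.Nonempty → (0:ZMod p) ∉ A →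
      (A.card : ℝ) ≤ (p:ℝ) ^ ((3:ℝ)/5) →
      (C * (Real.log (2 * (A.card:ℝ))) ^ (-c) * (A.card : ℝ) ^ ((11:ℝ)/9) ≤
          max ((Finset.image₂ (fun x y => g x * (h x + y)) A A).card : ℝ) (((A + A).card : ℝ))) ∧
      (C * (Real.log (2 * (A.card:ℝ))) ^ (-c) * (A.card : ℝ) ^ ((11:ℝ)/9) ≤
          max ((Finset.image₂ (fun x y => g x * (h x + y)) A A).card : ℝ) (((A - A).card : ℝ))) := by
  intro m hm
  obtain ⟨C, hC, c, hc, bound⟩ := sum_diff_expander_eleven_ninths_general m hm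
  refine ⟨C, hC, c, hc, fun p _ _ g h hg _ hmu A hA h0 hp ↦ ?_⟩
  have hA₀ : ∀ x ∈ A, x ≠ 0 := fun x hx ↦ ne_of_mem_of_not_mem hx h0
  exact bound p g h A hA (fun x hx ↦ hg x (hA₀ x hx))
    (fun x hx ↦ (SumDiffExpander.card_filter_le_mu hA₀ (hg x (hA₀ x hx))).trans hmu) hp
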